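/- For every prime p ≥ 5 and every integer n ≥ 7, Ψ_{n-3}^p(2,1) = 5p + 30; that is, the number of isomorphism classes of regular p-groups of type (n-3, 2, 1) equals 5p + 30. -/

import Mathlib

/-- `℧_1(H) = ⟨h^p : h ∈ H⟩` for a subgroup `H`. -/
def MhoOne (p : ℕ) {P : Type} [Group P] (H : Subgroup P) : Subgroup P :=
  Subgroup.closure {y : P | ∃ x ∈ H, y = x ^ p}

/-- A `p`-group `P` is regular if for all `x y : P` there is
`z ∈ ℧_1(γ_2(⟨x,y⟩))` with `x^p * y^p = (x*y)^p * z`. -/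
def IsRegularPGroup (p : ℕ) (P : Type) [Group P] : Prop :=
  ∀ x y : P,
    ∃ z ∈ MhoOne p ⁅Subgroup.closure {x, y}, Subgroup.closure {x, y}⁆,
      x ^ p * y ^ p = (x * y) ^ p * z

/-- `Ω_i(P) = ⟨x : x^(p^i) = 1⟩`. -/
def OmegaSubgroup (p : ℕ) (P : Type) [Group P] (i : ℕ) : Subgroup P :=
  Subgroup.closure {x : P | x ^ p ^ i = 1}

/-- `ω_i(P)`, defined by `p ^ ω_i(P) = |Ω_i(P)/Ω_{i-1}(P)|`. -/
noncomputable def omegaInv (p : ℕ) (P : Type) [Group P] (i : ℕ) : ℕ :=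
  ((OmegaSubgroup p P (i - 1)).relIndex (OmegaSubgroup p P i)).factorization p

/-- `μ_j(P)` (for `j ≥ 1`): the dual partition of `(ω_1(P), ω_2(P), ...)`;
the type invariants of `P` are `μ_1(P) ≥ μ_2(P) ≥ ...`. -/
noncomputable def muInv (p : ℕ) (P : Type) [Group P] (j : ℕ) : ℕ :=
  Nat.card {i : ℕ // 1 ≤ i ∧ j ≤ omegaInv p P i}

/-- `P` has type invariants given by the list `l`. -/
def HasTypeInvariants (p : ℕ) (P : Type) [Group P] (l : List ℕ) : Prop :=
  ∀ i : ℕ, muInv p P (i + 1) = l.getD i 0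

/-- The multiplication extracted from a group structure. -/
def mulOfGroup (G : Type) (s : Group G) : Mul G := by letI := s; infer_instance

/-- The number of isomorphism classes of groups of order `N` whose group structure
satisfies the predicate `Q`. -/
noncomputable def groupClassCount (N : ℕ) (Q : Group (Fin N) → Prop) : ℕ :=
  Nat.card (Quot fun s t : {s : Group (Fin N) // Q s} =>
    Nonempty (@MulEquiv (Fin N) (Fin N) (mulOfGroup _ s.1) (mulOfGroup _ t.1)))

/-- `Ψ_e^p(λ)`: the number of isomorphism classes of regular `p`-groups of type
`(e, λ_1, ..., λ_k)`; such a group has order `p ^ (e + λ_1 + ... + λ_k)`. -/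
noncomputable def PsiType (p e : ℕ) (l : List ℕ) : ℕ :=
  groupClassCount (p ^ (e + l.sum)) fun s =>
    letI := s
    IsRegularPGroup p (Fin (p ^ (e + l.sum))) ∧
      HasTypeInvariants p (Fin (p ^ (e + l.sum))) (e :: l)

theorem mho_map (p : ℕ) {P Q : Type} [Group P] [Group Q] (f : P →* Q) (K : Subgroup P) :
    (MhoOne p K).map f = MhoOne p (K.map f) := by
  unfold MhoOne
  rw [MonoidHom.map_closure]
  congr 1
  ext y
  simp only [Set.mem_image, Set.mem_ofPred_eq, Subgroup.mem_map]
  constructor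
  · rintro ⟨_, ⟨x, hx, rfl⟩, rfl⟩
    exact ⟨f x, ⟨x, hx, rfl⟩, map_pow f x p⟩
  · rintro ⟨_, ⟨x, hx, rfl⟩, rfl⟩
    exact ⟨x ^ p, ⟨x, hx, rfl⟩, map_pow f x p⟩

theorem mho_map_pair (p : ℕ) {P Q : Type} [Group P] [Group Q] (f : P →* Q) (x y : P) :
    (MhoOne p ⁅Subgroup.closure {x, y}, Subgroup.closure {x, y}⁆).map f =
     MhoOne p ⁅Subgroup.closure {f x, f y}, Subgroup.closure {f x, f y}⁆ := by
  rw [mho_map, Subgroup.map_commutator, MonoidHom.map_closure, Set.image_pair]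

theorem reg_of_surj {p : ℕ} {P Q : Type} [Group P] [Group Q] (f : P →* Q)
    (hf : Function.Surjective f) (h : IsRegularPGroup p P) : IsRegularPGroup p Q := by
  intro x y
  obtain ⟨x, rfl⟩ := hf x
  obtain ⟨y, rfl⟩ := hf y
  obtain ⟨z, hz, hxy⟩ := h x y
  refine ⟨f z, ?_, ?_⟩
  · rw [← mho_map_pair]; exact Subgroup.mem_map_of_mem f hz
  · rw [← map_pow, ← map_pow, ← map_mul, hxy]; simp

theorem reg_of_inj {p : ℕ} {P Q : Type} [Group P] [Group Q] (f : P →* Q)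
    (hf : Function.Injective f) (h : IsRegularPGroup p Q) : IsRegularPGroup p P := by
  intro x y
  obtain ⟨z, hz, hxy⟩ := h (f x) (f y)
  rw [← mho_map_pair] at hz
  obtain ⟨z, hz, rfl⟩ := hz
  exact ⟨z, hz, hf (by simpa using hxy)⟩

theorem exists_prop_normal {p : ℕ} [Fact p.Prime] {G : Type} [Group G] [Finite G]
    (hG : IsPGroup p G) (v : G) (hv : Subgroup.zpowers v ≠ ⊤) :
    ∃ M : Subgroup G, M.Normal ∧ M ≠ ⊤ ∧ v ∈ M := by
  have hp : p.Prime := Fact.out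
  obtain ⟨n, hn⟩ := IsPGroup.iff_card.1 hG
  obtain ⟨m, hm⟩ := IsPGroup.iff_card.1 (hG.to_subgroup (Subgroup.zpowers v))
  have hmn : m < n := by
    have h1 : Nat.card (Subgroup.zpowers v) ∣ Nat.card G := Subgroup.card_subgroup_dvd_card _
    rw [hm, hn, Nat.pow_dvd_pow_iff_le_right hp.one_lt] at h1
    rcases h1.lt_or_eq with h | h
    · exact h
    · exfalso; apply hv
      apply Subgroup.eq_top_of_card_eq
      rw [hm, hn, h]
  obtain ⟨K, hK, hle⟩ := Sylow.exists_subgroup_card_pow_prime_le (G := G) p (n := m) (m := n - 1)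
    (by rw [hn]; exact pow_dvd_pow p (by omega)) (Subgroup.zpowers v) hm (by omega)
  have hidx : K.index = p := by
    have := K.card_mul_index
    rw [hK, hn] at this
    have h2 : p ^ n = p ^ (n - 1) * p := by rw [← pow_succ]; congr 1; omega
    rw [h2] at this
    exact Nat.eq_of_mul_eq_mul_left (pow_pos hp.pos _) this
  refine ⟨K, ?_, ?_, hle (Subgroup.mem_zpowers v)⟩
  · apply Subgroup.normal_of_index_eq_minFac_card
    rw [hidx, hn, Nat.Prime.pow_minFac hp (by omega)]
  · rintro rfl
    rw [Subgroup.index_top] at hidx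
    exact hp.one_lt.ne hidx

theorem comm_of_gen {G : Type} [Group G] (v g : G) (h : Subgroup.closure {v, g} = ⊤)
    (hc : v * g = g * v) (a b : G) : a * b = b * a := by
  have h1 : ∀ x : G, x * v = v * x ∧ x * g = g * x := by
    intro x
    have : x ∈ Subgroup.closure {v, g} := by rw [h]; trivial
    have h3 : Subgroup.closure {v, g} ≤ Subgroup.centralizer {v, g} := by
      rw [Subgroup.closure_le]
      intro y hy
      rw [SetLike.mem_coe, Subgroup.mem_centralizer_iff]
      intro z hz
      simp only [Set.mem_insert_iff, Set.mem_singleton_iff] at hy hz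
      rcases hy with rfl | rfl <;> rcases hz with rfl | rfl <;> simp [hc]
    have h4 := Subgroup.mem_centralizer_iff.1 (h3 this)
    exact ⟨(h4 v (by simp)).symm, (h4 g (by simp)).symm⟩
  have h5 : Subgroup.closure {v, g} ≤ Subgroup.center G := by
    rw [Subgroup.closure_le]
    intro y hy
    rw [SetLike.mem_coe, Subgroup.mem_center_iff]
    intro x
    simp only [Set.mem_insert_iff, Set.mem_singleton_iff] at hy
    rcases hy with rfl | rfl
    · exact (h1 x).1
    · exact (h1 x).2
  have h6 : b ∈ Subgroup.center G := h5 (by rw [h]; trivial)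
  exact Subgroup.mem_center_iff.1 h6 a

theorem reg_key {p : ℕ} {G : Type} [Group G] (M : Subgroup G) [hM : M.Normal]
    (IH : ∀ x ∈ M, ∀ y ∈ M, (x ^ p = y ^ p ↔ (x⁻¹ * y) ^ p = 1))
    (v g : G) (hv : v ∈ M) (hgen : Subgroup.closure {v, g} = ⊤)
    (hc : g * v ^ p * g⁻¹ = v ^ p) (z : G)
    (hz : z ∈ MhoOne p ⁅(⊤ : Subgroup G), (⊤ : Subgroup G)⁆) : z = 1 := by
  let K : Subgroup G :=
    { carrier := {w | w ∈ M ∧ w ^ p = 1}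
      one_mem' := ⟨M.one_mem, one_pow p⟩
      mul_mem' := by
        rintro a b ⟨ha, ha'⟩ ⟨hb, hb'⟩
        refine ⟨M.mul_mem ha hb, ?_⟩
        have := (IH a⁻¹ (M.inv_mem ha) b hb).1 (by rw [inv_pow, ha', hb', inv_one])
        simpa using this
      inv_mem' := by
        rintro a ⟨ha, ha'⟩
        exact ⟨M.inv_mem ha, by rw [inv_pow, ha', inv_one]⟩ }
  have hKn : K.Normal := ⟨by
    rintro a ⟨ha, ha'⟩ x
    exact ⟨hM.conj_mem a ha x, by rw [conj_pow, ha']; simp⟩⟩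
  have hK : v⁻¹ * (g * v * g⁻¹) ∈ K := by
    refine ⟨M.mul_mem (M.inv_mem hv) (hM.conj_mem v hv g), ?_⟩
    rw [← IH v hv _ (hM.conj_mem v hv g), conj_pow, hc]
  have hcomm : ∀ a b : G ⧸ K, a * b = b * a := by
    apply comm_of_gen (v : G ⧸ K) (g : G ⧸ K)
    · have := congrArg (Subgroup.map (QuotientGroup.mk' K)) hgen
      rw [MonoidHom.map_closure, Set.image_pair,
        Subgroup.map_top_of_surjective _ (QuotientGroup.mk'_surjective K)] at this
      exact this
    · have h1 := (QuotientGroup.eq_one_iff (N := K) _).2 hK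
      rw [QuotientGroup.mk_mul, QuotientGroup.mk_inv, QuotientGroup.mk_mul, QuotientGroup.mk_mul,
        QuotientGroup.mk_inv] at h1
      rw [inv_mul_eq_one] at h1
      calc (v : G ⧸ K) * g = (g * v * (g : G ⧸ K)⁻¹) * g := by rw [← h1]
        _ = _ := by group
  have hle : ⁅(⊤ : Subgroup G), (⊤ : Subgroup G)⁆ ≤ K := by
    rw [Subgroup.commutator_le]
    intro a _ b _
    rw [← QuotientGroup.eq_one_iff]
    have := hcomm a b
    rw [commutatorElement_def]
    rw [QuotientGroup.mk_mul, QuotientGroup.mk_mul, QuotientGroup.mk_mul, this,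
      QuotientGroup.mk_inv, QuotientGroup.mk_inv]; group
  have : MhoOne p ⁅(⊤ : Subgroup G), (⊤ : Subgroup G)⁆ ≤ ⊥ := by
    unfold MhoOne
    rw [Subgroup.closure_le]
    rintro _ ⟨x, hx, rfl⟩
    exact (hle hx).2
  exact (Subgroup.mem_bot).1 (this hz)

theorem reg_pow_eq_aux {p : ℕ} [Fact p.Prime] (n : ℕ) : ∀ (G : Type) [Group G] [Finite G],
    IsPGroup p G → IsRegularPGroup p G → Nat.card G ≤ n →
    ∀ x y : G, (x ^ p = y ^ p ↔ (x⁻¹ * y) ^ p = 1) := by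
  induction n with
  | zero =>
    intro G _ _ _ _ h
    have := Nat.card_pos (α := G)
    omega
  | succ n ih =>
    intro G _ _ hG hreg hcard x y
    have IHs : ∀ M : Subgroup G, M ≠ ⊤ → ∀ x ∈ M, ∀ y ∈ M,
        (x ^ p = y ^ p ↔ (x⁻¹ * y) ^ p = 1) := by
      intro M hM x hx y hy
      have hlt : Nat.card M < Nat.card G := by
        refine lt_of_le_of_ne (Nat.le_of_dvd Nat.card_pos M.card_subgroup_dvd_card) ?_
        intro h; exact hM (Subgroup.eq_top_of_card_eq _ h)
      have := ih M (hG.to_subgroup M) (reg_of_inj M.subtype M.subtype_injective hreg) (by omega)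
        ⟨x, hx⟩ ⟨y, hy⟩
      simpa [Subtype.ext_iff] using this
    by_cases hgen : Subgroup.closure {x, y} = ⊤
    swap
    · exact IHs _ hgen x (Subgroup.subset_closure (by simp)) y (Subgroup.subset_closure (by simp))
    by_cases hcom : ∀ a b : G, a * b = b * a
    · have : (x⁻¹ * y) ^ p = (x⁻¹) ^ p * y ^ p := Commute.mul_pow (hcom _ _) p
      rw [this, inv_pow, inv_mul_eq_one]
    have hM : ∀ v : G, ∃ M : Subgroup G, M.Normal ∧ M ≠ ⊤ ∧ v ∈ M := by
      intro v
      apply exists_prop_normal hG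
      intro h
      apply hcom
      intro a b
      have ha : a ∈ Subgroup.zpowers v := by rw [h]; trivial
      have hb : b ∈ Subgroup.zpowers v := by rw [h]; trivial
      obtain ⟨i, rfl⟩ := ha
      obtain ⟨j, rfl⟩ := hb
      simp only [← zpow_add, add_comm]
    have hgen2 : Subgroup.closure {x⁻¹ * y, x} = ⊤ := by
      rw [eq_top_iff, ← hgen, Subgroup.closure_le]
      intro w hw
      simp only [Set.mem_insert_iff, Set.mem_singleton_iff] at hw
      have hx : x ∈ Subgroup.closure {x⁻¹ * y, x} := Subgroup.subset_closure (by simp)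
      rcases hw with rfl | rfl
      · exact hx
      · have : x⁻¹ * w ∈ Subgroup.closure {x⁻¹ * w, x} := Subgroup.subset_closure (by simp)
        have := Subgroup.mul_mem _ hx this
        simpa using this
    constructor
    · intro h
      obtain ⟨M, hMn, hMt, hxM⟩ := hM x
      obtain ⟨z, hz, hxy⟩ := hreg x⁻¹ y
      have hcl : Subgroup.closure {x⁻¹, y} = ⊤ := by
        rw [eq_top_iff, ← hgen, Subgroup.closure_le]
        intro w hw
        simp only [Set.mem_insert_iff, Set.mem_singleton_iff] at hw
        rcases hw with rfl | rfl
        · rw [SetLike.mem_coe, ← Subgroup.inv_mem_iff]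
          exact Subgroup.subset_closure (by simp)
        · exact Subgroup.subset_closure (by simp)
      rw [hcl] at hz
      have hz1 := reg_key M (IHs M hMt) x y hxM hgen (by rw [h]; group) z hz
      rw [hz1, mul_one, inv_pow, h, inv_mul_cancel] at hxy
      exact hxy.symm
    · intro h
      obtain ⟨M, hMn, hMt, hxM⟩ := hM (x⁻¹ * y)
      obtain ⟨z, hz, hxy⟩ := hreg x (x⁻¹ * y)
      rw [Set.pair_comm, hgen2] at hz
      have hz1 := reg_key M (IHs M hMt) _ x hxM hgen2 (by rw [h]; group) z hz
      rw [hz1, h] at hxy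
      simpa using hxy

theorem reg_pow_eq {p : ℕ} [Fact p.Prime] {G : Type} [Group G] [Finite G]
    (hG : IsPGroup p G) (hreg : IsRegularPGroup p G) (x y : G) :
    (x ^ p = y ^ p ↔ (x⁻¹ * y) ^ p = 1) :=
  reg_pow_eq_aux (Nat.card G) G hG hreg le_rfl x y

/-- kernel of the `p`-power map -/
def OmOne {p : ℕ} [Fact p.Prime] {G : Type} [Group G] [Finite G]
    (hG : IsPGroup p G) (hreg : IsRegularPGroup p G) : Subgroup G where
  carrier := {w | w ^ p = 1}
  one_mem' := one_pow p
  mul_mem' := by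
    intro a b ha hb
    have := (reg_pow_eq hG hreg a⁻¹ b).1 (by
      rw [inv_pow, show a ^ _ = 1 from ha, show b ^ _ = 1 from hb, inv_one])
    simpa using this
  inv_mem' := by
    intro a ha
    change a⁻¹ ^ _ = 1
    rw [inv_pow, show a ^ _ = 1 from ha, inv_one]

theorem omOne_normal {p : ℕ} [Fact p.Prime] {G : Type} [Group G] [Finite G]
    (hG : IsPGroup p G) (hreg : IsRegularPGroup p G) : (OmOne hG hreg).Normal := ⟨by
    intro a ha x
    change (x * a * x⁻¹) ^ p = 1
    rw [conj_pow, show a ^ p = 1 from ha]; simp⟩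

theorem mem_omOne {p : ℕ} [Fact p.Prime] {G : Type} [Group G] [Finite G]
    (hG : IsPGroup p G) (hreg : IsRegularPGroup p G) (x : G) : x ∈ OmOne hG hreg ↔ x ^ p = 1 :=
  Iff.rfl

theorem reg_pow_pow_eq {p : ℕ} [Fact p.Prime] (i : ℕ) : ∀ {G : Type} [Group G] [Finite G],
    IsPGroup p G → IsRegularPGroup p G → ∀ x y : G,
    (x ^ p ^ i = y ^ p ^ i ↔ (x⁻¹ * y) ^ p ^ i = 1) := by
  induction i with
  | zero => intro G _ _ _ _ x y; simp [inv_mul_eq_one]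
  | succ i ih =>
    intro G _ _ hG hreg x y
    have := omOne_normal hG hreg
    have h1 := ih (hG.to_quotient (OmOne hG hreg))
      (reg_of_surj (QuotientGroup.mk' _) (QuotientGroup.mk'_surjective (OmOne hG hreg)) hreg)
      (x : G ⧸ OmOne hG hreg) y
    simp only [← QuotientGroup.mk_pow, ← QuotientGroup.mk_inv, ← QuotientGroup.mk_mul] at h1
    rw [QuotientGroup.eq, QuotientGroup.eq_one_iff, mem_omOne, mem_omOne,
      ← reg_pow_eq hG hreg] at h1
    simpa only [pow_succ, pow_mul] using h1

/-- elements of order dividing `p ^ i` -/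
def Om {p : ℕ} [Fact p.Prime] {G : Type} [Group G] [Finite G]
    (hG : IsPGroup p G) (hreg : IsRegularPGroup p G) (i : ℕ) : Subgroup G where
  carrier := {w | w ^ p ^ i = 1}
  one_mem' := one_pow _
  mul_mem' := by
    intro a b ha hb
    have := (reg_pow_pow_eq i hG hreg a⁻¹ b).1 (by
      rw [inv_pow, show a ^ _ = 1 from ha, show b ^ _ = 1 from hb, inv_one])
    simpa using this
  inv_mem' := by
    intro a ha
    change a⁻¹ ^ _ = 1
    rw [inv_pow, show a ^ _ = 1 from ha, inv_one]

section
variable {p : ℕ} [Fact p.Prime] {G : Type} [Group G] [Finite G]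
    (hG : IsPGroup p G) (hreg : IsRegularPGroup p G)

theorem mem_Om (i : ℕ) (x : G) : x ∈ Om hG hreg i ↔ x ^ p ^ i = 1 :=
  Iff.rfl

theorem Om_normal (i : ℕ) : (Om hG hreg i).Normal := ⟨by
    intro a ha x
    change (x * a * x⁻¹) ^ p ^ i = 1
    rw [conj_pow, show a ^ p ^ i = 1 from ha]; simp⟩

theorem omegaSubgroup_eq (i : ℕ) : OmegaSubgroup p G i = Om hG hreg i := by
  unfold OmegaSubgroup
  apply le_antisymm
  · rw [Subgroup.closure_le]; intro x hx; exact hx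
  · intro x hx; exact Subgroup.subset_closure hx

theorem Om_mono {i j : ℕ} (h : i ≤ j) : Om hG hreg i ≤ Om hG hreg j := by
  intro x hx
  rw [mem_Om] at *
  obtain ⟨k, rfl⟩ := Nat.exists_eq_add_of_le h
  rw [pow_add, pow_mul, hx, one_pow]

end

theorem reg_commute_iff {p : ℕ} [Fact p.Prime] {G : Type} [Group G] [Finite G]
    (hG : IsPGroup p G) (hreg : IsRegularPGroup p G) (i : ℕ) (x y : G) :
    x * y ^ p ^ i = y ^ p ^ i * x ↔ (y⁻¹ * (x * y * x⁻¹)) ^ p ^ i = 1 := by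
  rw [← reg_pow_pow_eq i hG hreg, conj_pow, eq_mul_inv_iff_mul_eq, eq_comm]

/-- number of elements killed by `p ^ i` -/
noncomputable def cnt (p : ℕ) (G : Type) [Group G] (i : ℕ) : ℕ := Nat.card {x : G // x ^ p ^ i = 1}

theorem card_downset (T : ℕ → Prop) (m : ℕ) (h : ∀ i, 1 ≤ i → (T i ↔ i ≤ m)) :
    Nat.card {i : ℕ // 1 ≤ i ∧ T i} = m := by
  have : {i : ℕ | 1 ≤ i ∧ T i} = ↑(Finset.Icc 1 m) := by
    ext i
    simp only [Set.mem_ofPred_eq, Finset.coe_Icc, Set.mem_Icc]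
    constructor
    · rintro ⟨h1, h2⟩; exact ⟨h1, (h i h1).1 h2⟩
    · rintro ⟨h1, h2⟩; exact ⟨h1, (h i h1).2 h2⟩
  have h2 : Nat.card {i : ℕ // 1 ≤ i ∧ T i} = Set.ncard {i : ℕ | 1 ≤ i ∧ T i} := rfl
  rw [h2, this, Set.ncard_coe_finset]
  simp

theorem downset_of_card (T : ℕ → Prop) (m N : ℕ) (hfin : ∀ i, T i → i ≤ N)
    (hd : ∀ i, 1 ≤ i → T (i + 1) → T i)
    (h : Nat.card {i : ℕ // 1 ≤ i ∧ T i} = m) : ∀ i, 1 ≤ i → (T i ↔ i ≤ m) := by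
  have hd' : ∀ k i, 1 ≤ i → T (i + k) → T i := by
    intro k
    induction k with
    | zero => intro i _ h; exact h
    | succ k ih => intro i h1 h2; exact ih i h1 (hd _ (by omega) h2)
  have h2 : Set.ncard {i : ℕ | 1 ≤ i ∧ T i} = m := h
  have hf : Set.Finite {i : ℕ | 1 ≤ i ∧ T i} :=
    (Set.finite_Iic N).subset (fun i hi => hfin i hi.2)
  intro k hk
  constructor
  · intro hT
    have : (↑(Finset.Icc 1 k) : Set ℕ) ⊆ {i : ℕ | 1 ≤ i ∧ T i} := by
      intro i hi
      simp only [Finset.coe_Icc, Set.mem_Icc] at hi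
      refine ⟨hi.1, hd' (k - i) i hi.1 ?_⟩
      rwa [Nat.add_sub_cancel' hi.2]
    have := Set.ncard_le_ncard this hf
    rw [h2, Set.ncard_coe_finset] at this
    simpa using this
  · intro hkm
    by_contra hT
    have : {i : ℕ | 1 ≤ i ∧ T i} ⊆ (↑(Finset.Icc 1 (k - 1)) : Set ℕ) := by
      intro i hi
      simp only [Finset.coe_Icc, Set.mem_Icc]
      refine ⟨hi.1, ?_⟩
      by_contra hik
      apply hT
      apply hd' (i - k) k hk
      rw [Nat.add_sub_cancel' (by omega)]
      exact hi.2
    have := Set.ncard_le_ncard this (Finset.finite_toSet _)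
    rw [h2, Set.ncard_coe_finset] at this
    simp at this
    omega

theorem cnt_zero (p : ℕ) (G : Type) [Group G] : cnt p G 0 = 1 := by
  unfold cnt
  simp

theorem sub_card_mul_relIndex {G : Type} [Group G] {H K : Subgroup G} (h : H ≤ K) :
    Nat.card H * H.relIndex K = Nat.card K := by
  have := Subgroup.relIndex_mul_relIndex ⊥ H K bot_le h
  rwa [Subgroup.relIndex_bot_left, Subgroup.relIndex_bot_left] at this

section
variable {p : ℕ} [Fact p.Prime] {G : Type} [Group G] [Finite G]
    (hG : IsPGroup p G) (hreg : IsRegularPGroup p G)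

theorem card_Om (i : ℕ) : Nat.card (Om hG hreg i) = cnt p G i := rfl

include hG hreg

theorem cnt_pow_of (i : ℕ) : ∃ n, cnt p G i = p ^ n := by
  rw [← card_Om hG hreg]
  exact IsPGroup.iff_card.1 (hG.to_subgroup _)

theorem omegaInv_spec (i : ℕ) : p ^ omegaInv p G i * cnt p G (i - 1) = cnt p G i := by
  have hp : p.Prime := Fact.out
  have h1 : (Om hG hreg (i - 1)).relIndex (Om hG hreg i) * cnt p G (i - 1) = cnt p G i := by
    rw [← card_Om hG hreg, ← card_Om hG hreg, mul_comm]
    exact sub_card_mul_relIndex (Om_mono hG hreg (by omega))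
  have h2 : ∃ k, (Om hG hreg (i - 1)).relIndex (Om hG hreg i) = p ^ k := by
    obtain ⟨n, hn⟩ := cnt_pow_of hG hreg i
    have : (Om hG hreg (i - 1)).relIndex (Om hG hreg i) ∣ p ^ n := by
      rw [← hn, ← h1]; exact dvd_mul_right _ _
    obtain ⟨k, _, hk⟩ := (Nat.dvd_prime_pow hp).1 this
    exact ⟨k, hk⟩
  obtain ⟨k, hk⟩ := h2
  have h3 : omegaInv p G i = k := by
    unfold omegaInv
    rw [omegaSubgroup_eq hG hreg, omegaSubgroup_eq hG hreg, hk, hp.factorization_pow]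
    simp
  rw [h3, ← hk, h1]

theorem omegaInv_anti (i : ℕ) : omegaInv p G (i + 2) ≤ omegaInv p G (i + 1) := by
  have hp : p.Prime := Fact.out
  have key : ∀ x y : G, x⁻¹ * y ∈ Om hG hreg (i + 1) ↔ (x ^ p)⁻¹ * y ^ p ∈ Om hG hreg i := by
    intro x y
    rw [mem_Om, mem_Om, ← reg_pow_pow_eq _ hG hreg, ← reg_pow_pow_eq _ hG hreg, ← pow_mul,
      ← pow_mul, pow_succ, mul_comm p]
  have hle : (Om hG hreg (i + 1)).relIndex (Om hG hreg (i + 2)) ≤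
      (Om hG hreg i).relIndex (Om hG hreg (i + 1)) := by
    unfold Subgroup.relIndex Subgroup.index
    have hmem : ∀ x : Om hG hreg (i + 2), (x : G) ^ p ∈ Om hG hreg (i + 1) := by
      rintro ⟨x, hx⟩
      rw [mem_Om] at *
      rw [← pow_mul, mul_comm, ← pow_succ]; exact hx
    refine Nat.card_le_card_of_injective (Quotient.map' (fun x => ⟨(x : G) ^ p, hmem x⟩) ?_) ?_
    · intro x y hxy
      rw [QuotientGroup.leftRel_apply, Subgroup.mem_subgroupOf] at *
      exact (key _ _).1 hxy
    · intro x y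
      induction x using Quotient.inductionOn'
      induction y using Quotient.inductionOn'
      intro hxy
      rw [Quotient.map'_mk'', Quotient.map'_mk'', Quotient.eq''] at hxy
      rw [Quotient.eq'']
      rw [QuotientGroup.leftRel_apply, Subgroup.mem_subgroupOf] at *
      exact (key _ _).2 hxy
  have e1 := omegaInv_spec hG hreg (i + 2)
  have e2 := omegaInv_spec hG hreg (i + 1)
  have f1 := sub_card_mul_relIndex (Om_mono hG hreg (show i + 1 ≤ i + 2 by omega))
  have f2 := sub_card_mul_relIndex (Om_mono hG hreg (show i ≤ i + 1 by omega))
  rw [card_Om, card_Om] at f1 f2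
  have pos : ∀ i, 0 < cnt p G i := by
    intro i
    obtain ⟨n, hn⟩ := cnt_pow_of hG hreg i
    rw [hn]; exact pow_pos hp.pos _
  have g1 : p ^ omegaInv p G (i + 2) = (Om hG hreg (i + 1)).relIndex (Om hG hreg (i + 2)) :=
    Nat.eq_of_mul_eq_mul_left (pos (i + 1)) (by rw [f1, mul_comm]; exact e1)
  have g2 : p ^ omegaInv p G (i + 1) = (Om hG hreg i).relIndex (Om hG hreg (i + 1)) :=
    Nat.eq_of_mul_eq_mul_left (pos i) (by rw [f2, mul_comm]; exact e2)
  rw [← g1, ← g2] at hle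
  exact (Nat.pow_le_pow_iff_right hp.one_lt).1 hle

theorem cnt_of_type (e : ℕ) (he : 1 ≤ e) (h : HasTypeInvariants p G (e :: [2, 1])) :
    cnt p G 1 = p ^ 3 ∧ cnt p G 2 = p ^ 5 ∧ ∃ a : G, a ^ p ^ (e - 1) ≠ 1 ∧ a ^ p ^ e = 1 := by
  have hp : p.Prime := Fact.out
  obtain ⟨n, hn⟩ := IsPGroup.iff_card.1 hG
  have hz : ∀ i, n < i → omegaInv p G i = 0 := by
    intro i hi
    have hc : ∀ j, n ≤ j → cnt p G j = Nat.card G := by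
      intro j hj
      unfold cnt
      apply Nat.card_congr
      refine Equiv.subtypeUnivEquiv ?_
      intro x
      obtain ⟨k, rfl⟩ := Nat.exists_eq_add_of_le hj
      rw [pow_add, pow_mul, ← hn, pow_card_eq_one', one_pow]
    have := omegaInv_spec hG hreg i
    rw [hc _ (by omega), hc _ (by omega)] at this
    have hpos := Nat.card_pos (α := G)
    have : p ^ omegaInv p G i = 1 := by
      apply Nat.eq_of_mul_eq_mul_right hpos
      rw [this, one_mul]
    by_contra h0
    have := Nat.one_lt_pow h0 hp.one_lt
    omega
  have hD : ∀ j, 1 ≤ j → ∀ i, 1 ≤ i → (j ≤ omegaInv p G i ↔ i ≤ muInv p G j) := by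
    intro j hj
    apply downset_of_card _ _ n _ _ rfl
    · intro i hi
      by_contra hni
      rw [hz i (by omega)] at hi
      omega
    · intro i hi h1
      obtain ⟨k, rfl⟩ := Nat.exists_eq_add_of_le hi
      have := omegaInv_anti hG hreg k
      rw [show 1 + k + 1 = k + 2 by ring] at h1
      rw [show 1 + k = k + 1 by ring]
      omega
  have m1 : muInv p G 1 = e := h 0
  have m2 : muInv p G 2 = 2 := h 1
  have m3 : muInv p G 3 = 1 := h 2
  have m4 : muInv p G 4 = 0 := h 3
  have h11 := hD 3 (by omega) 1 le_rfl
  have h12 := hD 4 (by omega) 1 le_rfl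
  have h21 := hD 2 (by omega) 2 (by omega)
  have h22 := hD 3 (by omega) 2 (by omega)
  have h31 := hD 1 (by omega) e he
  rw [m3] at h11 h22
  rw [m4] at h12
  rw [m2] at h21
  rw [m1] at h31
  have w1 : omegaInv p G 1 = 3 := by omega
  have w2 : omegaInv p G 2 = 2 := by omega
  have we : 1 ≤ omegaInv p G e := h31.2 le_rfl
  have c1 : cnt p G 1 = p ^ 3 := by
    have := omegaInv_spec hG hreg 1
    rw [w1, Nat.sub_self, cnt_zero, mul_one] at this
    exact this.symm
  have c2 : cnt p G 2 = p ^ 5 := by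
    have := omegaInv_spec hG hreg 2
    rw [w2, show 2 - 1 = 1 from rfl, c1, ← pow_add] at this
    exact this.symm
  refine ⟨c1, c2, ?_⟩
  by_contra hcon
  push Not at hcon
  have hEq : Om hG hreg (e - 1) = Om hG hreg e := by
    apply le_antisymm (Om_mono hG hreg (by omega))
    intro a ha
    by_contra hna
    exact hcon a hna ha
  have := omegaInv_spec hG hreg e
  rw [← card_Om hG hreg, ← card_Om hG hreg, hEq] at this
  have h5 : p ^ omegaInv p G e = 1 := by
    apply Nat.eq_of_mul_eq_mul_right (Nat.card_pos (α := Om hG hreg e))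
    rw [this, one_mul]
  have := Nat.one_lt_pow (show omegaInv p G e ≠ 0 by omega) hp.one_lt
  omega

theorem type_of_cnt (e : ℕ) (he : 3 ≤ e) (h1 : cnt p G 1 = p ^ 3)
    (h2 : ∀ i, 2 ≤ i → i ≤ e → cnt p G i = p ^ (i + 3)) (h3 : ∀ i, e ≤ i → cnt p G i = p ^ (e + 3)) :
    HasTypeInvariants p G (e :: [2, 1]) := by
  have hp : p.Prime := Fact.out
  have step : ∀ i s t, cnt p G (i + 1) = p ^ (s + t) → cnt p G i = p ^ s →
      omegaInv p G (i + 1) = t := by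
    intro i s t ha hb
    have := omegaInv_spec hG hreg (i + 1)
    rw [Nat.add_sub_cancel, ha, hb, ← pow_add] at this
    have := Nat.pow_right_injective hp.two_le this
    omega
  have w1 : omegaInv p G 1 = 3 := step 0 0 3 h1 (by rw [cnt_zero, pow_zero])
  have w2 : omegaInv p G 2 = 2 := step 1 3 2 (h2 2 le_rfl (by omega)) h1
  have w3 : ∀ i, 3 ≤ i → i ≤ e → omegaInv p G i = 1 := by
    intro i hi hie
    obtain ⟨k, rfl⟩ := Nat.exists_eq_add_of_le' hi
    exact step (k + 2) (k + 5) 1 (h2 _ (by omega) (by omega)) (h2 _ (by omega) (by omega))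
  have w4 : ∀ i, e < i → omegaInv p G i = 0 := by
    intro i hi
    obtain ⟨k, rfl⟩ := Nat.exists_eq_add_of_le' hi
    exact step (k + e) (e + 3) 0 (h3 _ (by omega)) (h3 _ (by omega))
  have val : ∀ i, 1 ≤ i → omegaInv p G i =
      if i = 1 then 3 else if i = 2 then 2 else if i ≤ e then 1 else 0 := by
    intro i hi
    split_ifs with a b c
    · rw [a, w1]
    · rw [b, w2]
    · exact w3 i (by omega) c
    · exact w4 i (by omega)
  intro j
  unfold muInv
  apply card_downset
  intro i hi
  rw [val i hi]
  match j with
  | 0 => simp; split_ifs <;> omega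
  | 1 => simp; split_ifs <;> omega
  | 2 => simp; split_ifs <;> omega
  | k + 3 => simp; split_ifs <;> omega

end

section
variable (p : ℕ) [hpF : Fact p.Prime]

/-- reduction mod `p` -/
def rd : ZMod (p ^ 2) →+* ZMod p := ZMod.castHom (dvd_pow_self p two_ne_zero) (ZMod p)

/-- multiplication by `p` as a map from `ZMod p` -/
def pm : ZMod p →+ ZMod (p ^ 2) :=
  ZMod.lift p ⟨(AddMonoidHom.mulLeft (p : ZMod (p ^ 2))).comp (Int.castAddHom _), by
    simp
    rw [← Nat.cast_mul, ← pow_two]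
    exact ZMod.natCast_self _⟩

variable {p}

theorem pm_intCast (n : ℤ) : pm p (n : ZMod p) = p * (n : ZMod (p ^ 2)) := by
  unfold pm
  rw [ZMod.lift_coe]; simp

theorem rd_intCast (n : ℤ) : rd p (n : ZMod (p ^ 2)) = n := by simp

theorem exists_int {m : ℕ} (v : ZMod m) : ∃ n : ℤ, (n : ZMod m) = v := ZMod.intCast_surjective v

theorem rd_surj (v : ZMod p) : ∃ w : ZMod (p ^ 2), rd p w = v := by
  obtain ⟨n, rfl⟩ := exists_int v
  exact ⟨n, rd_intCast n⟩

theorem pm_rd (v : ZMod (p ^ 2)) : pm p (rd p v) = p * v := by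
  obtain ⟨n, rfl⟩ := exists_int v
  rw [rd_intCast, pm_intCast]

theorem rd_pm (v : ZMod p) : rd p (pm p v) = 0 := by
  obtain ⟨n, rfl⟩ := exists_int v
  rw [pm_intCast]; simp

theorem mul_pm (v : ZMod (p ^ 2)) (u : ZMod p) : v * pm p u = pm p (rd p v * u) := by
  obtain ⟨n, rfl⟩ := exists_int v
  obtain ⟨m, rfl⟩ := exists_int u
  rw [rd_intCast, ← Int.cast_mul, pm_intCast, pm_intCast]; push_cast; ring

theorem pm_mul (v : ZMod (p ^ 2)) (u : ZMod p) : pm p u * v = pm p (u * rd p v) := by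
  rw [mul_comm, mul_pm, mul_comm]

theorem pm_inj {u v : ZMod p} (h : pm p u = pm p v) : u = v := by
  have hp : p.Prime := Fact.out
  rw [← sub_eq_zero, ← map_sub] at h
  rw [← sub_eq_zero]
  obtain ⟨n, hn⟩ := exists_int (u - v)
  rw [← hn] at h ⊢
  rw [pm_intCast] at h
  have h2 : ((p * n : ℤ) : ZMod (p ^ 2)) = 0 := by push_cast; exact h
  rw [ZMod.intCast_zmod_eq_zero_iff_dvd] at h2 ⊢ <;> try infer_instance
  push_cast at h2
  rw [pow_two] at h2
  exact Int.dvd_of_mul_dvd_mul_left (by exact_mod_cast hp.ne_zero) h2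

theorem eq_pm_of_mul {v : ZMod (p ^ 2)} (h : (p : ZMod (p ^ 2)) * v = 0) : ∃ u, v = pm p u := by
  have hp : p.Prime := Fact.out
  obtain ⟨n, rfl⟩ := exists_int v
  have h2 : ((p * n : ℤ) : ZMod (p ^ 2)) = 0 := by push_cast; exact h
  rw [ZMod.intCast_zmod_eq_zero_iff_dvd] at h2
  push_cast at h2
  rw [pow_two] at h2
  obtain ⟨m, rfl⟩ := Int.dvd_of_mul_dvd_mul_left (by exact_mod_cast hp.ne_zero) h2
  exact ⟨m, by rw [pm_intCast]; push_cast; rfl⟩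

theorem pm_pow_two : ((p : ZMod (p ^ 2))) * p = 0 := by
  rw [← Nat.cast_mul, ← pow_two]; exact ZMod.natCast_self _

theorem p_pm (u : ZMod p) : (p : ZMod (p ^ 2)) * pm p u = 0 := by
  rw [mul_pm]; simp

theorem pm_eq_zero {u : ZMod p} : pm p u = 0 ↔ u = 0 :=
  ⟨fun h => pm_inj (by rw [h, map_zero]), fun h => by rw [h, map_zero]⟩

theorem rd_eq_zero {v : ZMod (p ^ 2)} : rd p v = 0 ↔ ∃ u, v = pm p u := by
  constructor
  · intro h
    apply eq_pm_of_mul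
    rw [← pm_rd, h, map_zero]
  · rintro ⟨u, rfl⟩; exact rd_pm u

theorem isUnit_of_rd {v : ZMod (p ^ 2)} (h : rd p v ≠ 0) : IsUnit v := by
  have hp : p.Prime := Fact.out
  obtain ⟨w, hw⟩ := rd_surj (rd p v)⁻¹
  have : rd p (v * w - 1) = 0 := by rw [map_sub, map_mul, hw, mul_inv_cancel₀ h]; simp
  obtain ⟨u, hu⟩ := rd_eq_zero.1 this
  refine IsUnit.of_mul_eq_one (w * (1 - pm p u)) ?_
  have h1 : v * w = 1 + pm p u := by rw [← hu]; ring
  have h2 : pm p u * pm p u = 0 := by rw [mul_pm, rd_pm]; simp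
  linear_combination (1 - pm p u) * h1 - h2

theorem rd_ne_zero_of_unit {v : ZMod (p ^ 2)} (h : IsUnit v) : rd p v ≠ 0 :=
  (h.map (rd p)).ne_zero

end

/-- coordinates -/
@[ext] structure A3 (p : ℕ) where
  u : ZMod (p ^ 2)
  v : ZMod (p ^ 2)
  c : ZMod p

/-- action parameters -/
structure Act (p : ℕ) where
  x : ZMod (p ^ 2)
  f : ZMod p
  y : ZMod p
  g : ZMod p
  w : ZMod p

section
variable {p : ℕ} [hpF : Fact p.Prime]

theorem card_A3 : Nat.card (A3 p) = p ^ 5 := by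
  have e : A3 p ≃ ZMod (p ^ 2) × ZMod (p ^ 2) × ZMod p :=
    { toFun := fun a => (a.u, a.v, a.c)
      invFun := fun a => ⟨a.1, a.2.1, a.2.2⟩
      left_inv := fun _ => rfl
      right_inv := fun _ => rfl }
  rw [Nat.card_congr e, Nat.card_prod, Nat.card_prod, Nat.card_zmod, Nat.card_zmod]
  ring

instance : Finite (A3 p) := Nat.finite_of_card_ne_zero (by
  rw [card_A3]; exact pow_ne_zero _ hpF.out.ne_zero)

/-- the linear action -/
def act (t : Act p) (n : A3 p) : A3 p :=
  ⟨n.u + t.x * n.v + pm p (t.f * n.c), n.v + pm p (t.y * rd p n.v + t.g * n.c), n.c + t.w * rd p n.v⟩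

/-- parameters of powers -/
def actPow (t : Act p) (k : ℕ) : Act p :=
  ⟨k * t.x + pm p ((k.choose 2 : ZMod p) * (t.y * rd p t.x + t.w * t.f)
      + (k.choose 3 : ZMod p) * (t.w * t.g * rd p t.x)),
    k * t.f + (k.choose 2 : ZMod p) * (t.g * rd p t.x),
    k * t.y + (k.choose 2 : ZMod p) * (t.w * t.g), k * t.g, k * t.w⟩

theorem act_actPow (t : Act p) (k : ℕ) (n : A3 p) :
    act t (act (actPow t k) n) = act (actPow t (k + 1)) n := by
  have c2 : (((k + 1).choose 2 : ℕ) : ZMod p) = k + (k.choose 2 : ZMod p) := by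
    rw [Nat.choose_succ_succ' k 1]; push_cast; simp
  have c3 : (((k + 1).choose 3 : ℕ) : ZMod p) = (k.choose 2 : ZMod p) + (k.choose 3 : ZMod p) := by
    rw [Nat.choose_succ_succ' k 2]; push_cast; simp
  simp only [act, actPow, c2, c3]
  ext
  · simp only [map_add, map_mul, rd_pm, mul_add, add_mul, mul_pm, pm_mul, map_natCast]
    push_cast
    simp only [mul_add, add_mul, map_add, mul_zero, zero_mul, map_zero]
    ring_nf
  · simp only [map_add, map_mul, rd_pm, mul_add, add_mul, mul_pm, pm_mul, map_natCast]
    push_cast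
    simp only [mul_add, add_mul, map_add, mul_zero, zero_mul, map_zero]
    ring_nf
  · simp only [map_add, rd_pm]
    push_cast
    ring

theorem act_iter (t : Act p) (k : ℕ) (n : A3 p) : (act t)^[k] n = act (actPow t k) n := by
  induction k with
  | zero => ext <;> simp [act, actPow]
  | succ k ih => rw [Function.iterate_succ_apply', ih, act_actPow]

end

/-- parameters of a group -/
structure Par (p : ℕ) [Fact p.Prime] where
  i : ZMod p
  j : ZMod p
  t : Act p
  val : rd p t.x * j = 0

section
variable {p : ℕ} [hpF : Fact p.Prime]

/-- the normal subgroup `Ω_2` -/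
def NN (_ : Par p) : Type := A3 p

/-- the alternating form -/
def cc (n m : A3 p) : ZMod p := rd p n.v * m.c - n.c * rd p m.v

/-- product -/
def mulN (θ : Par p) (n m : A3 p) : A3 p :=
  ⟨n.u + m.u + pm p (θ.i * cc n m), n.v + m.v + pm p (θ.j * cc n m), n.c + m.c⟩

theorem mulN_assoc (θ : Par p) (a b c : A3 p) : mulN θ (mulN θ a b) c = mulN θ a (mulN θ b c) := by
  simp only [mulN, cc, map_add, rd_pm]
  ext
  · simp only [add_zero, mul_add, add_mul, mul_sub, map_add, map_sub]; ring
  · simp only [add_zero, mul_add, add_mul, mul_sub, map_add, map_sub]; ring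
  · simp only [add_assoc]

instance (θ : Par p) : Group (NN θ) where
  mul := mulN θ
  one := (⟨0, 0, 0⟩ : A3 p)
  inv n := (⟨-n.u, -n.v, -n.c⟩ : A3 p)
  mul_assoc := mulN_assoc θ
  one_mul n := by
    change mulN θ (⟨0, 0, 0⟩ : A3 p) n = n
    ext <;> simp [mulN, cc]
  mul_one n := by
    change mulN θ n (⟨0, 0, 0⟩ : A3 p) = n
    ext <;> simp [mulN, cc]
  inv_mul_cancel n := by
    change mulN θ (⟨-n.u, -n.v, -n.c⟩ : A3 p) n = (⟨0, 0, 0⟩ : A3 p)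
    have : cc (⟨-n.u, -n.v, -n.c⟩ : A3 p) n = 0 := by simp only [cc, map_neg]; ring
    ext <;> simp [mulN, this]

instance (θ : Par p) : Finite (NN θ) := inferInstanceAs (Finite (A3 p))

theorem card_NN (θ : Par p) : Nat.card (NN θ) = p ^ 5 := card_A3

/-- constructor -/
def tri (θ : Par p) (u v : ZMod (p ^ 2)) (c : ZMod p) : NN θ := (⟨u, v, c⟩ : A3 p)

theorem tri_surj (θ : Par p) (n : NN θ) : ∃ u v c, n = tri θ u v c := ⟨A3.u n, A3.v n, A3.c n, rfl⟩

theorem tri_inj {θ : Par p} {u v : ZMod (p ^ 2)} {c : ZMod p} {u' v' : ZMod (p ^ 2)} {c' : ZMod p} :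
    tri θ u v c = tri θ u' v' c' ↔ u = u' ∧ v = v' ∧ c = c' := by
  constructor
  · intro h; exact ⟨congrArg A3.u h, congrArg A3.v h, congrArg A3.c h⟩
  · rintro ⟨rfl, rfl, rfl⟩; rfl

theorem tri_mul (θ : Par p) (u v : ZMod (p ^ 2)) (c : ZMod p) (u' v' : ZMod (p ^ 2)) (c' : ZMod p) :
    tri θ u v c * tri θ u' v' c' = tri θ (u + u' + pm p (θ.i * (rd p v * c' - c * rd p v')))
      (v + v' + pm p (θ.j * (rd p v * c' - c * rd p v'))) (c + c') := rfl

theorem tri_inv (θ : Par p) (u v : ZMod (p ^ 2)) (c : ZMod p) :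
    (tri θ u v c)⁻¹ = tri θ (-u) (-v) (-c) := rfl

theorem tri_one (θ : Par p) : (1 : NN θ) = tri θ 0 0 0 := rfl

theorem tri_pow (θ : Par p) (u v : ZMod (p ^ 2)) (c : ZMod p) (k : ℕ) :
    (tri θ u v c) ^ k = tri θ (k * u) (k * v) (k * c) := by
  induction k with
  | zero => simp [tri_one]
  | succ k ih =>
    rw [pow_succ, ih, tri_mul, tri_inj]
    refine ⟨?_, ?_, ?_⟩
    · have : rd p (k * v) * c - k * c * rd p v = 0 := by simp; ring
      rw [this]; push_cast; simp; ring
    · have : rd p (k * v) * c - k * c * rd p v = 0 := by simp; ring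
      rw [this]; push_cast; simp; ring
    · push_cast; ring

theorem tri_z_mul (θ : Par p) (u v u' : ZMod (p ^ 2)) (c : ZMod p) :
    tri θ u' 0 0 * tri θ u v c = tri θ (u' + u) v c := by
  rw [tri_mul]; simp

theorem tri_mul_z (θ : Par p) (u v u' : ZMod (p ^ 2)) (c : ZMod p) :
    tri θ u v c * tri θ u' 0 0 = tri θ (u + u') v c := by
  rw [tri_mul]; simp

/-- an action with compatible parameters as hom -/
def actHom (θ : Par p) (t : Act p) (h : rd p t.x * θ.j = 0) : NN θ →* NN θ where
  toFun := act t
  map_one' := by change act t (⟨0, 0, 0⟩ : A3 p) = (⟨0, 0, 0⟩ : A3 p); ext <;> simp [act]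
  map_mul' n m := by
    change act t (mulN θ n m) = mulN θ (act t n) (act t m)
    have key : cc (act t n) (act t m) = cc n m := by
      simp only [cc, act, map_add, rd_pm]; ring
    simp only [mulN, key]
    ext
    · simp only [act, map_add, mul_add, mul_pm, ← mul_assoc, h, rd_pm]; simp; ring
    · simp only [act, map_add, mul_add, mul_pm, rd_pm]; simp; ring
    · simp only [act, map_add, mul_add, mul_pm, rd_pm]; ring

theorem act_injective (t : Act p) : Function.Injective (act t) := by
  intro n m h
  have h1 := congrArg A3.u h
  have h2 := congrArg A3.v h
  have h3 := congrArg A3.c h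
  simp only [act] at h1 h2 h3
  have h4 := congrArg (rd p) h2
  simp only [map_add, rd_pm, add_zero] at h4
  rw [h4] at h2 h3
  have h5 : n.c = m.c := by simpa using h3
  rw [h5] at h1 h2
  have h6 : n.v = m.v := by simpa using h2
  rw [h6] at h1
  have h7 : n.u = m.u := by simpa using h1
  ext <;> assumption

/-- action on `NN` -/
def actN (θ : Par p) (t : Act p) (n : NN θ) : NN θ := act t n

theorem actN_iter (θ : Par p) (t : Act p) (k : ℕ) (n : NN θ) : (actN θ t)^[k] n = actN θ (actPow t k) n :=
  act_iter t k n

/-- the automorphism `α` -/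
noncomputable def alpha (θ : Par p) : NN θ ≃* NN θ :=
  MulEquiv.ofBijective (actHom θ θ.t θ.val) (Finite.injective_iff_bijective.1 (act_injective θ.t))

theorem alpha_apply (θ : Par p) (n : NN θ) : alpha θ n = actN θ θ.t n := rfl

theorem alpha_pow (θ : Par p) (k : ℕ) (n : NN θ) :
    ((alpha θ : MulAut (NN θ)) ^ k) n = actN θ (actPow θ.t k) n := by
  rw [← actN_iter]
  induction k with
  | zero => rfl
  | succ k ih => rw [pow_succ', Function.iterate_succ_apply', ← ih]; rfl

theorem act_tri (θ : Par p) (t : Act p) (u v : ZMod (p ^ 2)) (c : ZMod p) :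
    actN θ t (tri θ u v c) = tri θ (u + t.x * v + pm p (t.f * c)) 
      (v + pm p (t.y * rd p v + t.g * c)) (c + t.w * rd p v) := rfl

theorem actPow_rdx (t : Act p) (k : ℕ) : rd p (actPow t k).x = k * rd p t.x := by
  simp [actPow, rd_pm]

theorem act_add (θ : Par p) (t : Act p) (k m : ℕ) (n : NN θ) :
    actN θ (actPow t (k * m)) n = actN θ (actPow (actPow t k) m) n := by
  rw [← actN_iter, ← actN_iter, Function.iterate_mul]
  congr 2
  funext n
  rw [actN_iter]

theorem alpha_p2 (hp5 : 5 ≤ p) (θ : Par p) (k : ℕ) (hk : p ^ 2 ∣ k) : (alpha θ : MulAut (NN θ)) ^ k = 1 := by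
  obtain ⟨m, rfl⟩ := hk
  rw [pow_mul]
  suffices (alpha θ : MulAut (NN θ)) ^ p ^ 2 = 1 by rw [this, one_pow]
  ext1 n
  rw [alpha_pow]
  have hp : p.Prime := Fact.out
  have h2 : ((p ^ 2 : ℕ) : ZMod p) = 0 := by push_cast; simp
  have d : ∀ r, r ≠ 0 → r < p → (((p ^ 2).choose r : ℕ) : ZMod p) = 0 := by
    intro r hr hrp
    rw [CharP.cast_eq_zero_iff (ZMod p) p]
    apply hp.dvd_choose_pow hr
    intro h
    rw [h] at hrp
    nlinarith
  have d2 := d 2 (by norm_num) (by omega)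
  have d3 := d 3 (by norm_num) (by omega)
  have h2' : ((p ^ 2 : ℕ) : ZMod (p ^ 2)) = 0 := ZMod.natCast_self _
  obtain ⟨u, v, c, rfl⟩ := tri_surj θ n
  rw [act_tri]
  simp only [actPow, h2, h2', d2, d3]
  simp

/-- Groups with a presentation given by the parameters. -/
structure Data (θ : Par p) (e : ℕ) (P : Type) [Group P] where
  ι : NN θ →* P
  a : P
  inj : Function.Injective ι
  conj : ∀ n, a * ι n * a⁻¹ = ι (actN θ θ.t n)
  apow : a ^ p ^ (e - 2) = ι (tri θ 1 0 0)
  surj : ∀ x, ∃ n, ∃ t : ℕ, x = ι n * a ^ t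

section
variable {θ : Par p} {e : ℕ} {P : Type} [Group P] 

theorem conjpow {ι : NN θ →* P} {a : P} (conj : ∀ n, a * ι n * a⁻¹ = ι (actN θ θ.t n)) (t : ℕ) (n : NN θ) :
    a ^ t * ι n = ι (actN θ (actPow θ.t t) n) * a ^ t := by
  rw [← actN_iter]
  induction t with
  | zero => simp
  | succ t ih =>
    rw [pow_succ', mul_assoc, ih, Function.iterate_succ_apply', ← mul_assoc, ← mul_assoc,
      ← conj]
    group

theorem a_orderOf (he : 2 ≤ e) {ι : NN θ →* P} {a : P} (inj : Function.Injective ι)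
    (apow : a ^ p ^ (e - 2) = ι (tri θ 1 0 0)) : orderOf a = p ^ e := by
  have hp : p.Prime := Fact.out
  obtain ⟨e, rfl⟩ : ∃ d, e = d + 2 := ⟨e - 2, by omega⟩
  rw [show e + 2 = (e + 1) + 1 by ring]
  apply orderOf_eq_prime_pow
  · rw [pow_succ, pow_mul, show e = e + 2 - 2 by omega, apow, ← map_pow, tri_pow]
    intro h
    rw [← map_one ι] at h
    have h := inj h
    rw [tri_one, tri_inj] at h
    have h := h.1
    rw [mul_one, ZMod.natCast_eq_zero_iff, pow_two] at h
    have := Nat.le_of_dvd hp.pos h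
    nlinarith [hp.one_lt]
  · rw [show e + 1 + 1 = e + 2 by ring, pow_add, pow_mul, show p ^ e = p ^ (e + 2 - 2) by congr, apow, ← map_pow, tri_pow]
    rw [ZMod.natCast_self]
    push_cast
    simp [← tri_one]

theorem NN_pow_p2 (n : NN θ) : n ^ p ^ 2 = 1 := by
  obtain ⟨u, v, c, rfl⟩ := tri_surj θ n
  rw [tri_pow, ZMod.natCast_self, tri_one, tri_inj]
  push_cast; simp

theorem a_mem (he : 2 ≤ e) {ι : NN θ →* P} {a : P} (inj : Function.Injective ι)
    (apow : a ^ p ^ (e - 2) = ι (tri θ 1 0 0)) (t : ℕ) (n : NN θ) (h : a ^ t = ι n) : p ^ (e - 2) ∣ t := by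
  have hp : p.Prime := Fact.out
  have h1 : a ^ (t * p ^ 2) = 1 := by rw [pow_mul, h, ← map_pow, NN_pow_p2, map_one]
  have h2 := orderOf_dvd_of_pow_eq_one h1
  rw [a_orderOf he inj apow, show p ^ e = p ^ (e - 2) * p ^ 2 by rw [← pow_add]; congr 1; omega] at h2
  exact Nat.dvd_of_mul_dvd_mul_right (pow_pos hp.pos 2) h2

/-- coordinates map -/
def Fmap (ι : NN θ →* P) (a : P) (i e : ℕ) (x : NN θ × Fin (p ^ (i - 2))) : P :=
  ι x.1 * a ^ (x.2.1 * p ^ (e - i))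

theorem Fmap_inj {i : ℕ} (hi : 2 ≤ i) (hie : i ≤ e) {ι : NN θ →* P} {a : P} (inj : Function.Injective ι)
    (apow : a ^ p ^ (e - 2) = ι (tri θ 1 0 0)) : Function.Injective (Fmap ι a i e) := by
  have hp : p.Prime := Fact.out
  have key : ∀ n m : NN θ, ∀ s t : ℕ, s ≤ t → t < p ^ (i - 2) →
      ι n * a ^ (s * p ^ (e - i)) = ι m * a ^ (t * p ^ (e - i)) → n = m ∧ s = t := by
    intro n m s t hst ht h
    have h1 : a ^ ((t - s) * p ^ (e - i)) = ι (m⁻¹ * n) := by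
      rw [show t * p ^ (e - i) = (t - s) * p ^ (e - i) + s * p ^ (e - i) by 
        rw [← add_mul]; congr 1; omega, pow_add, ← mul_assoc] at h
      have h := mul_right_cancel h
      rw [map_mul, map_inv, h]; group
    have h2 := a_mem (by omega) inj apow _ _ h1
    rw [show e - 2 = (i - 2) + (e - i) by omega, pow_add] at h2
    have h3 := Nat.dvd_of_mul_dvd_mul_right (pow_pos hp.pos _) h2
    have h4 := Nat.eq_zero_of_dvd_of_lt h3 (by omega)
    have h5 : s = t := by omega
    subst h5
    exact ⟨inj (mul_right_cancel h), rfl⟩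
  rintro ⟨n, s, hs⟩ ⟨m, t, ht⟩ h
  simp only [Fmap] at h
  rcases le_total s t with hst | hst
  · obtain ⟨rfl, rfl⟩ := key n m s t hst ht h; rfl
  · obtain ⟨rfl, rfl⟩ := key m n t s hst hs h.symm; rfl

theorem card_dom (i : ℕ) (hi : 2 ≤ i) : Nat.card (NN θ × Fin (p ^ (i - 2))) = p ^ (i + 3) := by
  rw [Nat.card_prod, card_NN, Nat.card_fin, ← pow_add]; congr 1; omega

/-- constructing data from cardinality -/
def Data.ofCard (he : 2 ≤ e) (hc : Nat.card P = p ^ (e + 3)) (ι : NN θ →* P) (a : P) (inj : Function.Injective ι)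
    (conj : ∀ n, a * ι n * a⁻¹ = ι (actN θ θ.t n)) (apow : a ^ p ^ (e - 2) = ι (tri θ 1 0 0)) : Data θ e P where
  ι := ι
  a := a
  inj := inj
  conj := conj
  apow := apow
  surj := by
    have hp : p.Prime := Fact.out
    haveI : Finite P := Nat.finite_of_card_ne_zero (by rw [hc]; exact pow_ne_zero _ hp.ne_zero)
    have h := (Nat.bijective_iff_injective_and_card (Fmap ι a e e)).2
      ⟨Fmap_inj he le_rfl inj apow, by rw [hc, card_dom e he]⟩
    intro x
    obtain ⟨⟨n, t⟩, rfl⟩ := h.2 x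
    exact ⟨n, _, rfl⟩

theorem Fmap_surj {i : ℕ} (hi : 2 ≤ i) (hie : i ≤ e) (d : Data θ e P) (n : NN θ) (t : ℕ) (ht : p ^ (e - i) ∣ t) :
    ∃ y, Fmap d.ι d.a i e y = d.ι n * d.a ^ t := by
  have hp : p.Prime := Fact.out
  obtain ⟨s, rfl⟩ := ht
  refine ⟨(n * (tri θ 1 0 0) ^ (s / p ^ (i - 2)), ⟨s % p ^ (i - 2), Nat.mod_lt _ (pow_pos hp.pos _)⟩), ?_⟩
  simp only [Fmap]
  rw [map_mul, map_pow, ← d.apow, mul_assoc, ← pow_mul, ← pow_add]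
  congr 2
  rw [show e - 2 = (i - 2) + (e - i) by omega, pow_add]
  conv_rhs => rw [← Nat.div_add_mod s (p ^ (i - 2))]
  ring

theorem Data.card (d : Data θ e P) (he : 2 ≤ e) : Nat.card P = p ^ (e + 3) := by
  rw [← card_dom (θ := θ) e he]
  symm
  apply Nat.card_eq_of_bijective (Fmap d.ι d.a e e)
  refine ⟨Fmap_inj he le_rfl d.inj d.apow, ?_⟩
  intro x
  obtain ⟨n, t, rfl⟩ := d.surj x
  exact Fmap_surj he le_rfl d n t (by simp)

end
end

section
variable {p : ℕ} [hpF : Fact p.Prime]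

/-- action of `ℤ` -/
noncomputable def phiZ (θ : Par p) : Multiplicative ℤ →* MulAut (NN θ) := zpowersHom _ (alpha θ)

/-- the universal extension -/
abbrev GT (θ : Par p) : Type := NN θ ⋊[phiZ θ] Multiplicative ℤ

section
variable {θ : Par p} {e : ℕ} {P : Type} [Group P] 

theorem conjzpow (d : Data θ e P) (t : ℤ) (n : NN θ) :
    d.a ^ t * d.ι n * (d.a ^ t)⁻¹ = d.ι (((alpha θ : MulAut (NN θ)) ^ t) n) := by
  induction t generalizing n with
  | zero => simp
  | succ t ih =>
    rw [zpow_add, zpow_add, MulAut.mul_apply, ← ih, zpow_one, zpow_one, alpha_apply]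
    change _ = d.a ^ (t:ℤ) * d.ι (actN θ θ.t n) * _
    rw [← d.conj]; group
  | pred t ih =>
    rw [zpow_sub, zpow_sub, MulAut.mul_apply, ← ih, zpow_one, zpow_one]
    have h := d.conj ((alpha θ)⁻¹ n)
    have h2 : actN θ θ.t ((alpha θ)⁻¹ n) = n := by
      change alpha θ ((alpha θ)⁻¹ n) = n
      exact (alpha θ).apply_symm_apply n
    rw [h2] at h
    rw [← h]; group

/-- map from the universal extension -/
noncomputable def Data.hom (d : Data θ e P) : GT θ →* P :=
  SemidirectProduct.lift d.ι (zpowersHom _ d.a) (by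
    intro g
    ext n
    simp only [MonoidHom.comp_apply, MulEquiv.coe_toMonoidHom, MulAut.conj_apply, zpowersHom_apply, phiZ]
    rw [conjzpow])

theorem Data.hom_apply (d : Data θ e P) (x : GT θ) : d.hom x = d.ι x.left * d.a ^ (x.right.toAdd) := by
  simp [Data.hom, SemidirectProduct.lift]

theorem Data.hom_surj (d : Data θ e P) : Function.Surjective d.hom := by
  intro x
  obtain ⟨n, t, rfl⟩ := d.surj x
  refine ⟨⟨n, Multiplicative.ofAdd (t : ℤ)⟩, ?_⟩
  rw [Data.hom_apply]; simp

theorem a_mem_int (he : 2 ≤ e) (d : Data θ e P) (t : ℤ) (n : NN θ) (h : d.a ^ t = d.ι n) : ((p ^ (e - 2) : ℕ) : ℤ) ∣ t := by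
  have hp : p.Prime := Fact.out
  have h1 : d.a ^ (t * (p ^ 2 : ℕ)) = 1 := by
    rw [zpow_mul, zpow_natCast, h, ← map_pow, NN_pow_p2, map_one]
  have h2 := orderOf_dvd_iff_zpow_eq_one.2 h1
  rw [a_orderOf he d.inj d.apow, show p ^ e = p ^ (e - 2) * p ^ 2 by rw [← pow_add]; congr 1; omega] at h2
  push_cast at h2 ⊢
  exact Int.dvd_of_mul_dvd_mul_right (pow_ne_zero _ (by exact_mod_cast hp.ne_zero)) h2

theorem tri_zpow (u : ZMod (p ^ 2)) (k : ℤ) : (tri θ u 0 0) ^ k = tri θ (k * u) 0 0 := by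
  cases k with
  | ofNat k => simp [tri_pow]
  | negSucc k => rw [zpow_negSucc, tri_pow, tri_inv, tri_inj]; simp; ring

theorem Data.hom_eq_one (he : 2 ≤ e) (d : Data θ e P) (x : GT θ) : d.hom x = 1 ↔
    ∃ s : ℤ, x.right.toAdd = (p ^ (e - 2) : ℕ) * s ∧ x.left = tri θ (-s) 0 0 := by
  rw [Data.hom_apply]
  have aux : ∀ s : ℤ, d.a ^ (((p ^ (e - 2) : ℕ) : ℤ) * s) = d.ι (tri θ s 0 0) := by
    intro s
    rw [zpow_mul, zpow_natCast, d.apow, ← map_zpow, tri_zpow]; simp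
  constructor
  · intro h
    have h1 : d.a ^ x.right.toAdd = d.ι x.left⁻¹ := by
      rw [map_inv]; exact (inv_eq_of_mul_eq_one_right h).symm
    obtain ⟨s, hs⟩ := a_mem_int he d _ _ h1
    refine ⟨s, hs, ?_⟩
    rw [hs, aux] at h1
    have := d.inj h1
    rw [← inv_inv x.left, ← this, tri_inv]; simp
  · rintro ⟨s, h1, h2⟩
    rw [h1, h2, aux, ← map_mul, tri_z_mul]
    rw [neg_add_cancel, ← tri_one, map_one]

theorem iso_of_data (he : 2 ≤ e) {P' : Type} [Group P'] (d : Data θ e P) (d' : Data θ e P') : Nonempty (P ≃* P') := by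
  have h : d.hom.ker = d'.hom.ker := by
    ext x
    rw [MonoidHom.mem_ker, MonoidHom.mem_ker, d.hom_eq_one he, d'.hom_eq_one he]
  exact ⟨(QuotientGroup.quotientKerEquivOfSurjective d.hom d.hom_surj).symm.trans
    ((QuotientGroup.quotientMulEquivOfEq h).trans
      (QuotientGroup.quotientKerEquivOfSurjective d'.hom d'.hom_surj))⟩

end

/-- central element to kill -/
noncomputable def zrel (θ : Par p) (e : ℕ) : GT θ := ⟨tri θ (-1) 0 0, Multiplicative.ofAdd ((p ^ (e - 2) : ℕ) : ℤ)⟩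

theorem zrel_central (hp5 : 5 ≤ p) (θ : Par p) {e : ℕ} (he : 4 ≤ e) (x : GT θ) : x * zrel θ e = zrel θ e * x := by
  have h0 : ∀ k : ℤ, ((alpha θ : MulAut (NN θ)) ^ k) (tri θ (-1) 0 0) = tri θ (-1) 0 0 := by
    intro k
    have h1 : (alpha θ : MulAut (NN θ)) (tri θ (-1) 0 0) = tri θ (-1) 0 0 := by
      rw [alpha_apply, act_tri]; simp
    have := (MulAction.stabilizer (MulAut (NN θ)) (tri θ (-1) 0 0)).zpow_mem (x := alpha θ) h1 k
    exact this
  have h2 : phiZ θ (Multiplicative.ofAdd ((p ^ (e - 2) : ℕ) : ℤ)) = 1 := by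
    simp only [phiZ, zpowersHom_apply, toAdd_ofAdd, zpow_natCast]
    exact alpha_p2 hp5 θ _ (pow_dvd_pow p (by omega))
  ext1
  · simp only [zrel, SemidirectProduct.mul_left, h2, MulAut.one_apply]
    simp only [phiZ, zpowersHom_apply, h0]
    obtain ⟨u, v, c, h⟩ := tri_surj θ x.left
    rw [h, tri_mul_z, tri_z_mul, add_comm]
  · simp only [SemidirectProduct.mul_right]; exact mul_comm _ _

instance zrel_normal [h5 : Fact (5 ≤ p)] (θ : Par p) {e : ℕ} [he : Fact (4 ≤ e)] : (Subgroup.zpowers (zrel θ e)).Normal := by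
  constructor
  rintro _ ⟨k, rfl⟩ g
  have h : Commute g (zrel θ e) := zrel_central h5.out θ he.out g
  have h2 := h.zpow_right k
  simp only
  rw [h2.eq, mul_inv_cancel_right]
  exact ⟨k, rfl⟩

/-- The group. -/
abbrev QQ (θ : Par p) (e : ℕ) : Type := GT θ ⧸ Subgroup.zpowers (zrel θ e)

theorem zrel_zpow (hp5 : 5 ≤ p) (θ : Par p) {e : ℕ} (he : 4 ≤ e) (k : ℤ) : (zrel θ e) ^ k =
    (SemidirectProduct.inl (tri θ (-k) 0 0)) * SemidirectProduct.inr (Multiplicative.ofAdd (((p ^ (e - 2) : ℕ) : ℤ) * k)) := by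
  have h1 : zrel θ e = SemidirectProduct.inl (tri θ (-1) 0 0) * SemidirectProduct.inr (Multiplicative.ofAdd ((p ^ (e - 2) : ℕ) : ℤ)) := by
    rw [zrel, SemidirectProduct.mk_eq_inl_mul_inr]
  have h2 : Commute (SemidirectProduct.inl (tri θ (-1) 0 0) : GT θ) (zrel θ e) := zrel_central hp5 θ he _
  have h3 : SemidirectProduct.inr (Multiplicative.ofAdd ((p ^ (e - 2) : ℕ) : ℤ)) = (SemidirectProduct.inl (tri θ (-1) 0 0) : GT θ)⁻¹ * zrel θ e := by
    rw [h1]; group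
  have h4 : Commute (SemidirectProduct.inl (tri θ (-1) 0 0) : GT θ) (SemidirectProduct.inr (Multiplicative.ofAdd ((p ^ (e - 2) : ℕ) : ℤ))) := by
    rw [h3]; exact ((Commute.refl _).inv_right).mul_right h2
  have h5 : (Multiplicative.ofAdd ((p ^ (e - 2) : ℕ) : ℤ)) ^ k = Multiplicative.ofAdd (((p ^ (e - 2) : ℕ) : ℤ) * k) := by
    rw [← ofAdd_zsmul, smul_eq_mul, mul_comm]
  have h6 : (k : ZMod (p ^ 2)) * -1 = -k := by ring
  rw [h1, h4.mul_zpow, ← map_zpow, ← map_zpow, tri_zpow, h5, h6]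

/-- existence -/
noncomputable def dataQQ [h5 : Fact (5 ≤ p)] (θ : Par p) {e : ℕ} [he : Fact (4 ≤ e)] : Data θ e (QQ θ e) :=
  have hp : p.Prime := Fact.out
  have apow : (QuotientGroup.mk (SemidirectProduct.inr (Multiplicative.ofAdd (1:ℤ))) : QQ θ e) ^ p ^ (e - 2) =
      (QuotientGroup.mk' (Subgroup.zpowers (zrel θ e))).comp SemidirectProduct.inl (tri θ 1 0 0) := by
    rw [← QuotientGroup.mk_pow, MonoidHom.comp_apply, QuotientGroup.mk'_apply, eq_comm, QuotientGroup.eq]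
    rw [Subgroup.mem_zpowers_iff]
    refine ⟨1, ?_⟩
    have h7 : (Multiplicative.ofAdd (1 : ℤ)) ^ (p ^ (e - 2)) = Multiplicative.ofAdd (((p ^ (e - 2) : ℕ) : ℤ) * 1) := by
      rw [← ofAdd_nsmul, nsmul_eq_mul]
    rw [zrel_zpow h5.out θ he.out, ← map_inv, ← map_pow, h7, tri_inv]
    simp
  have inj : Function.Injective ((QuotientGroup.mk' (Subgroup.zpowers (zrel θ e))).comp SemidirectProduct.inl) := by
    rw [injective_iff_map_eq_one]
    intro n h
    rw [MonoidHom.comp_apply, QuotientGroup.mk'_apply, QuotientGroup.eq_one_iff, Subgroup.mem_zpowers_iff] at h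
    obtain ⟨k, hk⟩ := h
    rw [zrel_zpow h5.out θ he.out] at hk
    have h1 := congrArg SemidirectProduct.right hk
    have h2 := congrArg SemidirectProduct.left hk
    rw [SemidirectProduct.mul_right, SemidirectProduct.right_inl, SemidirectProduct.right_inr,
      SemidirectProduct.right_inl, one_mul] at h1
    rw [SemidirectProduct.mul_left, SemidirectProduct.left_inl, SemidirectProduct.left_inr,
      SemidirectProduct.left_inl, map_one, mul_one] at h2
    have h3 : k = 0 := by
      have h4 : ((p ^ (e - 2) : ℕ) : ℤ) * k = 0 := congrArg Multiplicative.toAdd h1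
      rcases mul_eq_zero.1 h4 with h | h
      · exact absurd (by exact_mod_cast h) (pow_ne_zero (e - 2) hp.ne_zero)
      · exact h
    rw [← h2, h3]
    simp [tri_one]
  { ι := (QuotientGroup.mk' _).comp SemidirectProduct.inl
    a := QuotientGroup.mk (SemidirectProduct.inr (Multiplicative.ofAdd 1))
    inj := inj
    conj := by
      intro n
      rw [MonoidHom.comp_apply, MonoidHom.comp_apply, QuotientGroup.mk'_apply, QuotientGroup.mk'_apply, 
        ← QuotientGroup.mk_inv, ← QuotientGroup.mk_mul, ← QuotientGroup.mk_mul]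
      congr 1
      rw [← map_inv, ← SemidirectProduct.inl_aut]
      congr 1
    apow := apow
    surj := by
      intro x
      induction x using QuotientGroup.induction_on with | _ x => 
      have hfin : IsOfFinOrder (QuotientGroup.mk (SemidirectProduct.inr (Multiplicative.ofAdd (1:ℤ))) : QQ θ e) := by
        have := a_orderOf (le_trans (by norm_num) he.out) inj apow
        rw [← orderOf_pos_iff, this]
        exact pow_pos hp.pos _
      have h1 : (QuotientGroup.mk (SemidirectProduct.inr (Multiplicative.ofAdd (1:ℤ))) : QQ θ e) ^ x.right.toAdd ∈ 
        Submonoid.powers (QuotientGroup.mk (SemidirectProduct.inr (Multiplicative.ofAdd (1:ℤ))) : QQ θ e) := by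
        rw [hfin.mem_powers_iff_mem_zpowers]
        exact Subgroup.zpow_mem_zpowers _ _
      obtain ⟨t, ht⟩ := h1
      simp only at ht
      refine ⟨x.left, t, ?_⟩
      rw [ht, MonoidHom.comp_apply, QuotientGroup.mk'_apply, ← QuotientGroup.mk_zpow, ← QuotientGroup.mk_mul, ← map_zpow,
        ← ofAdd_zsmul]
      simp }

end

section
variable {p : ℕ} [hpF : Fact p.Prime]

/-- powers in the twisted product -/
def PPow (θ : Par p) (t : Act p) (u v : ZMod (p ^ 2)) (c : ZMod p) (m : ℕ) : NN θ :=
  tri θ (m * u + (m.choose 2 : ℕ) * (t.x * v) + pm p ((m.choose 2 : ℕ) * (t.f * c) +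
      (m.choose 3 : ℕ) * (rd p t.x * (t.y * rd p v + t.g * c) + t.f * t.w * rd p v) +
      (m.choose 4 : ℕ) * (rd p t.x * t.g * t.w * rd p v) + ((m + 1).choose 3 : ℕ) * (θ.i * t.w * rd p v ^ 2)))
    (m * v + pm p ((m.choose 2 : ℕ) * (t.y * rd p v + t.g * c) + (m.choose 3 : ℕ) * (t.g * t.w * rd p v)
      + ((m + 1).choose 3 : ℕ) * (θ.j * t.w * rd p v ^ 2)))
    (m * c + (m.choose 2 : ℕ) * (t.w * rd p v))

theorem choose2_id (m : ℕ) : ((m * m : ℕ) : ZMod p) = (m.choose 2 : ℕ) + ((m + 1).choose 2 : ℕ) := by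
  norm_cast
  congr 1
  induction m with
  | zero => rfl
  | succ m ih =>
    rw [Nat.choose_succ_succ' m 1, Nat.choose_succ_succ' (m + 1) 1]
    simp at *
    nlinarith

theorem PPow_succ (θ : Par p) (t : Act p) (u v : ZMod (p ^ 2)) (c : ZMod p) (m : ℕ) :
    PPow θ t u v c m * actN θ (actPow t m) (tri θ u v c) = PPow θ t u v c (m + 1) := by
  have c2 : (m + 1).choose 2 = m + m.choose 2 := by
    rw [Nat.choose_succ_succ' m 1]; simp
  have c3 : (m + 1).choose 3 = m.choose 2 + m.choose 3 := by
    rw [Nat.choose_succ_succ' m 2]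
  have c4 : (m + 1).choose 4 = m.choose 3 + m.choose 4 := by
    rw [Nat.choose_succ_succ' m 3]
  have c5 : (m + 1 + 1).choose 3 = (m + 1).choose 2 + (m + 1).choose 3 := by
    rw [Nat.choose_succ_succ' (m + 1) 2]
  have key := choose2_id (p := p) m
  rw [act_tri, PPow, PPow, tri_mul, tri_inj]
  have hcc : (rd p (m * v + pm p ((m.choose 2 : ℕ) * (t.y * rd p v + t.g * c) + (m.choose 3 : ℕ) * (t.g * t.w * rd p v)
      + ((m + 1).choose 3 : ℕ) * (θ.j * t.w * rd p v ^ 2)))) * (c + (actPow t m).w * rd p v) - 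
      (m * c + (m.choose 2 : ℕ) * (t.w * rd p v)) * rd p (v + pm p ((actPow t m).y * rd p v + (actPow t m).g * c)) 
      = ((m + 1).choose 2 : ℕ) * (t.w * rd p v ^ 2) := by
    simp only [map_add, rd_pm, map_mul, map_natCast, actPow]
    push_cast at key
    linear_combination (t.w * rd p v ^ 2) * key
  rw [hcc]
  refine ⟨?_, ?_, ?_⟩
  · rw [c5]
    simp only [actPow, c2, c3, c4]
    push_cast
    simp only [mul_add, add_mul, pm_mul, map_add]
    ring_nf
  · rw [c5]
    simp only [actPow, c2, c3, c4]
    push_cast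
    simp only [mul_add, add_mul, pm_mul, map_add]
    ring_nf
  · simp only [actPow, c2, c3, c4]
    push_cast
    ring

theorem PPow_p (hp5 : 5 ≤ p) (θ : Par p) (t : Act p) (u v : ZMod (p ^ 2)) (c : ZMod p) :
    PPow θ t u v c p = tri θ (pm p (rd p u + ((p - 1) / 2 : ℕ) * (rd p t.x * rd p v))) (pm p (rd p v)) 0 := by
  have hp : p.Prime := Fact.out
  have d : ∀ r, r ≠ 0 → r < p → ((p.choose r : ℕ) : ZMod p) = 0 := by
    intro r hr hrp
    rw [CharP.cast_eq_zero_iff (ZMod p) p]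
    exact hp.dvd_choose_self hr hrp
  have d2 := d 2 (by norm_num) (by omega)
  have d3 := d 3 (by norm_num) (by omega)
  have d4 := d 4 (by norm_num) (by omega)
  have d5 : (((p + 1).choose 3 : ℕ) : ZMod p) = 0 := by
    rw [Nat.choose_succ_succ' p 2]; push_cast; rw [d2, d3, add_zero]
  have e2 : ((p.choose 2 : ℕ) : ZMod (p ^ 2)) = p * ((p - 1) / 2 : ℕ) := by
    rw [← Nat.cast_mul]; congr 1
    rw [Nat.choose_two_right, Nat.mul_div_assoc]
    have := hp.eq_two_or_odd
    omega
  rw [PPow, tri_inj, d2, d3, d4, d5, e2]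
  refine ⟨?_, ?_, ?_⟩
  · rw [← map_mul, ← map_natCast (rd p), ← map_mul, ← map_add (rd p), pm_rd]; simp; ring
  · rw [pm_rd]; simp
  · simp

section
variable {θ : Par p} {e : ℕ} {P : Type} [Group P] 

theorem Data.pow_eq (d : Data θ e P) (u v : ZMod (p ^ 2)) (c : ZMod p) (t m : ℕ) :
    (d.ι (tri θ u v c) * d.a ^ t) ^ m = d.ι (PPow θ (actPow θ.t t) u v c m) * d.a ^ (t * m) := by
  induction m with
  | zero => 
    have : PPow θ (actPow θ.t t) u v c 0 = 1 := by rw [PPow, tri_one, tri_inj, show Nat.choose (0 + 1) 3 = 0 from rfl]; simp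
    rw [this]; simp
  | succ m ih =>
    rw [pow_succ, ih, ← PPow_succ, mul_assoc, ← mul_assoc _ (d.ι _), conjpow d.conj, act_add, map_mul, mul_add, pow_add]
    simp only [mul_assoc, mul_one]

theorem Data.pow_p (hp5 : 5 ≤ p) (d : Data θ e P) (u v : ZMod (p ^ 2)) (c : ZMod p) (t : ℕ) :
    (d.ι (tri θ u v c) * d.a ^ t) ^ p = d.ι (tri θ (pm p (rd p u + ((p - 1) / 2 : ℕ) * (t * rd p θ.t.x * rd p v)))
      (pm p (rd p v)) 0) * d.a ^ (t * p) := by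
  rw [d.pow_eq, PPow_p hp5, actPow_rdx]

theorem Data.pow_pp (hp5 : 5 ≤ p) (d : Data θ e P) (n : NN θ) (t i : ℕ) (hi : 2 ≤ i) :
    (d.ι n * d.a ^ t) ^ p ^ i = d.a ^ (t * p ^ i) := by
  obtain ⟨u, v, c, rfl⟩ := tri_surj θ n
  obtain ⟨i, rfl⟩ : ∃ k, i = k + 2 := ⟨i - 2, by omega⟩
  rw [show i + 2 = 2 + i by ring, pow_add, pow_mul, pow_two, pow_mul, d.pow_p hp5, d.pow_p hp5]
  simp only [rd_pm]
  simp only [mul_zero, add_zero, map_zero]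
  rw [← tri_one, map_one, one_mul, ← pow_mul]
  congr 1; ring

theorem Data.fix (d : Data θ e P) (A B : ZMod p) (t : ℕ) : 
    d.a ^ (t * p) * d.ι (tri θ (pm p A) (pm p B) 0) = d.ι (tri θ (pm p A) (pm p B) 0) * d.a ^ (t * p) := by
  rw [conjpow d.conj, act_tri]
  simp only [mul_pm, rd_pm, actPow_rdx]
  push_cast
  simp

theorem Data.regular (hp5 : 5 ≤ p) (d : Data θ e P) : IsRegularPGroup p P := by
  have hp : p.Prime := Fact.out
  intro g h
  obtain ⟨n, t, hg⟩ := d.surj g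
  obtain ⟨m, s, hh⟩ := d.surj h
  obtain ⟨u, v, c, rfl⟩ := tri_surj θ n
  obtain ⟨u', v', c', rfl⟩ := tri_surj θ m
  have prod : ∀ (u v : ZMod (p ^ 2)) (c : ZMod p) (u' v' : ZMod (p ^ 2)) (c' : ZMod p) (t s : ℕ), ∃ U V C,
     d.ι (tri θ u v c) * d.a ^ t * (d.ι (tri θ u' v' c') * d.a ^ s) = d.ι (tri θ U V C) * d.a ^ (t + s) ∧
     rd p U = rd p u + rd p u' + t * rd p θ.t.x * rd p v' ∧ rd p V = rd p v + rd p v' := by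
    intro u v c u' v' c' t s
    rw [mul_assoc, ← mul_assoc _ (d.ι _), conjpow d.conj, act_tri, ← mul_assoc, ← mul_assoc, ← map_mul, tri_mul, mul_assoc, ← pow_add]
    refine ⟨_, _, _, rfl, ?_, ?_⟩
    · simp only [map_add, map_mul, rd_pm, actPow_rdx]; ring
    · simp only [map_add, map_mul, rd_pm, actPow_rdx]; ring
  obtain ⟨U, V, C, h1, hU, hV⟩ := prod u v c u' v' c' t s
  obtain ⟨U', V', C', h2, hU', hV'⟩ := prod u' v' c' u v c s t
  rw [← hg, ← hh] at h1 h2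
  set kk := g * h * g⁻¹ * h⁻¹ with hX
  have hk : kk = d.ι (tri θ U V C * (tri θ U' V' C')⁻¹) := by
    rw [show kk = (g * h) * (h * g)⁻¹ by rw [hX]; group, h1, h2, map_mul, map_inv, add_comm s t]
    group
  have hkp : (kk ^ ((p - 1) / 2)) ^ p = d.ι (tri θ (pm p (((p - 1) / 2 : ℕ) * (rd p θ.t.x * (t * rd p v' - s * rd p v)))) 0 0) := by
    rw [hk, ← pow_mul, ← map_pow, tri_inv, tri_mul, tri_pow]
    congr 1
    rw [tri_inj]
    push_cast
    refine ⟨?_, ?_, ?_⟩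
    · rw [mul_comm _ (p : ZMod (p ^ 2)), mul_assoc, ← pm_rd]
      simp only [map_mul, map_add, map_neg, rd_pm, hU, hU', map_natCast]
      congr 1; ring
    · rw [mul_comm _ (p : ZMod (p ^ 2)), mul_assoc, ← pm_rd]
      simp only [map_mul, map_add, map_neg, rd_pm, hV, hV', map_natCast]
      rw [← map_zero (pm p)]
      congr 1; ring
    · simp
  refine ⟨(kk ^ ((p - 1) / 2)) ^ p, Subgroup.subset_closure ⟨_, ?_, rfl⟩, ?_⟩
  · apply Subgroup.pow_mem
    rw [hX]
    apply Subgroup.commutator_mem_commutator <;> apply Subgroup.subset_closure <;> simp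
  · rw [hkp, h1, hg, hh, d.pow_p hp5, d.pow_p hp5, d.pow_p hp5]
    have f1 := d.fix (rd p u' + ((p - 1) / 2 : ℕ) * (s * rd p θ.t.x * rd p v')) (rd p v') t
    have f2 := d.fix (((p - 1) / 2 : ℕ) * (rd p θ.t.x * (t * rd p v' - s * rd p v))) 0 (t + s)
    rw [map_zero] at f2
    rw [mul_assoc, ← mul_assoc _ (d.ι _), f1, mul_assoc _ _ (d.ι _), f2]
    simp only [← mul_assoc]
    rw [← map_mul, ← map_mul, mul_assoc, ← pow_add, add_mul]
    congr 2
    rw [tri_mul, tri_mul, tri_inj]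
    simp only [rd_pm]
    refine ⟨?_, ?_, ?_⟩
    · simp only [mul_zero, zero_mul, sub_zero, map_zero, add_zero, ← map_add]
      congr 1
      rw [hU, hV]
      have hkap : (2 : ZMod p) * ((p - 1) / 2 : ℕ) = -1 := by
        have : 2 * ((p - 1) / 2) + 1 = p := by have := hp.eq_two_or_odd; omega
        have h2 := congrArg (Nat.cast : ℕ → ZMod p) this
        push_cast at h2
        rw [CharP.cast_eq_zero (ZMod p) p] at h2
        linear_combination h2
      push_cast
      linear_combination (- t * rd p θ.t.x * rd p v') * hkap
    · simp [hV]
    · simp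

theorem Data.cnt1 (hp5 : 5 ≤ p) (he : 2 ≤ e) (d : Data θ e P) : cnt p P 1 = p ^ 3 := by
  have hp : p.Prime := Fact.out
  have h3 : Nat.card (ZMod p × ZMod p × ZMod p) = p ^ 3 := by
    rw [Nat.card_prod, Nat.card_prod, Nat.card_zmod]; ring
  rw [cnt, ← h3]
  symm
  have hpw : ∀ u v c, (d.ι (tri θ u v c)) ^ p = d.ι (tri θ (pm p (rd p u)) (pm p (rd p v)) 0) := by
    intro u v c
    have := d.pow_p hp5 u v c 0
    simpa using this
  apply Nat.card_eq_of_bijective (fun x => (⟨d.ι (tri θ (pm p x.1) (pm p x.2.1) x.2.2), by 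
    rw [pow_one, hpw, rd_pm, rd_pm, map_zero, ← tri_one, map_one]⟩ : {x : P // x ^ p ^ 1 = 1}))
  constructor
  · rintro ⟨a, b, c⟩ ⟨a', b', c'⟩ h
    have h := d.inj (congrArg Subtype.val h)
    rw [tri_inj] at h
    simp only at h
    rw [pm_inj h.1, pm_inj h.2.1, h.2.2]
  · rintro ⟨x, hx⟩
    obtain ⟨n, t, rfl⟩ := d.surj x
    have h2 : d.a ^ (t * p ^ 2) = 1 := by
      rw [← d.pow_pp hp5 n t 2 le_rfl, pow_two, pow_mul]
      rw [pow_one] at hx; rw [hx, one_pow]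
    have h3 := orderOf_dvd_of_pow_eq_one h2
    rw [a_orderOf he d.inj d.apow, show p ^ e = p ^ (e - 2) * p ^ 2 by rw [← pow_add]; congr 1; omega] at h3
    obtain ⟨s, hs⟩ := Nat.dvd_of_mul_dvd_mul_right (pow_pos hp.pos 2) h3
    have h4 : ∃ m, d.ι n * d.a ^ t = d.ι m := ⟨n * (tri θ 1 0 0) ^ s, by rw [hs, pow_mul, d.apow, map_mul, map_pow]⟩
    obtain ⟨m, hm⟩ := h4
    obtain ⟨u, v, c, rfl⟩ := tri_surj θ m
    rw [hm, pow_one, hpw, ← map_one d.ι] at hx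
    have h5 := d.inj hx
    rw [tri_one, tri_inj, pm_eq_zero, pm_eq_zero, rd_eq_zero, rd_eq_zero] at h5
    obtain ⟨⟨a, rfl⟩, ⟨b, rfl⟩, -⟩ := h5
    exact ⟨(a, b, c), Subtype.ext hm.symm⟩

theorem Data.cnti (hp5 : 5 ≤ p) (d : Data θ e P) (i : ℕ) (hi : 2 ≤ i) (hie : i ≤ e) : cnt p P i = p ^ (i + 3) := by
  have hp : p.Prime := Fact.out
  rw [cnt, ← card_dom (θ := θ) i hi]
  symm
  have hO := a_orderOf (show 2 ≤ e by omega) d.inj d.apow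
  have hee : p ^ e = p ^ (e - i) * p ^ i := by rw [← pow_add]; congr 1; omega
  apply Nat.card_eq_of_bijective (fun x => (⟨Fmap d.ι d.a i e x, by
    rw [Fmap, d.pow_pp hp5 _ _ _ hi, mul_assoc, ← hee, mul_comm, pow_mul, ← hO, pow_orderOf_eq_one, one_pow]⟩ : {x : P // x ^ p ^ i = 1}))
  constructor
  · intro x y h
    exact Fmap_inj hi hie d.inj d.apow (congrArg Subtype.val h)
  · rintro ⟨x, hx⟩
    obtain ⟨n, t, rfl⟩ := d.surj x
    have h2 := hx
    rw [d.pow_pp hp5 _ _ _ hi] at h2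
    have h3 := orderOf_dvd_of_pow_eq_one h2
    rw [hO, hee] at h3
    obtain ⟨y, hy⟩ := Fmap_surj hi hie d n t (Nat.dvd_of_mul_dvd_mul_right (pow_pos hp.pos i) h3)
    exact ⟨y, Subtype.ext hy⟩

theorem Data.isPGroup (he : 2 ≤ e) (d : Data θ e P) : IsPGroup p P := IsPGroup.of_card (d.card he)

theorem Data.finite (he : 2 ≤ e) (d : Data θ e P) : Finite P := 
  Nat.finite_of_card_ne_zero (by rw [d.card he]; exact pow_ne_zero _ hpF.out.ne_zero)

theorem Data.type (hp5 : 5 ≤ p) (he : 4 ≤ e) (d : Data θ e P) : HasTypeInvariants p P (e :: [2, 1]) := by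
  haveI := d.finite (by omega)
  apply type_of_cnt (d.isPGroup (by omega)) (d.regular hp5) e (by omega) (d.cnt1 hp5 (by omega)) (d.cnti hp5)
  intro i hi
  rw [← d.card (by omega), cnt]
  apply Nat.card_congr
  refine Equiv.subtypeUnivEquiv ?_
  intro x
  obtain ⟨n, t, rfl⟩ := d.surj x
  rw [d.pow_pp hp5 _ _ _ (by omega), show i = e + (i - e) by omega, pow_add, ← a_orderOf (show 2 ≤ e by omega) d.inj d.apow,
    mul_comm, mul_assoc, pow_mul, pow_orderOf_eq_one, one_pow]

end
end

theorem comm_of_relIndex {p : ℕ} [hpF : Fact p.Prime] {G : Type} [Group G] [Finite G] (hG : IsPGroup p G)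
    (H L : Subgroup G) (hH : H.Normal) (hL : L.Normal) (hidx : H.relIndex L = p) (x : G) (hx : x ∈ L) (g : G) :
    g * x * g⁻¹ * x⁻¹ ∈ H := by
  have hp : p.Prime := Fact.out
  set K : Subgroup (G ⧸ H) := L.map (QuotientGroup.mk' H) with hK
  haveI hKn : K.Normal := hL.map _ (QuotientGroup.mk'_surjective H)
  have hcard : Nat.card K = p := by
    rw [hK, ← Subgroup.relIndex_ker, QuotientGroup.ker_mk', hidx]
  have hQ : IsPGroup p (ConjAct (G ⧸ H)) := hG.to_quotient H
  obtain ⟨y, hy, hy1⟩ := hQ.exists_fixed_point_of_prime_dvd_card_of_fixed_point K (by rw [hcard])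
    (a := 1) (by rw [MulAction.mem_fixedPoints]; intro m; exact smul_one m)
  rw [MulAction.mem_fixedPoints] at hy
  have hyz : Subgroup.zpowers y = ⊤ := by
    haveI : Fact (Nat.card K).Prime := ⟨by rw [hcard]; exact hp⟩
    rcases (Subgroup.zpowers y).eq_bot_or_eq_top_of_prime_card with h | h
    · rw [Subgroup.zpowers_eq_bot] at h; exact absurd h.symm hy1
    · exact h
  have hxK : (x : G ⧸ H) ∈ K := ⟨x, hx, rfl⟩
  have : (⟨x, hxK⟩ : K) ∈ Subgroup.zpowers y := by rw [hyz]; trivial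
  obtain ⟨k, hk⟩ := this
  have h1 : ConjAct.toConjAct (g : G ⧸ H) • (⟨x, hxK⟩ : K) = ⟨x, hxK⟩ := by
    rw [← hk]; simp only; rw [smul_zpow', hy]
  have h2 := congrArg Subtype.val h1
  rw [ConjAct.Subgroup.val_conj_smul, ConjAct.smul_def, ConjAct.ofConjAct_toConjAct] at h2
  rw [← QuotientGroup.eq_one_iff]
  rw [QuotientGroup.mk_mul, QuotientGroup.mk_mul, QuotientGroup.mk_mul, QuotientGroup.mk_inv, QuotientGroup.mk_inv]
  simp only at h2
  rw [h2, mul_inv_cancel]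

section
variable {p : ℕ} [hpF : Fact p.Prime]

/-- exponents in `ZMod` -/
def zp {G : Type} [Group G] {m : ℕ} (g : G) (u : ZMod m) : G := g ^ (ZMod.cast u : ℤ)

theorem zp_int {G : Type} [Group G] {m : ℕ} (g : G) (hg : g ^ m = 1) (k : ℤ) : zp g (k : ZMod m) = g ^ k := by
  rw [zp, ZMod.coe_intCast]
  conv_rhs => rw [← Int.emod_add_mul_ediv k m, zpow_add, zpow_mul, zpow_natCast, hg, one_zpow, mul_one]


theorem exists_iota (θ : Par p) {G : Type} [Group G] (z b c : G) (i j : ℤ) (hi : θ.i = i) (hj : θ.j = j)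
    (hz : z ^ p ^ 2 = 1) (hb : b ^ p ^ 2 = 1) (hc : c ^ p = 1) (zc : ∀ x, z * x = x * z)
    (bc : ∀ x, b ^ p * x = x * b ^ p) (hd : b * c = (z ^ (p * i) * b ^ (p * j)) ^ 2 * c * b) :
    ∃ ι : NN θ →* G, ι (tri θ 1 0 0) = z ∧ ι (tri θ 0 1 0) = b ∧ ι (tri θ 0 0 1) = c := by
  set d := z ^ (p * i) * b ^ (p * j) with hdd
  have zcC : z ∈ Subgroup.center G := by rw [Subgroup.mem_center_iff]; intro g; exact (zc g).symm
  have bcC : b ^ p ∈ Subgroup.center G := by rw [Subgroup.mem_center_iff]; intro g; exact (bc g).symm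
  have dC : d ∈ Subgroup.center G := by
    apply Subgroup.mul_mem
    · exact Subgroup.zpow_mem _ zcC _
    · rw [zpow_mul, zpow_natCast]; exact Subgroup.zpow_mem _ bcC _
  have dp : d ^ p = 1 := by
    have hcm : Commute (z ^ (p * i)) (b ^ (p * j)) := (show Commute z b from zc b).zpow_zpow _ _
    rw [hdd, hcm.mul_pow, ← zpow_natCast, ← zpow_natCast, ← zpow_mul, ← zpow_mul]
    rw [show (p * i * p : ℤ) = ((p ^ 2 : ℕ) : ℤ) * i by push_cast; ring, 
      show (p * j * p : ℤ) = ((p ^ 2 : ℕ) : ℤ) * j by push_cast; ring, zpow_mul, zpow_mul, zpow_natCast, zpow_natCast, hz, hb]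
    simp
  have com : ∀ v γ : ℤ, c ^ γ * b ^ v = d ^ (-2 * (v * γ)) * (b ^ v * c ^ γ) := by
    intro v γ
    have dc2 : ∀ (k : ℤ) (x : G), Commute (d ^ k) x := fun k x =>
      ((Subgroup.mem_center_iff.1 (Subgroup.zpow_mem _ dC k)) x).symm
    have h1 : c⁻¹ * b * c = d ^ (2 : ℤ) * b := by
      rw [mul_assoc, hd, ← zpow_natCast, mul_assoc, ← mul_assoc, ← (dc2 _ c⁻¹).eq]; push_cast; group
    have h2 : c⁻¹ * b ^ v * c = d ^ (2 * v) * b ^ v := by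
      have := conj_zpow (i := v) (a := c⁻¹) (b := b)
      rw [inv_inv] at this
      rw [← this, h1, (dc2 _ b).mul_zpow, ← zpow_mul]
    have h3 : b ^ v * c * (b ^ v)⁻¹ = d ^ (2 * v) * c := by
      have : b ^ v * c = c * (d ^ (2 * v) * b ^ v) := by rw [← h2]; group
      rw [this, ← mul_assoc, ← (dc2 _ c).eq]; group
    have h4 : b ^ v * c ^ γ * (b ^ v)⁻¹ = d ^ (2 * v * γ) * c ^ γ := by
      rw [← conj_zpow, h3, (dc2 _ c).mul_zpow, ← zpow_mul]
    have h5 : b ^ v * c ^ γ = d ^ (2 * v * γ) * (c ^ γ * b ^ v) := by rw [← mul_assoc, ← h4]; group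
    rw [h5, ← mul_assoc, ← zpow_add]; ring_nf; simp
  have key : ∀ u v γ u' v' γ' : ℤ, (d ^ (-(v * γ)) * z ^ u * b ^ v * c ^ γ) * (d ^ (-(v' * γ')) * z ^ u' * b ^ v' * c ^ γ')
      = d ^ (-((v + v') * (γ + γ'))) * z ^ (u + u' + p * (i * (v * γ' - γ * v'))) * b ^ (v + v' + p * (j * (v * γ' - γ * v'))) * c ^ (γ + γ') := by
    intro u v γ u' v' γ'
    have dc2 : ∀ (k : ℤ) (x : G), d ^ k * x = x * d ^ k := fun k x =>
      ((Subgroup.mem_center_iff.1 (Subgroup.zpow_mem _ dC k)) x).symm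
    have zc2 : ∀ (k : ℤ) (x : G), z ^ k * x = x * z ^ k := fun k x =>
      ((Subgroup.mem_center_iff.1 (Subgroup.zpow_mem _ zcC k)) x).symm
    have e1 : z ^ (p * (i * (v * γ' - γ * v')) : ℤ) * b ^ (p * (j * (v * γ' - γ * v')) : ℤ) = d ^ (v * γ' - γ * v') := by
      have hcm : Commute (z ^ (p * i)) (b ^ (p * j)) := (show Commute z b from zc b).zpow_zpow _ _
      rw [hdd, hcm.mul_zpow, ← zpow_mul, ← zpow_mul]; ring_nf
    have e2 : z ^ (u + u' + p * (i * (v * γ' - γ * v'))) * b ^ (v + v' + p * (j * (v * γ' - γ * v')))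
        = d ^ (v * γ' - γ * v') * (z ^ u * z ^ u' * (b ^ v * b ^ v')) := by
      rw [← e1, zpow_add z, zpow_add z, add_comm (v + v'), zpow_add b, zpow_add b, mul_assoc, ← mul_assoc (z ^ _) (b ^ _), e1,
        ← mul_assoc, ← dc2]
      simp only [mul_assoc]
    calc _ = d ^ (-(v * γ)) * d ^ (-(v' * γ')) * (z ^ u * z ^ u') * (b ^ v * (c ^ γ * b ^ v') * c ^ γ') := by
            have : z ^ u * b ^ v * c ^ γ * (d ^ (-(v' * γ')) * z ^ u') = (d ^ (-(v' * γ')) * z ^ u') * (z ^ u * b ^ v * c ^ γ) := by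
              rw [mul_assoc (d ^ _), zc2 u' (z ^ u * b ^ v * c ^ γ), dc2, dc2]; simp only [mul_assoc]
            calc _ = d ^ (-(v * γ)) * (z ^ u * b ^ v * c ^ γ * (d ^ (-(v' * γ')) * z ^ u')) * b ^ v' * c ^ γ' := by
                  simp only [mul_assoc]
              _ = _ := by 
                rw [this, zc2 u (z ^ u')]; simp only [mul_assoc]
      _ = d ^ (-(v * γ)) * d ^ (-(v' * γ')) * d ^ (-2 * (v' * γ)) * ((z ^ u * z ^ u') * (b ^ v * b ^ v') * (c ^ γ * c ^ γ')) := by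
            have hc : ∀ (k : ℤ) (X Y : G), X * (d ^ k * Y) = d ^ k * (X * Y) := fun k X Y => by
              rw [← mul_assoc, ← dc2, mul_assoc]
            rw [com, hc, mul_assoc (d ^ (-2 * (v' * γ))), hc]
            simp only [mul_assoc]
            rw [hc (-2 * (v' * γ)) (d ^ (-(v' * γ'))), hc (-2 * (v' * γ)) (d ^ (-(v * γ)))]
      _ = _ := by
            rw [mul_assoc (d ^ (-((v + v') * (γ + γ')))), e2, zpow_add c, ← zpow_add, ← zpow_add, ← mul_assoc (d ^ (-((v + v') * (γ + γ')))), ← zpow_add d, mul_assoc (d ^ _) (_ * (b ^ v * b ^ v'))]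
            congr 2
            ring
  let f : NN θ → G := fun n => zp d (-(rd p (A3.v n) * A3.c n)) * zp z (A3.u n) * zp b (A3.v n) * zp c (A3.c n)
  have fint : ∀ u v γ : ℤ, f (tri θ u v γ) = d ^ (-(v * γ)) * z ^ u * b ^ v * c ^ γ := by
    intro u v γ
    change zp d (-(rd p (v : ZMod (p ^ 2)) * (γ : ZMod p))) * zp z (u : ZMod (p ^ 2)) * zp b (v : ZMod (p ^ 2)) * zp c (γ : ZMod p) = _
    rw [zp_int z hz, zp_int b hb, zp_int c hc, rd_intCast, show (-((v : ZMod p) * (γ : ZMod p))) = ((-(v * γ) : ℤ) : ZMod p) by push_cast; ring,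
      zp_int d dp]
  have fint2 : ∀ u v γ k : ℤ, f (tri θ u ((v + p * k : ℤ) : ZMod (p ^ 2)) γ) = d ^ (-(v * γ)) * z ^ u * b ^ (v + p * k) * c ^ γ := by
    intro u v γ k
    rw [fint, show (-((v + p * k) * γ) : ℤ) = -(v * γ) + (p : ℤ) * (-(k * γ)) by ring, zpow_add, zpow_mul d, zpow_natCast, dp, one_zpow, mul_one]
  have fm : ∀ n m, f (n * m) = f n * f m := by
    intro n m
    obtain ⟨u, v, γ, rfl⟩ := tri_surj θ n
    obtain ⟨u', v', γ', rfl⟩ := tri_surj θ m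
    obtain ⟨u, rfl⟩ := exists_int u
    obtain ⟨v, rfl⟩ := exists_int v
    obtain ⟨γ, rfl⟩ := exists_int γ
    obtain ⟨u', rfl⟩ := exists_int u'
    obtain ⟨v', rfl⟩ := exists_int v'
    obtain ⟨γ', rfl⟩ := exists_int γ'
    rw [fint, fint, key, ← fint2, tri_mul, hi, hj]
    congr 2
    · rw [rd_intCast, rd_intCast, ← Int.cast_mul, ← Int.cast_mul, ← Int.cast_sub, ← Int.cast_mul, pm_intCast]; push_cast; ring
    · rw [rd_intCast, rd_intCast, ← Int.cast_mul, ← Int.cast_mul, ← Int.cast_sub, ← Int.cast_mul, pm_intCast]; push_cast; ring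
    · push_cast; ring
  refine ⟨MonoidHom.mk' f fm, ?_, ?_, ?_⟩
  · have := fint 1 0 0; simpa using this
  · have := fint 0 1 0; simpa using this
  · have := fint 0 0 1; simpa using this

end

theorem rep_of_relIndex {p : ℕ} [hpF : Fact p.Prime] {G : Type} [Group G] [Finite G]
    (H L : Subgroup G) (hH : H.Normal) (hHL : H ≤ L) (hidx : H.relIndex L = p) (x : G) (hx : x ∈ L) (hxH : x ∉ H)
    (y : G) (hy : y ∈ L) : ∃ h ∈ H, ∃ k : ℤ, y = h * x ^ k := by
  have hp : p.Prime := Fact.out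
  set K := H ⊔ Subgroup.zpowers x with hK
  have hKL : K ≤ L := sup_le hHL (by rw [Subgroup.zpowers_le]; exact hx)
  have h1 := Subgroup.relIndex_mul_relIndex H K L le_sup_left hKL
  rw [hidx] at h1
  have h2 : K.relIndex L = 1 := by
    rcases (Nat.dvd_prime hp).1 (Dvd.intro_left _ h1) with h | h
    · exact h
    · rw [h] at h1
      have h3 : H.relIndex K = 1 := by
        have := hp.pos
        nlinarith
      rw [Subgroup.relIndex_eq_one] at h3
      exact absurd (h3 (Subgroup.mem_sup_right (Subgroup.mem_zpowers x))) hxH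
  rw [Subgroup.relIndex_eq_one] at h2
  have h3 := h2 hy
  rw [hK, Subgroup.mem_sup_of_normal_left] at h3
  obtain ⟨h, hh, w, ⟨k, rfl⟩, rfl⟩ := h3
  exact ⟨h, hh, k, rfl⟩

theorem zpow_mem_prime {p : ℕ} [hpF : Fact p.Prime] {G : Type} [Group G] (H : Subgroup G) (x : G) (hx : x ^ p = 1) (hxH : x ∉ H)
    (k : ℤ) (hk : x ^ k ∈ H) : (p : ℤ) ∣ k := by
  have hp : p.Prime := Fact.out
  by_contra h
  have hc : IsCoprime (p : ℤ) k := (Prime.coprime_iff_not_dvd (Nat.prime_iff_prime_int.1 hp)).2 h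
  obtain ⟨a, b, hab⟩ := hc
  apply hxH
  have : x = (x ^ k) ^ b := by
    rw [← zpow_mul, mul_comm]
    nth_rewrite 1 [← zpow_one x]
    rw [← hab, zpow_add, mul_comm a, zpow_mul x p, zpow_natCast, hx, one_zpow, one_mul]
  rw [this]
  exact H.zpow_mem hk b

section
variable {p : ℕ} [hpF : Fact p.Prime] {G : Type} [Group G] [Finite G] (hG : IsPGroup p G) (hreg : IsRegularPGroup p G)
  {e : ℕ} (he : 4 ≤ e) (hcard : Nat.card G = p ^ (e + 3)) (h1 : cnt p G 1 = p ^ 3) (h2 : cnt p G 2 = p ^ 5) (a : G)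
  (ha1 : a ^ p ^ (e - 1) ≠ 1) (ha2 : a ^ p ^ e = 1)

include hG hreg he hcard h2 ha1 ha2 in
theorem st_comm (x y : G) : (y⁻¹ * (x * y * x⁻¹)) ^ p ^ 2 = 1 := by
  have hp : p.Prime := Fact.out
  haveI := Om_normal hG hreg 2
  have hc : Nat.card (G ⧸ Om hG hreg 2) = p ^ (e - 2) := by
    have := Subgroup.card_eq_card_quotient_mul_card_subgroup (Om hG hreg 2)
    rw [card_Om, h2, hcard, show e + 3 = (e - 2) + 5 by omega, pow_add] at this
    exact (Nat.eq_of_mul_eq_mul_right (pow_pos hp.pos 5) this).symm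
  have ho : orderOf (a : G ⧸ Om hG hreg 2) = p ^ (e - 3 + 1) := by
    apply orderOf_eq_prime_pow
    · rw [← QuotientGroup.mk_pow, QuotientGroup.eq_one_iff, mem_Om, ← pow_mul, ← pow_add, show e - 3 + 2 = e - 1 by omega]
      exact ha1
    · rw [← QuotientGroup.mk_pow, QuotientGroup.eq_one_iff, mem_Om, ← pow_mul, ← pow_add, show e - 3 + 1 + 2 = e by omega]
      exact ha2
  have hcy : IsCyclic (G ⧸ Om hG hreg 2) := by
    apply isCyclic_of_orderOf_eq_card (a : G ⧸ Om hG hreg 2)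
    rw [ho, hc]; congr 1; omega
  obtain ⟨g, hg⟩ := hcy.exists_generator
  obtain ⟨k, hk⟩ := hg (x : G ⧸ Om hG hreg 2)
  obtain ⟨l, hl⟩ := hg (y : G ⧸ Om hG hreg 2)
  rw [← mem_Om hG hreg, ← QuotientGroup.eq_one_iff]
  simp only [QuotientGroup.mk_mul, QuotientGroup.mk_inv]
  rw [← hk, ← hl]; simp only; group

include hG hreg he hcard h2 ha1 ha2 in
theorem st_zc (x : G) : a ^ p ^ (e - 2) * x = x * a ^ p ^ (e - 2) := by
  have := (reg_commute_iff hG hreg 2 x (a ^ p ^ (e - 4))).2 (st_comm hG hreg he hcard h2 a ha1 ha2 _ _)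
  rw [← pow_mul, ← pow_add, show e - 4 + 2 = e - 2 by omega] at this
  exact this.symm

include hG hreg h1 h2 in
theorem st_NN (x y : G) (hx : x ^ p ^ 2 = 1) (hy : y ^ p ^ 2 = 1) : (x * y * x⁻¹ * y⁻¹) ^ p = 1 := by
  have hp : p.Prime := Fact.out
  haveI := Om_normal hG hreg 1
  have hle : Om hG hreg 1 ≤ Om hG hreg 2 := Om_mono hG hreg (by norm_num)
  have hr : (Om hG hreg 1).relIndex (Om hG hreg 2) = p ^ 2 := by
    have := sub_card_mul_relIndex hle
    rw [card_Om, card_Om, h1, h2, show 5 = 3 + 2 by norm_num, pow_add] at this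
    exact Nat.eq_of_mul_eq_mul_left (pow_pos hp.pos 3) this
  set K := (Om hG hreg 2).map (QuotientGroup.mk' (Om hG hreg 1)) with hK
  have hKc : Nat.card K = p ^ 2 := by rw [hK, ← Subgroup.relIndex_ker, QuotientGroup.ker_mk', hr]
  have hcm := (IsPGroup.isMulCommutative_of_card_eq_prime_sq hKc).is_comm.comm
  have h3 := hcm ⟨(x : G ⧸ Om hG hreg 1), ⟨x, hx, rfl⟩⟩ ⟨(y : G ⧸ Om hG hreg 1), ⟨y, hy, rfl⟩⟩
  have h4 := congrArg Subtype.val h3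
  simp only [Subgroup.coe_mul] at h4
  have : x * y * x⁻¹ * y⁻¹ ∈ Om hG hreg 1 := by
    rw [← QuotientGroup.eq_one_iff]
    simp only [QuotientGroup.mk_mul, QuotientGroup.mk_inv]
    rw [h4]; group
  simpa [mem_Om] using this

include hG hreg h1 h2 in
theorem st_mulpow (x y : G) (hx : x ^ p ^ 2 = 1) (hy : y ^ p ^ 2 = 1) : (x * y) ^ p = x ^ p * y ^ p := by
  obtain ⟨w, hw, h⟩ := hreg x y
  have hcl : Subgroup.closure {x, y} ≤ Om hG hreg 2 := by
    rw [Subgroup.closure_le]; intro t ht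
    rcases ht with rfl | rfl
    · exact hx
    · exact hy
  have hcm : ⁅Subgroup.closure {x, y}, Subgroup.closure {x, y}⁆ ≤ Om hG hreg 1 := by
    rw [Subgroup.commutator_le]
    intro s hs t ht
    have := st_NN hG hreg h1 h2 s t (hcl hs) (hcl ht)
    rw [mem_Om, pow_one]; exact this
  have : MhoOne p ⁅Subgroup.closure {x, y}, Subgroup.closure {x, y}⁆ ≤ ⊥ := by
    unfold MhoOne
    rw [Subgroup.closure_le]
    rintro t ⟨s, hs, rfl⟩
    have := hcm hs
    rw [mem_Om, pow_one] at this
    simpa using this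
  have := this hw
  rw [Subgroup.mem_bot] at this
  rw [h, this, mul_one]

include hG hreg he hcard h1 h2 ha1 ha2 in
theorem st_gens : ∃ b c : G, b ^ p ^ 2 = 1 ∧ c ^ p = 1 ∧ (∀ x, x ^ p ^ 2 = 1 → b ^ p * x = x * b ^ p) ∧
    (∀ u v : ℤ, (a ^ p ^ (e - 2)) ^ (p * u) * b ^ (p * v) = 1 → (p : ℤ) ∣ u ∧ (p : ℤ) ∣ v) ∧
    (∀ γ u v : ℤ, c ^ γ = (a ^ p ^ (e - 2)) ^ (p * u) * b ^ (p * v) → (p : ℤ) ∣ γ) ∧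
    (∃ k : ℤ, a * b ^ p * a⁻¹ = (a ^ p ^ (e - 2)) ^ (p * k) * b ^ p) ∧
    (∀ g, ∃ f h : ℤ, g * c * g⁻¹ = (a ^ p ^ (e - 2)) ^ (p * f) * b ^ (p * h) * c) := by
  have hp : p.Prime := Fact.out
  have zc := st_zc hG hreg he hcard h2 a ha1 ha2
  set z := a ^ p ^ (e - 2) with hz
  have hzp : z ^ p ≠ 1 := by
    rw [hz, ← pow_mul, ← pow_succ, show e - 2 + 1 = e - 1 by omega]; exact ha1
  have hzpp : z ^ p ^ 2 = 1 := by
    rw [hz, ← pow_mul, ← pow_add, show e - 2 + 2 = e by omega]; exact ha2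
  have hzo : orderOf (z ^ p) = p := by
    apply orderOf_eq_prime _ hzp
    rw [← pow_mul, ← pow_two]; exact hzpp
  let φ : Om hG hreg 2 →* G := MonoidHom.mk' (fun x => (x : G) ^ p) (fun x y =>
    st_mulpow hG hreg h1 h2 x y x.2 y.2)
  set M := φ.range with hM
  have memM : ∀ y, y ∈ M ↔ ∃ x, x ^ p ^ 2 = 1 ∧ x ^ p = y := by
    intro y
    constructor
    · rintro ⟨x, rfl⟩; exact ⟨x, x.2, rfl⟩
    · rintro ⟨x, hx, rfl⟩; exact ⟨⟨x, hx⟩, rfl⟩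
  have Mcard : Nat.card M = p ^ 2 := by
    have hk : Nat.card φ.ker = p ^ 3 := by
      rw [← h1]
      have hq : ∀ x : G, x ^ p ^ 1 = 1 → x ^ p = 1 := fun x hx => by rw [pow_one] at hx; exact hx
      apply Nat.card_congr
      refine ⟨fun x => ⟨x.1.1, ?_⟩, fun x => ⟨⟨x.1, ?_⟩, ?_⟩, fun x => rfl, fun x => rfl⟩
      · have := x.2; rw [MonoidHom.mem_ker] at this; rw [pow_one]; exact this
      · rw [mem_Om, pow_two, pow_mul, hq _ x.2, one_pow]
      · rw [MonoidHom.mem_ker]; exact hq _ x.2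
    have h3 := Subgroup.index_ker φ
    have h4 := Subgroup.card_mul_index φ.ker
    rw [hk, h3, card_Om, h2, show 5 = 3 + 2 by norm_num, pow_add] at h4
    exact Nat.eq_of_mul_eq_mul_left (pow_pos hp.pos 3) h4
  have Mnorm : M.Normal := ⟨by
    intro y hy g
    rw [memM] at hy ⊢
    obtain ⟨x, hx, rfl⟩ := hy
    exact ⟨g * x * g⁻¹, by rw [conj_pow, hx]; group, conj_pow⟩⟩
  have MO : M ≤ Om hG hreg 1 := by
    intro y hy
    rw [memM] at hy
    obtain ⟨x, hx, rfl⟩ := hy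
    rw [mem_Om, ← pow_mul, pow_one, ← pow_two]; exact hx
  have MOi : M.relIndex (Om hG hreg 1) = p := by
    have := sub_card_mul_relIndex MO
    rw [card_Om, h1, Mcard, pow_succ] at this
    exact Nat.eq_of_mul_eq_mul_left (pow_pos hp.pos 2) this
  set M1 := Subgroup.zpowers (z ^ p) with hM1
  have M1card : Nat.card M1 = p := by rw [hM1, Nat.card_zpowers, hzo]
  have M1M : M1 ≤ M := by
    rw [hM1, Subgroup.zpowers_le, memM]; exact ⟨z, hzpp, rfl⟩
  have M1i : M1.relIndex M = p := by
    have := sub_card_mul_relIndex M1M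
    rw [M1card, Mcard, pow_two] at this
    exact Nat.eq_of_mul_eq_mul_left hp.pos this
  have M1norm : M1.Normal := ⟨by
    rintro y ⟨k, rfl⟩ g
    refine ⟨k, ?_⟩
    have : Commute z g := zc g
    have h3 : Commute ((z ^ p) ^ k) g := (this.pow_left p).zpow_left k
    simp only
    rw [← h3.eq]; group⟩
  obtain ⟨b, hb, hbM⟩ : ∃ b : G, b ^ p ^ 2 = 1 ∧ b ^ p ∉ M1 := by
    by_contra hcon
    push Not at hcon
    have : M ≤ M1 := by
      intro y hy
      rw [memM] at hy
      obtain ⟨x, hx, rfl⟩ := hy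
      exact hcon x hx
    rw [← Subgroup.relIndex_eq_one, M1i] at this
    exact hp.one_lt.ne' this
  have hbM' : b ^ p ∈ M := (memM _).2 ⟨b, hb, rfl⟩
  obtain ⟨c, hc, hcM⟩ : ∃ c : G, c ∈ Om hG hreg 1 ∧ c ∉ M := by
    by_contra hcon
    push Not at hcon
    have : Om hG hreg 1 ≤ M := hcon
    rw [← Subgroup.relIndex_eq_one, MOi] at this
    exact hp.one_lt.ne' this
  have hcp : c ^ p = 1 := by simpa [mem_Om] using hc
  have repM : ∀ y ∈ M, ∃ f h : ℤ, y = z ^ (p * f) * b ^ (p * h) := by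
    intro y hy
    obtain ⟨w, ⟨f, rfl⟩, h, rfl⟩ := rep_of_relIndex M1 M M1norm M1M M1i _ hbM' hbM y hy
    refine ⟨f, h, ?_⟩
    rw [zpow_mul, zpow_mul, zpow_natCast, zpow_natCast]
  have hbpp : (b ^ p) ^ p = 1 := by rw [← pow_mul, ← pow_two]; exact hb
  refine ⟨b, c, hb, hcp, ?_, ?_, ?_, ?_, ?_⟩
  · intro x hx
    have := (reg_commute_iff hG hreg 1 x b).2 (by
      have := st_NN hG hreg h1 h2 b⁻¹ x (by rw [inv_pow, hb, inv_one]) hx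
      rw [inv_inv] at this
      rw [pow_one, ← this]; group)
    rw [pow_one] at this; exact this.symm
  · intro u v huv
    rw [zpow_mul, zpow_mul, zpow_natCast, zpow_natCast] at huv
    have hv : (p : ℤ) ∣ v := by
      apply zpow_mem_prime M1 (b ^ p) hbpp hbM
      rw [eq_inv_of_mul_eq_one_right huv]
      exact M1.inv_mem ⟨u, rfl⟩
    refine ⟨?_, hv⟩
    obtain ⟨v, rfl⟩ := hv
    rw [zpow_mul (b ^ p), zpow_natCast, hbpp, one_zpow, mul_one, ← orderOf_dvd_iff_zpow_eq_one, hzo] at huv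
    exact huv
  · intro γ u v h
    apply zpow_mem_prime M c hcp hcM
    rw [h]
    rw [zpow_mul, zpow_mul, zpow_natCast, zpow_natCast]
    exact M.mul_mem (M1M ⟨u, rfl⟩) (M.zpow_mem hbM' v)
  · obtain ⟨k, hk⟩ := comm_of_relIndex hG M1 M M1norm Mnorm M1i (b ^ p) hbM' a
    refine ⟨k, ?_⟩
    rw [zpow_mul, zpow_natCast]
    simp only at hk
    rw [hk]; group
  · intro g
    obtain ⟨f, h, hk⟩ := repM _ (comm_of_relIndex hG M (Om hG hreg 1) Mnorm (Om_normal hG hreg 1) MOi c hc g)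
    refine ⟨f, h, ?_⟩
    rw [← hk]; group

end

section
variable {p : ℕ} [hpF : Fact p.Prime]

theorem tri_zpow' (θ : Par p) (u v : ZMod (p ^ 2)) (c : ZMod p) (k : ℤ) : (tri θ u v c) ^ k = tri θ (k * u) (k * v) (k * c) := by
  cases k with
  | ofNat k => simp [tri_pow]
  | negSucc k => 
    rw [zpow_negSucc, tri_pow, tri_inv, tri_inj]; simp
    refine ⟨?_, ?_, ?_⟩ <;> ring

theorem tri_gen (θ : Par p) (u v : ZMod (p ^ 2)) (c : ZMod p) :
    ∃ k l m : ℕ, tri θ u v c = (tri θ 1 0 0) ^ k * (tri θ 0 1 0) ^ l * (tri θ 0 0 1) ^ m := by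
  haveI : NeZero (p ^ 2) := ⟨pow_ne_zero 2 hpF.out.ne_zero⟩
  refine ⟨(u - pm p (θ.i * (rd p v * c))).val, (v - pm p (θ.j * (rd p v * c))).val, c.val, ?_⟩
  rw [tri_pow, tri_pow, tri_pow]
  simp only [ZMod.natCast_val, ZMod.cast_id', id, mul_one, mul_zero]
  rw [tri_mul, tri_mul, tri_inj]
  simp [rd_pm]

theorem hom_ext_NN {θ : Par p} {G : Type} [Group G] (f g : NN θ →* G) (h1 : f (tri θ 1 0 0) = g (tri θ 1 0 0))
    (h2 : f (tri θ 0 1 0) = g (tri θ 0 1 0)) (h3 : f (tri θ 0 0 1) = g (tri θ 0 0 1)) (n : NN θ) : f n = g n := by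
  obtain ⟨u, v, c, rfl⟩ := tri_surj θ n
  obtain ⟨k, l, m, h⟩ := tri_gen θ u v c
  rw [h]; simp only [map_mul, map_pow, h1, h2, h3]

theorem tri_comm (θ : Par p) (u v : ZMod (p ^ 2)) (c : ZMod p) (u' v' : ZMod (p ^ 2)) (c' : ZMod p) :
    tri θ u v c * tri θ u' v' c' * (tri θ u v c)⁻¹ * (tri θ u' v' c')⁻¹
      = tri θ (pm p (2 * (θ.i * (rd p v * c' - c * rd p v')))) (pm p (2 * (θ.j * (rd p v * c' - c * rd p v')))) 0 := by
  rw [tri_inv, tri_inv, tri_mul, tri_mul, tri_mul, tri_inj]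
  refine ⟨?_, ?_, ?_⟩
  · simp only [map_add, map_neg, rd_pm, mul_add, mul_sub, add_mul, map_sub, two_mul]; simp; ring
  · simp only [map_add, map_neg, rd_pm, mul_add, mul_sub, add_mul, map_sub, two_mul]; simp; ring
  · ring

theorem two_ne (hp5 : 5 ≤ p) : (2 : ZMod p) ≠ 0 := by
  intro h
  have : ((2 : ℕ) : ZMod p) = 0 := by exact_mod_cast h
  rw [ZMod.natCast_eq_zero_iff] at this
  have := Nat.le_of_dvd (by norm_num) this
  omega

/-- validity from an endomorphism -/
theorem hom_valid (hp5 : 5 ≤ p) (θ : Par p) (β : NN θ →* NN θ) (x v : ZMod (p ^ 2)) (f g w : ZMod p)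
    (hz : β (tri θ 1 0 0) = tri θ 1 0 0) (hv : rd p v = 1) (hb : β (tri θ 0 1 0) = tri θ x v w)
    (hc : β (tri θ 0 0 1) = tri θ (pm p f) (pm p g) 1) : rd p x * θ.j = 0 := by
  have h1 := tri_comm θ 0 1 0 0 0 1
  obtain ⟨i, hi⟩ := exists_int θ.i
  obtain ⟨j, hj⟩ := exists_int θ.j
  have h2 : tri θ (pm p (2 * (θ.i * (rd p 1 * 1 - 0 * rd p 0)))) (pm p (2 * (θ.j * (rd p 1 * 1 - 0 * rd p 0)))) 0
    = (tri θ 1 0 0) ^ (p * (2 * i)) * (tri θ 0 1 0) ^ (p * (2 * j)) := by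
    rw [tri_zpow', tri_zpow', tri_mul, tri_inj]
    have e1 : pm p (2 * θ.i) = p * (2 * i) := by
      rw [← hi, show (2 * (i : ZMod p)) = ((2 * i : ℤ) : ZMod p) by push_cast; ring, pm_intCast]; push_cast; ring
    have e2 : pm p (2 * θ.j) = p * (2 * j) := by
      rw [← hj, show (2 * (j : ZMod p)) = ((2 * j : ℤ) : ZMod p) by push_cast; ring, pm_intCast]; push_cast; ring
    simp [e1, e2]
  have h3 := congrArg β (h1.trans h2)
  simp only [map_mul, map_inv, map_zpow, hz, hb, hc] at h3
  rw [tri_comm, tri_zpow', tri_zpow', tri_mul, tri_inj] at h3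
  have h4 := h3.1
  have e1 : (p : ZMod (p ^ 2)) * (2 * i) = pm p (2 * θ.i) := by
      rw [← hi, show (2 * (i : ZMod p)) = ((2 * i : ℤ) : ZMod p) by push_cast; ring, pm_intCast]; push_cast; ring
  have e2 : (p : ZMod (p ^ 2)) * (2 * j) = pm p (2 * θ.j) := by
      rw [← hj, show (2 * (j : ZMod p)) = ((2 * j : ℤ) : ZMod p) by push_cast; ring, pm_intCast]; push_cast; ring
  simp only [rd_pm, hv] at h4
  push_cast at h4
  rw [e1, e2] at h4
  simp at h4
  rw [pm_mul, pm_eq_zero] at h4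
  rcases mul_eq_zero.1 h4 with h | h
  · rcases mul_eq_zero.1 h with h | h
    · exact absurd h (two_ne hp5)
    · rw [h, mul_zero]
  · rw [h, zero_mul]

/-- change of action -/
def chg (θ θ' : Par p) (hi : θ.i = θ'.i) (hj : θ.j = θ'.j) : NN θ →* NN θ' where
  toFun n := (n : A3 p)
  map_one' := rfl
  map_mul' n m := by
    change mulN θ n m = mulN θ' n m
    simp only [mulN, hi, hj]

theorem chg_tri (θ θ' : Par p) (hi : θ.i = θ'.i) (hj : θ.j = θ'.j) (u v : ZMod (p ^ 2)) (c : ZMod p) :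
    chg θ θ' hi hj (tri θ u v c) = tri θ' u v c := rfl


theorem pm_int' (u : ℤ) : pm p (u : ZMod p) = ((p * u : ℤ) : ZMod (p ^ 2)) := by
  rw [pm_intCast]; push_cast; ring

theorem structure_thm (hp5 : 5 ≤ p) {G : Type} [Group G] [Finite G] (hG : IsPGroup p G) (hreg : IsRegularPGroup p G)
    {e : ℕ} (he : 4 ≤ e) (hcard : Nat.card G = p ^ (e + 3)) (h1 : cnt p G 1 = p ^ 3) (h2 : cnt p G 2 = p ^ 5) (a : G)
    (ha1 : a ^ p ^ (e - 1) ≠ 1) (ha2 : a ^ p ^ e = 1) : ∃ θ : Par p, Nonempty (Data θ e G) := by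
  have hp : p.Prime := Fact.out
  have zc := st_zc hG hreg he hcard h2 a ha1 ha2
  obtain ⟨b, c, hb, hc, bc, ind, cind, ⟨k0, hk0⟩, ccomm⟩ := st_gens hG hreg he hcard h1 h2 a ha1 ha2
  have hza : a * a ^ p ^ (e - 2) * a⁻¹ = a ^ p ^ (e - 2) := by
    rw [← pow_succ', pow_succ]; group
  have hz2 : (a ^ p ^ (e - 2)) ^ p ^ 2 = 1 := by
    rw [← pow_mul, ← pow_add, show e - 2 + 2 = e by omega]; exact ha2
  have hapow : a ^ p ^ (e - 2) = a ^ p ^ (e - 2) := rfl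
  generalize hz : a ^ p ^ (e - 2) = z at *
  obtain ⟨i0, j0, hij⟩ := ccomm b
  obtain ⟨q, hq⟩ : ∃ q : ℤ, (p : ℤ) + 1 = 2 * q := by
    have := hp.odd_of_ne_two (by omega)
    obtain ⟨q, hq⟩ := this
    exact ⟨q + 1, by omega⟩
  have hzi : ∀ u : ℤ, z ^ (p * (p * u)) = 1 := fun u => by
    rw [← mul_assoc, zpow_mul, ← pow_two, ← Nat.cast_pow, zpow_natCast, hz2, one_zpow]
  have hbi : ∀ u : ℤ, b ^ (p * (p * u)) = 1 := fun u => by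
    rw [← mul_assoc, zpow_mul, ← pow_two, ← Nat.cast_pow, zpow_natCast, hb, one_zpow]
  set i := i0 * q
  set j := j0 * q
  have hd : b * c = (z ^ (p * i) * b ^ (p * j)) ^ 2 * c * b := by
    have hcm : Commute (z ^ (p * i)) (b ^ (p * j)) := (show Commute z b from zc b).zpow_zpow _ _
    rw [hcm.mul_pow, ← zpow_natCast, ← zpow_natCast, ← zpow_mul, ← zpow_mul]
    rw [show ((p * i * ((2 : ℕ) : ℤ)) : ℤ) = p * i0 + p * (p * i0) by
        push_cast; simp only [i]; linear_combination -(p * i0 : ℤ) * hq,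
      show ((p * j * ((2 : ℕ) : ℤ)) : ℤ) = p * j0 + p * (p * j0) by
        push_cast; simp only [j]; linear_combination -(p * j0 : ℤ) * hq, zpow_add, zpow_add, hzi, hbi, mul_one, mul_one, ← hij]
    group
  let θ0 : Par p := ⟨i, j, ⟨0, 0, 0, 0, 0⟩, by simp⟩
  have hzO : z ∈ Om hG hreg 2 := hz2
  have hbO : b ∈ Om hG hreg 2 := hb
  have hcO : c ∈ Om hG hreg 2 := by rw [mem_Om, pow_two, pow_mul, hc, one_pow]
  obtain ⟨κ, κz, κb, κc⟩ := exists_iota θ0 (⟨z, hzO⟩ : Om hG hreg 2) ⟨b, hbO⟩ ⟨c, hcO⟩ i j rfl rfl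
    (Subtype.ext hz2) (Subtype.ext hb) (Subtype.ext hc) (fun x => Subtype.ext (zc x)) (fun x => Subtype.ext (bc x x.2))
    (Subtype.ext (by simpa using hd))
  set ι : NN θ0 →* G := (Subgroup.subtype _).comp κ with hι
  have ιz : ι (tri θ0 1 0 0) = z := by simp [hι, κz]
  have ιb : ι (tri θ0 0 1 0) = b := by simp [hι, κb]
  have ιc : ι (tri θ0 0 0 1) = c := by simp [hι, κc]
  have ιzk : ∀ u : ℤ, ι (tri θ0 u 0 0) = z ^ u := fun u => by
    rw [← ιz, ← map_zpow, tri_zpow']; simp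
  have ιbk : ∀ u : ℤ, ι (tri θ0 0 u 0) = b ^ u := fun u => by
    rw [← ιb, ← map_zpow, tri_zpow']; simp
  have ιck : ∀ u : ℤ, ι (tri θ0 0 0 u) = c ^ u := fun u => by
    rw [← ιc, ← map_zpow, tri_zpow']; simp
  have ιpm : ∀ u v w : ℤ, ι (tri θ0 (pm p (u : ZMod p)) (pm p (v : ZMod p)) (w : ZMod p)) = z ^ (p * u) * b ^ (p * v) * c ^ w := by
    intro u v w
    rw [← ιzk, ← ιbk, ← ιck, ← map_mul, ← map_mul, tri_mul, tri_mul]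
    congr 1
    rw [tri_inj]
    simp [pm_int', rd_pm]
  have ιp : ∀ u v : ℤ, ∀ w, ι (tri θ0 u v w) ^ p = z ^ (p * u) * b ^ (p * v) := by
    intro u v w
    have := ιpm u v 0
    rw [zpow_zero, mul_one] at this
    rw [← map_pow, ← this, tri_pow]
    congr 1
    rw [tri_inj]; simp [pm_intCast]
  have inj : Function.Injective ι := by
    rw [injective_iff_map_eq_one]
    intro n hn
    obtain ⟨u, v, w, rfl⟩ := tri_surj θ0 n
    obtain ⟨u, rfl⟩ := exists_int u
    obtain ⟨v, rfl⟩ := exists_int v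
    obtain ⟨w, rfl⟩ := exists_int w
    have h3 := ιp u v w
    rw [hn, one_pow] at h3
    obtain ⟨⟨u, rfl⟩, ⟨v, rfl⟩⟩ := ind u v h3.symm
    rw [← pm_int', ← pm_int'] at hn ⊢
    rw [ιpm] at hn
    have h4 : (p : ℤ) ∣ w := by
      apply cind w (-u) (-v)
      rw [eq_inv_of_mul_eq_one_right hn, mul_inv_rev, ← zpow_neg, ← zpow_neg, mul_neg, mul_neg]
      exact ((show Commute z b from zc b).zpow_zpow _ _).eq.symm
    obtain ⟨w, rfl⟩ := h4
    rw [zpow_mul c, zpow_natCast, hc, one_zpow, mul_one] at hn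
    obtain ⟨h5, h6⟩ := ind u v hn
    rw [← ZMod.intCast_zmod_eq_zero_iff_dvd] at h5 h6
    rw [h5, h6, tri_one, tri_inj]; simp
  have surj : ∀ x, x ^ p ^ 2 = 1 → ∃ n, ι n = x := by
    intro x hx
    have kinj : Function.Injective κ := fun n m h => inj (by simp [hι, h])
    have : Function.Bijective κ := by
      rw [Nat.bijective_iff_injective_and_card]
      exact ⟨kinj, by rw [card_NN, card_Om, h2]⟩
    obtain ⟨n, hn⟩ := this.2 ⟨x, hx⟩
    exact ⟨n, by simp [hι, hn]⟩
  have NNp2 : ∀ n : NN θ0, ι n ^ p ^ 2 = 1 := fun n => by rw [← map_pow, NN_pow_p2, map_one]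
  choose β hβ using fun n : NN θ0 => surj (a * ι n * a⁻¹) (by rw [conj_pow, NNp2]; group)
  let B : NN θ0 →* NN θ0 := MonoidHom.mk' β (fun n m => inj (by rw [map_mul, hβ, hβ, hβ, map_mul]; group))
  have hB : ∀ n, ι (B n) = a * ι n * a⁻¹ := hβ
  have Bz : B (tri θ0 1 0 0) = tri θ0 1 0 0 := inj (by rw [hB, ιz, hza])
  obtain ⟨x, v, w, Bb⟩ := tri_surj θ0 (B (tri θ0 0 1 0))
  have hv : rd p v = 1 := by
    obtain ⟨x, rfl⟩ := exists_int x
    obtain ⟨v, rfl⟩ := exists_int v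
    have h3 := ιp x v w
    rw [← Bb, hB, ιb, conj_pow, hk0] at h3
    have h4 : z ^ (p * (x - k0)) * b ^ (p * (v - 1)) = 1 := by
      rw [mul_sub, mul_sub, zpow_sub, mul_one, zpow_sub, zpow_natCast, ← ((show Commute z z from rfl).zpow_zpow _ _).inv_left.eq,
        mul_assoc, ← mul_assoc (z ^ _) (b ^ _), ← h3]; group
    have := (ind _ _ h4).2
    rw [← ZMod.intCast_zmod_eq_zero_iff_dvd] at this
    rw [rd_intCast]
    push_cast at this
    exact sub_eq_zero.1 this
  obtain ⟨f, g, hfg⟩ := ccomm a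
  have Bc : B (tri θ0 0 0 1) = tri θ0 (pm p (f : ZMod p)) (pm p (g : ZMod p)) 1 := inj (by
    have := ιpm f g 1
    rw [hB, ιc, hfg]; simpa using this.symm)
  obtain ⟨y, hy⟩ := rd_eq_zero.1 (show rd p (v - 1) = 0 by rw [map_sub, hv, map_one, sub_self])
  have hval := hom_valid hp5 θ0 B x v f g w Bz hv Bb Bc
  let θ : Par p := ⟨i, j, ⟨x, f, y, g, w⟩, hval⟩
  refine ⟨θ, ⟨Data.ofCard (by omega) hcard (ι.comp (chg θ θ0 rfl rfl)) a ?_ ?_ ?_⟩⟩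
  · intro n m h; exact inj h
  · intro n
    have := hom_ext_NN (B.comp (chg θ θ0 rfl rfl)) ((chg θ θ0 rfl rfl).comp (actHom θ θ.t θ.val)) (by
        change B (tri θ0 1 0 0) = chg θ θ0 rfl rfl (actN θ θ.t (tri θ 1 0 0))
        rw [Bz, act_tri, chg_tri, tri_inj]; simp) (by
        change B (tri θ0 0 1 0) = chg θ θ0 rfl rfl (actN θ θ.t (tri θ 0 1 0))
        rw [Bb, act_tri, chg_tri, tri_inj]
        rw [sub_eq_iff_eq_add] at hy
        simp [θ, hy, add_comm]) (by
        change B (tri θ0 0 0 1) = chg θ θ0 rfl rfl (actN θ θ.t (tri θ 0 0 1))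
        rw [Bc, act_tri, chg_tri, tri_inj]; simp [θ]) n
    have h3 := congrArg ι this
    change ι (B (chg θ θ0 rfl rfl n)) = _ at h3
    rw [hB] at h3
    exact h3
  · rw [hz]; exact ιz.symm

end

section
variable {p : ℕ} [hpF : Fact p.Prime]

/-- action of the new generator -/
def hat (θ : Par p) (k : ℕ) (s τ : ZMod p) : Act p :=
  ⟨(actPow θ.t k).x + pm p (τ * θ.i), (actPow θ.t k).f + s * θ.i, (actPow θ.t k).y + τ * θ.j,
    (actPow θ.t k).g + s * θ.j, (actPow θ.t k).w⟩

theorem conj_hat (θ : Par p) (k : ℕ) (u0 v0 : ZMod (p ^ 2)) (c0 : ZMod p) (n : NN θ) :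
    tri θ u0 v0 c0 * actN θ (actPow θ.t k) n * (tri θ u0 v0 c0)⁻¹
      = actN θ (hat θ k (2 * rd p v0) (-2 * c0 + 2 * rd p v0 * (actPow θ.t k).w)) n := by
  obtain ⟨u, v, c, rfl⟩ := tri_surj θ n
  rw [act_tri, act_tri, tri_inv, tri_mul, tri_mul, tri_inj]
  simp only [hat]
  generalize actPow θ.t k = t
  obtain ⟨x, f, y, g, w⟩ := t
  obtain ⟨f, rfl⟩ := rd_surj f
  obtain ⟨y, rfl⟩ := rd_surj y
  obtain ⟨g, rfl⟩ := rd_surj g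
  obtain ⟨w, rfl⟩ := rd_surj w
  obtain ⟨c, rfl⟩ := rd_surj c
  obtain ⟨c0, rfl⟩ := rd_surj c0
  obtain ⟨i, hi⟩ := rd_surj θ.i
  obtain ⟨j, hj⟩ := rd_surj θ.j
  have h2 : (2 : ZMod p) = rd p 2 := (map_ofNat (rd p) 2).symm
  simp only [← hi, ← hj]
  simp only [map_add, rd_pm, map_neg, add_zero]
  rw [h2]
  simp only [← map_mul, ← map_add, ← map_sub, ← map_neg, pm_rd]
  refine ⟨?_, ?_, ?_⟩
  · ring
  · ring
  · congr 1; ring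

/-- change of generators -/
def PhiF (k : ℕ) (U L : ZMod (p ^ 2)) (m n r q : ZMod p) (a : A3 p) : A3 p :=
  ⟨k * a.u + U * a.v + pm p (m * a.c), L * a.v + pm p (n * a.c), r * rd p a.v + q * a.c⟩

/-- as hom -/
def Phi (θ θ' : Par p) (k : ℕ) (U L : ZMod (p ^ 2)) (m n r q : ZMod p)
    (E1 : rd p L * θ'.j = rd p L * q * θ.j) (E2 : k * θ'.i + θ'.j * rd p U = rd p L * q * θ.i) : NN θ' →* NN θ where
  toFun := PhiF k U L m n r q
  map_one' := by change PhiF k U L m n r q (⟨0, 0, 0⟩ : A3 p) = (⟨0, 0, 0⟩ : A3 p); ext <;> simp [PhiF]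
  map_mul' a b := by
    change PhiF k U L m n r q (mulN θ' a b) = mulN θ (PhiF k U L m n r q a) (PhiF k U L m n r q b)
    have key : cc (PhiF k U L m n r q a) (PhiF k U L m n r q b) = rd p L * q * cc a b := by
      simp only [cc, PhiF, map_add, map_mul, rd_pm]; ring
    have F1 : θ.i * (rd p L * q * cc a b) = k * (θ'.i * cc a b) + rd p U * (θ'.j * cc a b) := by
      linear_combination -(cc a b) * E2
    have F2 : θ.j * (rd p L * q * cc a b) = rd p L * (θ'.j * cc a b) := by
      linear_combination -(cc a b) * E1
    have hk : (k : ZMod p) = rd p (k : ZMod (p ^ 2)) := by simp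
    simp only [mulN, key, F1, F2]
    ext
    · simp only [PhiF, map_add, mul_add, mul_pm]; rw [hk]; ring
    · simp only [PhiF, map_add, mul_add, mul_pm]; ring
    · simp only [PhiF, map_add, mul_add, rd_pm]; ring

/-- the relation between parameters of isomorphic groups -/
structure RelD (θ θ' : Par p) where
  k : ℕ
  s : ZMod p
  τ : ZMod p
  r : ZMod p
  m : ZMod p
  n : ZMod p
  q : ZMod p
  U : ZMod (p ^ 2)
  L : ZMod (p ^ 2)
  hk : (k : ZMod p) ≠ 0
  hq : q ≠ 0
  hL : rd p L ≠ 0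
  E1 : rd p L * θ'.j = rd p L * q * θ.j
  E2 : k * θ'.i + θ'.j * rd p U = rd p L * q * θ.i
  E3 : q * θ'.t.w = rd p L * (hat θ k s τ).w
  E4 : rd p L * θ'.t.g = q * (hat θ k s τ).g
  E5 : k * θ'.t.f + θ'.t.g * rd p U = n * (k * rd p θ.t.x) + q * (hat θ k s τ).f
  E6 : rd p L * θ'.t.y + θ'.t.w * n = rd p L * (hat θ k s τ).y + r * (hat θ k s τ).g
  E7 : k * θ'.t.x + pm p (θ'.t.y * rd p U + θ'.t.w * m) = L * (hat θ k s τ).x + pm p (r * (hat θ k s τ).f)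

theorem hat_rdx (θ : Par p) (k : ℕ) (s τ : ZMod p) : rd p (hat θ k s τ).x = k * rd p θ.t.x := by
  simp [hat, actPow_rdx, rd_pm]

theorem PhiF_act_iff (θ θ' : Par p) (k : ℕ) (s τ : ZMod p) (U L : ZMod (p ^ 2)) (m n r q : ZMod p) :
    (∀ a : A3 p, PhiF k U L m n r q (act θ'.t a) = act (hat θ k s τ) (PhiF k U L m n r q a)) ↔
    (q * θ'.t.w = rd p L * (hat θ k s τ).w ∧ rd p L * θ'.t.g = q * (hat θ k s τ).g ∧
    k * θ'.t.f + θ'.t.g * rd p U = n * (k * rd p θ.t.x) + q * (hat θ k s τ).f ∧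
    rd p L * θ'.t.y + θ'.t.w * n = rd p L * (hat θ k s τ).y + r * (hat θ k s τ).g ∧
    k * θ'.t.x + pm p (θ'.t.y * rd p U + θ'.t.w * m) = L * (hat θ k s τ).x + pm p (r * (hat θ k s τ).f)) := by
  have hk : (k : ZMod p) = rd p (k : ZMod (p ^ 2)) := by simp
  rw [← hat_rdx θ k s τ, hk]
  generalize hat θ k s τ = h
  obtain ⟨x, f, y, g, w⟩ := h
  obtain ⟨f, rfl⟩ := rd_surj f
  obtain ⟨y, rfl⟩ := rd_surj y
  obtain ⟨g, rfl⟩ := rd_surj g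
  obtain ⟨w, rfl⟩ := rd_surj w
  generalize θ'.t = t
  obtain ⟨x', f', y', g', w'⟩ := t
  obtain ⟨f', rfl⟩ := rd_surj f'
  obtain ⟨y', rfl⟩ := rd_surj y'
  obtain ⟨g', rfl⟩ := rd_surj g'
  obtain ⟨w', rfl⟩ := rd_surj w'
  obtain ⟨m, rfl⟩ := rd_surj m
  obtain ⟨n, rfl⟩ := rd_surj n
  obtain ⟨q, rfl⟩ := rd_surj q
  obtain ⟨r, rfl⟩ := rd_surj r
  have pp : (p : ZMod (p ^ 2)) * p = 0 := pm_pow_two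
  have pe : ∀ a b : ZMod (p ^ 2), (p : ZMod (p ^ 2)) * a = (p : ZMod (p ^ 2)) * b ↔ rd p a = rd p b := fun a b => by
    rw [← pm_rd, ← pm_rd]; exact ⟨pm_inj, fun h => by rw [h]⟩
  constructor
  · intro H
    have Hb := H ⟨0, 1, 0⟩
    have Hc := H ⟨0, 0, rd p 1⟩
    simp only [PhiF, act, A3.mk.injEq] at Hb Hc
    obtain ⟨b1, b2, b3⟩ := Hb
    obtain ⟨c1, c2, c3⟩ := Hc
    simp only [rd_pm, mul_zero, add_zero, zero_add, map_add, map_zero, mul_one] at b1 b2 b3 c1 c2 c3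
    simp only [← map_mul, ← map_add, ← map_sub, ← map_neg, pm_rd, rd_pm, mul_zero, add_zero, zero_add] at *
    refine ⟨?_, ?_, ?_, ?_, ?_⟩
    · rw [← pe] at b3 ⊢; linear_combination b3
    · rw [← pe]; linear_combination c2
    · rw [← pe]; linear_combination c1
    · rw [← pe]; linear_combination b2
    · linear_combination b1
  · rintro ⟨e3, e4, e5, e6, e7⟩ ⟨u, v, c⟩
    obtain ⟨c, rfl⟩ := rd_surj c
    simp only [← map_mul, ← map_add, pm_rd] at *
    rw [← pe] at e4 e5 e6
    simp only [PhiF, act, A3.mk.injEq]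
    simp only [map_add, rd_pm, add_zero]
    simp only [← map_mul, ← map_add, pm_rd]
    rw [← pe]
    rw [← pe] at e3
    refine ⟨?_, ?_, ?_⟩
    · linear_combination v * e7 + c * e5
    · linear_combination v * e6 + c * e4
    · linear_combination v * e3


theorem PhiF_inj (k : ℕ) (U L : ZMod (p ^ 2)) (m n r q : ZMod p) (hk : (k : ZMod p) ≠ 0) (hL : rd p L ≠ 0) (hq : q ≠ 0)
    (a : A3 p) (h : PhiF k U L m n r q a = ⟨0, 0, 0⟩) : a = ⟨0, 0, 0⟩ := by
  obtain ⟨u, v, c⟩ := a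
  simp only [PhiF, A3.mk.injEq] at h
  obtain ⟨h1, h2, h3⟩ := h
  have hku : IsUnit (k : ZMod (p ^ 2)) := isUnit_of_rd (by simpa using hk)
  have hLu : IsUnit L := isUnit_of_rd hL
  have h4 := congrArg (rd p) h2
  simp only [map_add, map_mul, rd_pm, add_zero, map_zero, mul_eq_zero, hL, false_or] at h4
  rw [h4, mul_zero, zero_add, mul_eq_zero, or_iff_right hq] at h3
  subst h3
  simp only [mul_zero, map_zero, add_zero] at h2 h1
  have h5 : v = 0 := (hLu.mul_right_eq_zero).1 h2
  subst h5
  simp only [mul_zero, add_zero] at h1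
  rw [(hku.mul_right_eq_zero).1 h1]

variable {θ θ' : Par p} {e : ℕ} {P : Type} [Group P]

theorem Data.act_conj (d : Data θ e P) (n0 n : NN θ) (k : ℕ) :
    (d.ι n0 * d.a ^ k) * d.ι n * (d.ι n0 * d.a ^ k)⁻¹ = d.ι (n0 * actN θ (actPow θ.t k) n * n0⁻¹) := by
  have := conjpow d.conj k n
  rw [map_mul, map_mul, map_inv, mul_inv_rev, mul_assoc (d.ι n0), this]; group

theorem Data.of_rel (hp5 : 5 ≤ p) (he : 4 ≤ e) (d : Data θ e P) (R : RelD θ θ') : Nonempty (Data θ' e P) := by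
  let Φ := Phi θ θ' R.k R.U R.L R.m R.n R.r R.q R.E1 R.E2
  have h2 := two_ne hp5
  obtain ⟨v0, hv0⟩ := rd_surj (R.s / 2)
  let n0 := tri θ 0 v0 (-(R.τ - R.s * (actPow θ.t R.k).w) / 2)
  have hconj : ∀ n, n0 * actN θ (actPow θ.t R.k) n * n0⁻¹ = actN θ (hat θ R.k R.s R.τ) n := by
    intro n
    rw [conj_hat, hv0]
    congr 2
    · field_simp
    · field_simp; ring
  have hact := (PhiF_act_iff θ θ' R.k R.s R.τ R.U R.L R.m R.n R.r R.q).2 ⟨R.E3, R.E4, R.E5, R.E6, R.E7⟩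
  refine ⟨Data.ofCard (by omega) (d.card (by omega)) (d.ι.comp Φ) (d.ι n0 * d.a ^ R.k) ?_ ?_ ?_⟩
  · rw [injective_iff_map_eq_one]
    intro n hn
    have : Φ n = 1 := d.inj (by rw [map_one]; exact hn)
    exact PhiF_inj R.k R.U R.L R.m R.n R.r R.q R.hk R.hL R.hq n this
  · intro n
    have := hact n
    rw [MonoidHom.comp_apply, d.act_conj, hconj, MonoidHom.comp_apply]
    congr 1
    exact this.symm
  · rw [d.pow_pp hp5 _ _ _ (by omega), mul_comm, pow_mul, d.apow, ← map_pow, MonoidHom.comp_apply, tri_pow]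
    congr 1
    change tri θ _ _ _ = tri θ _ _ _
    rw [tri_inj]; simp [tri]

theorem Data.mem_iota (hp5 : 5 ≤ p) (he : 4 ≤ e) (d : Data θ e P) (x : P) (hx : x ^ p ^ 2 = 1) : ∃ n, d.ι n = x := by
  have hp : p.Prime := Fact.out
  obtain ⟨n, t, rfl⟩ := d.surj x
  rw [d.pow_pp hp5 _ _ _ le_rfl] at hx
  have h2 := orderOf_dvd_of_pow_eq_one hx
  rw [a_orderOf (by omega) d.inj d.apow, show p ^ e = p ^ (e - 2) * p ^ 2 by rw [← pow_add]; congr 1; omega] at h2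
  obtain ⟨s, hs⟩ := Nat.dvd_of_mul_dvd_mul_right (pow_pos hp.pos 2) h2
  exact ⟨n * (tri θ 1 0 0) ^ s, by rw [hs, pow_mul, d.apow, map_mul, map_pow]⟩

theorem RelD.of_data (hp5 : 5 ≤ p) (he : 4 ≤ e) (d : Data θ e P) (d' : Data θ' e P) : Nonempty (RelD θ θ') := by
  have h2 := two_ne hp5
  choose φ hφ using fun n : NN θ' => d.mem_iota hp5 he (d'.ι n) (by rw [← map_pow, NN_pow_p2, map_one])
  let F : NN θ' →* NN θ := MonoidHom.mk' φ (fun n m => d.inj (by rw [map_mul, hφ, hφ, hφ, map_mul]))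
  have hF : ∀ n, d.ι (F n) = d'.ι n := hφ
  have Finj : Function.Injective F := fun n m h => d'.inj (by rw [← hF, ← hF, h])
  obtain ⟨n0, k, hn0⟩ := d.surj d'.a
  have Fz : F (tri θ' 1 0 0) = tri θ k 0 0 := d.inj (by
    rw [hF, ← d'.apow, hn0, d.pow_pp hp5 _ _ _ (by omega), mul_comm, pow_mul, d.apow, ← map_pow, tri_pow]; simp)
  have hk : (k : ZMod p) ≠ 0 := by
    intro hk
    have h3 : F ((tri θ' 1 0 0) ^ p) = 1 := by
      rw [map_pow, Fz, tri_pow, tri_one, tri_inj]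
      have : (p : ZMod (p ^ 2)) * k = 0 := by rw [← pm_rd]; simp [hk]
      simp [this]
    have h4 := Finj (h3.trans (map_one F).symm)
    rw [tri_pow, tri_one, tri_inj] at h4
    have h5 := h4.1
    rw [← pm_rd, pm_eq_zero] at h5
    simp at h5
  obtain ⟨U, L, r, Fb⟩ := tri_surj θ (F (tri θ' 0 1 0))
  obtain ⟨m', n', q, Fc⟩ := tri_surj θ (F (tri θ' 0 0 1))
  have h5 : (tri θ m' n' q) ^ p = 1 := by
    rw [← Fc, ← map_pow, tri_pow]
    have : tri θ' (p * 0) (p * 0) (p * 1) = 1 := by rw [tri_one, tri_inj]; simp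
    rw [this, map_one]
  rw [tri_pow, tri_one, tri_inj] at h5
  obtain ⟨m, rfl⟩ := eq_pm_of_mul h5.1
  obtain ⟨n, rfl⟩ := eq_pm_of_mul h5.2.1
  have EE : rd p L * θ'.j = rd p L * q * θ.j ∧ k * θ'.i + θ'.j * rd p U = rd p L * q * θ.i := by
    have h1 := tri_comm θ' 0 1 0 0 0 1
    obtain ⟨i, hi⟩ := exists_int θ'.i
    obtain ⟨j, hj⟩ := exists_int θ'.j
    have h2' : tri θ' (pm p (2 * (θ'.i * (rd p 1 * 1 - 0 * rd p 0)))) (pm p (2 * (θ'.j * (rd p 1 * 1 - 0 * rd p 0)))) 0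
      = (tri θ' 1 0 0) ^ (p * (2 * i)) * (tri θ' 0 1 0) ^ (p * (2 * j)) := by
      rw [tri_zpow', tri_zpow', tri_mul, tri_inj]
      have e1 : pm p (2 * θ'.i) = p * (2 * i) := by
        rw [← hi, show (2 * (i : ZMod p)) = ((2 * i : ℤ) : ZMod p) by push_cast; ring, pm_intCast]; push_cast; ring
      have e2 : pm p (2 * θ'.j) = p * (2 * j) := by
        rw [← hj, show (2 * (j : ZMod p)) = ((2 * j : ℤ) : ZMod p) by push_cast; ring, pm_intCast]; push_cast; ring
      simp [e1, e2]
    have h3 := congrArg F (h1.trans h2')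
    simp only [map_mul, map_inv, map_zpow, Fz, Fb, Fc] at h3
    rw [tri_comm, tri_zpow', tri_zpow', tri_mul, tri_inj] at h3
    obtain ⟨h4, h5, -⟩ := h3
    have e1 : (p : ZMod (p ^ 2)) * (2 * i) = pm p (2 * θ'.i) := by
        rw [← hi, show (2 * (i : ZMod p)) = ((2 * i : ℤ) : ZMod p) by push_cast; ring, pm_intCast]; push_cast; ring
    have e2 : (p : ZMod (p ^ 2)) * (2 * j) = pm p (2 * θ'.j) := by
        rw [← hj, show (2 * (j : ZMod p)) = ((2 * j : ℤ) : ZMod p) by push_cast; ring, pm_intCast]; push_cast; ring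
    simp only [rd_pm] at h4 h5
    push_cast at h4 h5
    rw [e1, e2] at h4
    rw [e2] at h5
    simp only [pm_mul, map_zero, zero_mul, mul_zero, sub_zero, mul_one, add_zero, zero_add] at h4 h5
    simp at h4 h5
    rw [← map_add] at h4
    have h6 := pm_inj h4
    have h7 := pm_inj h5
    constructor
    · apply mul_left_cancel₀ h2; linear_combination -h7
    · apply mul_left_cancel₀ h2; linear_combination -h6
  have hΦ : ∀ x, F x = Phi θ θ' k U L m n r q EE.1 EE.2 x := by
    apply hom_ext_NN
    · rw [Fz]; change tri θ _ _ _ = tri θ _ _ _; rw [tri_inj]; simp [tri]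
    · rw [Fb]; change tri θ _ _ _ = tri θ _ _ _; rw [tri_inj]; simp [tri]
    · rw [Fc]; change tri θ _ _ _ = tri θ _ _ _; rw [tri_inj]; simp [tri]
  have Φinj : ∀ u v c, PhiF k U L m n r q ⟨u, v, c⟩ = ⟨0, 0, 0⟩ → u = 0 ∧ v = 0 ∧ c = 0 := by
    intro u v c h
    have h3 : F (tri θ' u v c) = F 1 := by rw [hΦ, map_one]; exact h
    have := Finj h3
    rwa [tri_one, tri_inj] at this
  have hL : rd p L ≠ 0 := by
    intro hL
    have := Φinj (pm p (-(rd p U) / k)) (pm p 1) 0 (by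
      simp only [PhiF, mul_pm, rd_pm, hL, ← map_add]
      congr 1
      · simp; field_simp; simp
      · simp
      · simp)
    have := this.2.1
    rw [pm_eq_zero] at this
    exact one_ne_zero this
  have hq : q ≠ 0 := by
    intro hq
    have := Φinj (pm p ((rd p U * n / rd p L - m) / k)) (pm p (-n / rd p L)) 1 (by
      simp only [PhiF, mul_pm, rd_pm, ← map_add]
      congr 1
      · have e : rd p (k : ZMod (p^2)) * ((rd p U * n / rd p L - m) / k) + rd p U * (-n / rd p L) + m * 1 = 0 := by
          simp only [map_natCast, mul_one]; field_simp; ring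
        rw [e, map_zero]
      · field_simp; simp
      · simp [hq])
    exact one_ne_zero this.2.2
  obtain ⟨u0, v0, c0, rfl⟩ := tri_surj θ n0
  have hact' : ∀ x : NN θ', F (actN θ' θ'.t x) = actN θ (hat θ k (2 * rd p v0) (-2 * c0 + 2 * rd p v0 * (actPow θ.t k).w)) (F x) := by
    intro x
    have h3 := d'.conj x
    rw [← hF x, ← hF (actN θ' _ x), hn0, d.act_conj, conj_hat] at h3
    exact (d.inj h3).symm
  have hact : ∀ x, PhiF k U L m n r q (act θ'.t x) = act (hat θ k (2 * rd p v0) (-2 * c0 + 2 * rd p v0 * (actPow θ.t k).w)) (PhiF k U L m n r q x) := by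
    have h4 := hact'
    simp only [hΦ] at h4
    exact h4
  obtain ⟨E3, E4, E5, E6, E7⟩ := (PhiF_act_iff θ θ' _ _ _ _ _ _ _ _ _).1 hact
  exact ⟨⟨k, _, _, r, m, n, q, U, L, hk, hq, hL, EE.1, EE.2, E3, E4, E5, E6, E7⟩⟩

end

/-- parameter vectors over the prime field -/
structure VV (p : ℕ) where
  i : ZMod p
  j : ZMod p
  x : ZMod p
  f : ZMod p
  y : ZMod p
  g : ZMod p
  w : ZMod p

section
variable {p : ℕ} [hpF : Fact p.Prime]

/-- relation of parameters -/
def PRel (θ θ' : Par p) : Prop := Nonempty (RelD θ θ')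

theorem PRel.trans (hp5 : 5 ≤ p) {θ θ' θ'' : Par p} (h : PRel θ θ') (h' : PRel θ' θ'') : PRel θ θ'' := by
  obtain ⟨h⟩ := h
  obtain ⟨h'⟩ := h'
  haveI : Fact (5 ≤ p) := ⟨hp5⟩
  haveI : Fact (4 ≤ 4) := ⟨le_refl _⟩
  have d : Data θ 4 (QQ θ 4) := dataQQ θ
  obtain ⟨d'⟩ := d.of_rel hp5 (le_refl _) h
  obtain ⟨d''⟩ := d'.of_rel hp5 (le_refl _) h'
  exact RelD.of_data hp5 (le_refl _) d d''

/-- x divisible by p -/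
def mk0 (v : VV p) : Par p := ⟨v.i, v.j, ⟨pm p v.x, v.f, v.y, v.g, v.w⟩, by simp [rd_pm]⟩

/-- x a unit -/
def mk1 (v : VV p) : Par p := ⟨v.i, 0, ⟨1, v.f, v.y, v.g, v.w⟩, by simp⟩

/-- equations -/
def R0 (v v' : VV p) (k c s τ r m n q U l : ZMod p) : Prop :=
  k ≠ 0 ∧ q ≠ 0 ∧ l ≠ 0 ∧ v'.j = q * v.j ∧ k * v'.i + v'.j * U = l * q * v.i ∧
  q * v'.w = l * k * v.w ∧ l * v'.g = q * (k * v.g + s * v.j) ∧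
  k * v'.f + v'.g * U = q * (k * v.f + s * v.i) ∧
  l * v'.y + v'.w * n = l * (k * v.y + c * (v.w * v.g) + τ * v.j) + r * (k * v.g + s * v.j) ∧
  k * v'.x + v'.y * U + v'.w * m = l * (k * v.x + c * (v.w * v.f) + τ * v.i) + r * (k * v.f + s * v.i)

/-- equations -/
def R1 (v v' : VV p) (k c s r n q U : ZMod p) : Prop :=
  k ≠ 0 ∧ q ≠ 0 ∧ k * v'.i = q * v.i ∧
  q * v'.w = k * v.w ∧ v'.g = q * (k * v.g) ∧
  k * v'.f + v'.g * U = n * k + q * (k * v.f + c * v.g + s * v.i) ∧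
  v'.y + v'.w * n = k * v.y + c * (v.w * v.g) + r * (k * v.g)

/-- binomial -/
def ch (k : ZMod p) : ZMod p := (k.val.choose 2 : ℕ)

theorem val_cast (k : ZMod p) : ((k.val : ℕ) : ZMod p) = k := by
  haveI : NeZero p := ⟨hpF.out.ne_zero⟩
  exact ZMod.natCast_zmod_val k

theorem rel0_mk {v v' : VV p} {k s τ r m n q U l : ZMod p} (h : R0 v v' k (ch k) s τ r m n q U l) :
    PRel (mk0 v) (mk0 v') := by
  obtain ⟨hk, hq, hl, E1, E2, E3, E4, E5, E6, E7⟩ := h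
  obtain ⟨L, rfl⟩ := rd_surj l
  obtain ⟨U, rfl⟩ := rd_surj U
  refine ⟨⟨k.val, s, τ, r, m, n, q, U, L, ?_, hq, hl, ?_, ?_, ?_, ?_, ?_, ?_, ?_⟩⟩
  · rwa [val_cast]
  · simp only [mk0]; rw [E1]; ring
  · simp only [mk0, val_cast]; exact E2
  · simp only [mk0, hat, actPow, val_cast]; rw [E3]; ring
  · simp only [mk0, hat, actPow, val_cast]; rw [E4]
  · simp only [mk0, hat, actPow, val_cast, rd_pm]; rw [E5]; ring
  · simp only [mk0, hat, actPow, val_cast, rd_pm]; exact E6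
  · have hkk : ((k.val : ℕ) : ZMod (p ^ 2)) * pm p v.x = pm p (k * v.x) := by
      rw [mul_pm, map_natCast, val_cast]
    have hkk' : ((k.val : ℕ) : ZMod (p ^ 2)) * pm p v'.x = pm p (k * v'.x) := by
      rw [mul_pm, map_natCast, val_cast]
    simp only [mk0, hat, actPow, val_cast, rd_pm]
    rw [hkk, hkk', ← map_add, ← map_add, ← map_add, mul_pm, ← map_add]
    congr 1
    have : ch k = ((k.val.choose 2 : ℕ) : ZMod p) := rfl
    rw [← this]
    linear_combination E7

theorem rel0_eq {v v' : VV p} (h : PRel (mk0 v) (mk0 v')) : 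
    ∃ k c s τ r m n q U l, R0 v v' k c s τ r m n q U l := by
  obtain ⟨⟨k, s, τ, r, m, n, q, U, L, hk, hq, hL, E1, E2, E3, E4, E5, E6, E7⟩⟩ := h
  refine ⟨k, (k.choose 2 : ℕ), s, τ, r, m, n, q, rd p U, rd p L, hk, hq, hL, ?_, ?_, ?_, ?_, ?_, ?_, ?_⟩
  · simp only [mk0] at E1; apply mul_left_cancel₀ hL; rw [E1]; ring
  · simp only [mk0] at E2; exact E2
  · simp only [mk0, hat, actPow] at E3; rw [E3]; ring
  · simp only [mk0, hat, actPow] at E4; rw [E4]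
  · simp only [mk0, hat, actPow, rd_pm] at E5; rw [E5]; ring
  · simp only [mk0, hat, actPow, rd_pm] at E6; exact E6
  · have hkk : (k : ZMod (p ^ 2)) * pm p v.x = pm p (k * v.x) := by
      rw [mul_pm, map_natCast]
    have hkk' : (k : ZMod (p ^ 2)) * pm p v'.x = pm p (k * v'.x) := by
      rw [mul_pm, map_natCast]
    simp only [mk0, hat, actPow, rd_pm] at E7
    rw [hkk, hkk', ← map_add, ← map_add, ← map_add, mul_pm, ← map_add] at E7
    have := pm_inj E7
    linear_combination this

theorem rel1_mk {v v' : VV p} {k s r n q U : ZMod p} (h : R1 v v' k (ch k) s r n q U) :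
    PRel (mk1 v) (mk1 v') := by
  obtain ⟨hk, hq, E2, E3, E4, E5, E6⟩ := h
  obtain ⟨U, rfl⟩ := rd_surj U
  have hx : rd p (hat (mk1 v) k.val s 0).x = k := by
    rw [hat_rdx, val_cast]; simp [mk1]
  obtain ⟨X, hX⟩ := isUnit_of_rd (v := (hat (mk1 v) k.val s 0).x) (by rwa [hx])
  set L : ZMod (p ^ 2) := (((k.val : ℕ) : ZMod (p ^ 2)) * 1 + pm p (v'.y * rd p U) - pm p (r * (hat (mk1 v) k.val s 0).f)) * ((X⁻¹ : (ZMod (p^2))ˣ) : ZMod (p ^ 2)) with hLd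
  have hLX : L * (hat (mk1 v) k.val s 0).x = k.val * 1 + pm p (v'.y * rd p U) - pm p (r * (hat (mk1 v) k.val s 0).f) := by
    rw [hLd, ← hX, mul_assoc]; simp
  have hL1 : rd p L = 1 := by
    have := congrArg (rd p) hLX
    rw [map_mul, hx] at this
    simp only [map_sub, map_add, rd_pm, map_mul, map_natCast, val_cast, map_one] at this
    apply mul_right_cancel₀ hk
    rw [this]; ring
  refine ⟨⟨k.val, s, 0, r, 0, n, q, U, L, ?_, hq, ?_, ?_, ?_, ?_, ?_, ?_, ?_, ?_⟩⟩
  · rwa [val_cast]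
  · rw [hL1]; exact one_ne_zero
  · simp [mk1]
  · simp only [mk1, val_cast, hL1]; linear_combination E2
  · simp only [mk1, hat, actPow, val_cast, hL1]; linear_combination E3
  · simp only [mk1, hat, actPow, val_cast, hL1]; linear_combination E4
  · simp only [mk1, hat, actPow, val_cast, rd_pm, map_one]; rw [E5, ch]; ring
  · simp only [mk1, hat, actPow, val_cast, rd_pm, hL1]; rw [ch] at E6; linear_combination E6
  · rw [hLX]; simp [mk1]

theorem rel1_eq {v v' : VV p} (h : PRel (mk1 v) (mk1 v')) : 
    ∃ k c s r n q U, R1 v v' k c s r n q U := by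
  obtain ⟨⟨k, s, τ, r, m, n, q, U, L, hk, hq, hL, E1, E2, E3, E4, E5, E6, E7⟩⟩ := h
  have hL1 : rd p L = 1 := by
    have := congrArg (rd p) E7
    rw [map_add (rd p), map_add (rd p), rd_pm, rd_pm, map_mul, map_mul, hat_rdx] at this
    simp only [map_natCast, rd_pm, mk1, map_one] at this
    apply mul_right_cancel₀ hk
    linear_combination -this
  refine ⟨k, (k.choose 2 : ℕ), s, r, n, q, rd p U, hk, hq, ?_, ?_, ?_, ?_, ?_⟩
  · simp only [mk1, hL1] at E2; linear_combination E2
  · simp only [mk1, hat, actPow, hL1] at E3; linear_combination E3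
  · simp only [mk1, hat, actPow, hL1] at E4; linear_combination E4
  · simp only [mk1, hat, actPow, rd_pm, map_one] at E5; rw [E5]; ring
  · simp only [mk1, hat, actPow, rd_pm, hL1] at E6; linear_combination E6

theorem not_rel01 {v v' : VV p} : ¬ PRel (mk0 v) (mk1 v') := by
  rintro ⟨⟨k, s, τ, r, m, n, q, U, L, hk, hq, hL, E1, E2, E3, E4, E5, E6, E7⟩⟩
  have := congrArg (rd p) E7
  rw [map_add (rd p), map_add (rd p), rd_pm, rd_pm, map_mul, map_mul, hat_rdx] at this
  simp only [map_natCast, rd_pm, mk1, mk0, map_one] at this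
  exact hk (by linear_combination this)

theorem not_rel10 {v v' : VV p} : ¬ PRel (mk1 v) (mk0 v') := by
  rintro ⟨⟨k, s, τ, r, m, n, q, U, L, hk, hq, hL, E1, E2, E3, E4, E5, E6, E7⟩⟩
  have := congrArg (rd p) E7
  rw [map_add (rd p), map_add (rd p), rd_pm, rd_pm, map_mul, map_mul, hat_rdx] at this
  simp only [map_natCast, rd_pm, mk1, mk0, map_one] at this
  exact mul_ne_zero hL hk (by linear_combination -this)

theorem PRel.refl (θ : Par p) : PRel θ θ := by
  refine ⟨⟨1, 0, 0, 0, 0, 0, 1, 0, 1, by simp, by simp, by simp, ?_, ?_, ?_, ?_, ?_, ?_, ?_⟩⟩ <;>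
    simp [hat, actPow, show Nat.choose 1 3 = 0 from rfl]

theorem par_cases (θ : Par p) : ∃ v : VV p, PRel θ (mk0 v) ∨ PRel θ (mk1 v) := by
  by_cases hx : rd p θ.t.x = 0
  · obtain ⟨x, hx⟩ := rd_eq_zero.1 hx
    refine ⟨⟨θ.i, θ.j, x, θ.t.f, θ.t.y, θ.t.g, θ.t.w⟩, Or.inl ?_⟩
    have : θ = mk0 ⟨θ.i, θ.j, x, θ.t.f, θ.t.y, θ.t.g, θ.t.w⟩ := by
      obtain ⟨i, j, ⟨x', f, y, g, w⟩, val⟩ := θ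
      simp only [mk0]
      simp only at hx
      subst hx
      rfl
    rw [← this]
    exact PRel.refl θ
  · have hj : θ.j = 0 := (mul_eq_zero.1 θ.val).resolve_left hx
    obtain ⟨X, hX⟩ := isUnit_of_rd hx
    have hL : rd p ((X⁻¹ : (ZMod (p ^ 2))ˣ) : ZMod (p ^ 2)) ≠ 0 := rd_ne_zero_of_unit (Units.isUnit _)
    set L := ((X⁻¹ : (ZMod (p ^ 2))ˣ) : ZMod (p ^ 2)) with hLd
    refine ⟨⟨rd p L * θ.i, 0, 0, θ.t.f, θ.t.y, θ.t.g / rd p L, rd p L * θ.t.w⟩, Or.inr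
      ⟨⟨1, 0, 0, 0, 0, 0, 1, 0, L, by simp, by simp, hL, ?_, ?_, ?_, ?_, ?_, ?_, ?_⟩⟩⟩
    · simp [mk1, hj]
    · simp [mk1]
    · simp [mk1, hat, actPow]
    · simp [mk1, hat, actPow]; field_simp
    · simp [mk1, hat, actPow]
    · simp [mk1, hat, actPow]
    · simp [mk1, hat, actPow, ← hX, hLd, show Nat.choose 1 3 = 0 from rfl]

end

section
variable {p : ℕ} [hpF : Fact p.Prime]

/-- zero or one -/
def bz (b : Bool) : ZMod p := if b then 1 else 0

/-- square class representative -/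
def bn (ν : ZMod p) (b : Bool) : ZMod p := if b then ν else 1

theorem bz_inj {b b' : Bool} {z : ZMod p} (hz : z ≠ 0) (h : bz b' = z * bz b) : b = b' := by
  cases b <;> cases b' <;> simp_all [bz]

theorem bz_surj (a : ZMod p) : ∃ b, ∃ z : ZMod p, z ≠ 0 ∧ z * a = bz b := by
  by_cases h : a = 0
  · exact ⟨false, 1, one_ne_zero, by simp [h, bz]⟩
  · exact ⟨true, a⁻¹, inv_ne_zero h, by simp [h, bz]⟩

theorem bn_ne {ν : ZMod p} (hν : ¬ IsSquare ν) (b : Bool) : bn ν b ≠ 0 := by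
  cases b
  · simp [bn]
  · simp only [bn, if_true]; rintro rfl; exact hν (IsSquare.zero)

theorem bn_inj {ν : ZMod p} (hν : ¬ IsSquare ν) {b b' : Bool} {z : ZMod p} (hz : z ≠ 0)
    (h : bn ν b' = z * z * bn ν b) : b = b' := by
  cases b <;> cases b'
  · rfl
  · simp only [bn, if_true] at h
    exact absurd ⟨z, by simpa using h⟩ hν
  · simp only [bn, if_true] at h
    simp at h
    refine absurd ⟨z⁻¹, ?_⟩ hν
    field_simp
    linear_combination -h
  · rfl

theorem bn_surj {ν : ZMod p} (hν : ¬ IsSquare ν) {a : ZMod p} (ha : a ≠ 0) :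
    ∃ b, ∃ z : ZMod p, z ≠ 0 ∧ z * z * a = bn ν b := by
  haveI : NeZero p := ⟨hpF.out.ne_zero⟩
  by_cases h : IsSquare a
  · obtain ⟨c, rfl⟩ := h
    have hc : c ≠ 0 := by rintro rfl; simp at ha
    exact ⟨false, c⁻¹, inv_ne_zero hc, by simp [bn]; field_simp⟩
  · have hν0 : ν ≠ 0 := by rintro rfl; exact hν (IsSquare.zero)
    have h2 : IsSquare (ν * a) := by
      have h1 := quadraticChar_neg_one_iff_not_isSquare.2 h
      have h1' := quadraticChar_neg_one_iff_not_isSquare.2 hν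
      rw [← quadraticChar_one_iff_isSquare (mul_ne_zero hν0 ha), map_mul, h1, h1']; norm_num
    obtain ⟨c, hc⟩ := h2
    have hc0 : c ≠ 0 := by rintro rfl; simp [hν0, ha] at hc
    refine ⟨true, c / a, div_ne_zero hc0 ha, ?_⟩
    simp [bn]; field_simp; linear_combination -hc

/-- index set, unit case -/
inductive T1 (p : ℕ)
  | b1 (g : Bool) : T1 p
  | b2 (y : Bool) : T1 p
  | b3 : T1 p
  | b4 (y : Bool) : T1 p
  | b5 (i : (ZMod p)ˣ) : T1 p
  | b6 (g : Bool) (i : (ZMod p)ˣ) : T1 p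
  | b7 (g : Bool) : T1 p
  | b8 (f : Bool) : T1 p

/-- normal forms, unit case -/
def nf1 (ν : ZMod p) : T1 p → VV p
  | .b1 g => ⟨1, 0, 0, 0, 0, bn ν g, 0⟩
  | .b2 y => ⟨1, 0, 0, 0, bz y, 0, 0⟩
  | .b3 => ⟨0, 0, 0, 0, 0, 1, 0⟩
  | .b4 y => ⟨0, 0, 0, 0, bz y, 0, 0⟩
  | .b5 i => ⟨i, 0, 0, 0, 0, 0, 1⟩
  | .b6 g i => ⟨i, 0, 0, 0, 0, bn ν g, 1⟩
  | .b7 g => ⟨0, 0, 0, 0, 0, bn ν g, 1⟩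
  | .b8 f => ⟨0, 0, 0, bz f, 0, 0, 1⟩

theorem surj1 {ν : ZMod p} (hν : ¬ IsSquare ν) (v : VV p) : ∃ t, PRel (mk1 v) (mk1 (nf1 ν t)) := by
  obtain ⟨i, j, x, f, y, g, w⟩ := v
  by_cases hw : w = 0
  · subst hw
    by_cases hi : i = 0
    · subst hi
      by_cases hg : g = 0
      · subst hg
        obtain ⟨b, z, hz, h⟩ := bz_surj y
        refine ⟨.b4 b, rel1_mk (k := z) (s := 0) (r := 0) (n := -f) (q := 1) (U := 0) ⟨hz, one_ne_zero, ?_, ?_, ?_, ?_, ?_⟩⟩ <;> simp only [nf1] <;> try ring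
        linear_combination -h
      · refine ⟨.b3, rel1_mk (k := 1) (s := 0) (r := - y / g) (n := - (f + ch 1 * g) / g) (q := g⁻¹) (U := 0) ⟨one_ne_zero, inv_ne_zero hg, ?_, ?_, ?_, ?_, ?_⟩⟩ <;> simp only [nf1] <;> field_simp <;> ring
    · by_cases hg : g = 0
      · subst hg
        obtain ⟨b, z, hz, h⟩ := bz_surj y
        refine ⟨.b2 b, rel1_mk (k := z) (s := -(z * f) / i) (r := 0) (n := 0) (q := z / i) (U := 0) ⟨hz, div_ne_zero hz hi, ?_, ?_, ?_, ?_, ?_⟩⟩ <;> simp only [nf1] <;> try (field_simp <;> try ring)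
        linear_combination -h
      · obtain ⟨b, z, hz, h⟩ := bn_surj hν (mul_ne_zero hi hg)
        refine ⟨.b1 b, rel1_mk (k := z * i) (s := -(z * i * f + ch (z * i) * g) / i) (r := -y / g) (n := 0) (q := z) (U := 0) ⟨mul_ne_zero hz hi, hz, ?_, ?_, ?_, ?_, ?_⟩⟩ <;> simp only [nf1]
        · ring
        · ring
        · linear_combination -h
        · field_simp; ring
        · field_simp; ring
  · by_cases hi : i = 0
    · subst hi
      by_cases hg : g = 0
      · subst hg
        obtain ⟨b, z, hz, h⟩ := bz_surj (y + w * f)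
        refine ⟨.b8 b, rel1_mk (k := z) (s := 0) (r := 0) (n := z * y) (q := z * w) (U := 0) ⟨hz, mul_ne_zero hz hw, ?_, ?_, ?_, ?_, ?_⟩⟩ <;> simp only [nf1] <;> try ring
        linear_combination -z * h
      · obtain ⟨b, z, hz, h⟩ := bn_surj hν (mul_ne_zero hw hg)
        have hb := bn_ne hν b
        refine ⟨.b7 b, rel1_mk (k := z) (s := 0) (r := -(z * y + ch z * (w * g)) / (z * g)) (n := 0) (q := z * w) (U := z * w * (z * f + ch z * g) / bn ν b) ⟨hz, mul_ne_zero hz hw, ?_, ?_, ?_, ?_, ?_⟩⟩ <;> simp only [nf1]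
        · ring
        · ring
        · linear_combination -h
        · field_simp; ring
        · field_simp; ring
    · have hwi := mul_ne_zero hw hi
      by_cases hg : g = 0
      · subst hg
        refine ⟨.b5 (Units.mk0 _ hwi), rel1_mk (k := 1) (s := - (y + w * f) / (w * i)) (r := 0) (n := y) (q := w) (U := 0) ⟨one_ne_zero, hw, ?_, ?_, ?_, ?_, ?_⟩⟩ <;> simp only [nf1, Units.val_mk0] <;> field_simp <;> ring
      · obtain ⟨b, z, hz, h⟩ := bn_surj hν (mul_ne_zero hw hg)
        refine ⟨.b6 b (Units.mk0 _ hwi), rel1_mk (k := z) (s := - ((z * y + ch z * (w * g)) + w * (z * f + ch z * g)) / (w * i)) (r := 0) (n := z * y + ch z * (w * g)) (q := z * w) (U := 0) ⟨hz, mul_ne_zero hz hw, ?_, ?_, ?_, ?_, ?_⟩⟩ <;> simp only [nf1, Units.val_mk0]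
        · ring
        · ring
        · linear_combination -h
        · field_simp; ring
        · field_simp; ring

/-- index of normal form family -/
def id1 : T1 p → ℕ
  | .b1 _ => 1
  | .b2 _ => 2
  | .b3 => 3
  | .b4 _ => 4
  | .b5 _ => 5
  | .b6 _ _ => 6
  | .b7 _ => 7
  | .b8 _ => 8

open scoped Classical in
/-- class -/
noncomputable def cls1 (v : VV p) : ℕ :=
  if v.w = 0 then (if v.i = 0 then (if v.g = 0 then 4 else 3) else (if v.g = 0 then 2 else 1))
  else (if v.i = 0 then (if v.g = 0 then 8 else 7) else (if v.g = 0 then 5 else 6))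

theorem cls1_nf {ν : ZMod p} (hν : ¬ IsSquare ν) (t : T1 p) : cls1 (nf1 ν t) = id1 t := by
  cases t <;> simp [cls1, nf1, id1, bn_ne hν]

theorem cls1_rel {v v' : VV p} {k c s r n q U : ZMod p} (h : R1 v v' k c s r n q U) : cls1 v = cls1 v' := by
  obtain ⟨hk, hq, E2, E3, E4, E5, E6⟩ := h
  have hw : v.w = 0 ↔ v'.w = 0 := by
    have h1 : q * v'.w = 0 ↔ k * v.w = 0 := by rw [E3]
    simp only [mul_eq_zero, hk, hq, false_or] at h1
    exact h1.symm
  have hi : v.i = 0 ↔ v'.i = 0 := by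
    have h1 : k * v'.i = 0 ↔ q * v.i = 0 := by rw [E2]
    simp only [mul_eq_zero, hk, hq, false_or] at h1
    exact h1.symm
  have hg : v.g = 0 ↔ v'.g = 0 := by
    rw [E4]; simp [hk, hq]
  simp only [cls1, hw, hi, hg]

theorem inj1 {ν : ZMod p} (hν : ¬ IsSquare ν) {t t' : T1 p} (h : PRel (mk1 (nf1 ν t)) (mk1 (nf1 ν t'))) : t = t' := by
  obtain ⟨k, c, s, r, n, q, U, h⟩ := rel1_eq h
  have hid := cls1_rel h
  rw [cls1_nf hν, cls1_nf hν] at hid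
  obtain ⟨hk, hq, E2, E3, E4, E5, E6⟩ := h
  cases t <;> cases t' <;> first | (exfalso; revert hid; simp [id1]; done) | skip
  all_goals clear hid; simp only [nf1, one_mul, mul_one, mul_zero, zero_mul, add_zero, zero_add] at E2 E3 E4 E5 E6
  · subst E2
    rw [bn_inj hν hq (E4.trans (mul_assoc _ _ _).symm)]
  · rw [bz_inj hk E6]
  · rfl
  · rw [bz_inj hk E6]
  · subst E3
    congr 1
    ext
    exact (mul_left_cancel₀ hq E2).symm
  · subst E3
    rw [bn_inj hν hq (E4.trans (mul_assoc _ _ _).symm)]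
    congr 1
    ext
    exact (mul_left_cancel₀ hq E2).symm
  · subst E3
    rw [bn_inj hν hq (E4.trans (mul_assoc _ _ _).symm)]
  · subst E3
    rw [E6] at E5
    rw [zero_mul, zero_add] at E5
    rw [bz_inj hq (mul_left_cancel₀ hq E5)]

end

section
variable {p : ℕ} [hpF : Fact p.Prime]

/-- index set, nonunit case -/
inductive T0 (p : ℕ)
  | c1 (f : (ZMod p)ˣ) : T0 p
  | d1 (x : Bool) : T0 p
  | c2 (f : ZMod p) : T0 p
  | c3 (g : Bool) : T0 p
  | c4 (y : Bool) : T0 p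
  | c5 (x : Bool) : T0 p
  | c6 (y : Bool) : T0 p
  | d6 : T0 p
  | e6 (x : Bool) : T0 p
  | c7 (i : Bool) : T0 p
  | c8 (i : Bool) (g : Bool) : T0 p
  | c9 (g : Bool) : T0 p
  | c10 (f : Bool) : T0 p

/-- normal forms, nonunit case -/
def nf0 (ν : ZMod p) : T0 p → VV p
  | .c1 f => ⟨0, 1, 0, f, 0, 0, 0⟩
  | .d1 x => ⟨0, 1, bz x, 0, 0, 0, 0⟩
  | .c2 f => ⟨0, 1, 0, f, 0, 0, 1⟩
  | .c3 g => ⟨1, 0, 0, 0, 0, bn ν g, 0⟩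
  | .c4 y => ⟨1, 0, 0, 0, bz y, 0, 0⟩
  | .c5 x => ⟨0, 0, bz x, 0, 0, 1, 0⟩
  | .c6 y => ⟨0, 0, 0, 1, bz y, 0, 0⟩
  | .d6 => ⟨0, 0, 0, 0, 1, 0, 0⟩
  | .e6 x => ⟨0, 0, bz x, 0, 0, 0, 0⟩
  | .c7 i => ⟨bn ν i, 0, 0, 0, 0, 0, 1⟩
  | .c8 i g => ⟨bn ν i, 0, 0, 0, 0, bn ν g, 1⟩
  | .c9 g => ⟨0, 0, 0, 0, 0, bn ν g, 1⟩
  | .c10 f => ⟨0, 0, 0, bz f, 0, 0, 1⟩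

theorem surj0 {ν : ZMod p} (hν : ¬ IsSquare ν) (v : VV p) : ∃ t, PRel (mk0 v) (mk0 (nf0 ν t)) := by
  obtain ⟨i, j, x, f, y, g, w⟩ := v
  by_cases hj : j = 0
  swap
  · by_cases hw : w = 0
    · subst hw
      by_cases hf : f - g * i / j = 0
      · obtain ⟨b, z, hz, h⟩ := bz_surj (x - y * i / j)
        refine ⟨.d1 b, rel0_mk (k := 1) (s := -g / j) (τ := -y / j) (r := 0) (m := 0) (n := 0) (q := j⁻¹) (U := z * j⁻¹ * i) (l := z)
          ⟨one_ne_zero, inv_ne_zero hj, hz, ?_, ?_, ?_, ?_, ?_, ?_, ?_⟩⟩ <;> simp only [nf0]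
        · field_simp
        · ring
        · ring
        · field_simp; ring
        · have : f = g * i / j := by linear_combination hf
          rw [this]; field_simp; ring
        · field_simp; ring
        · rw [← h]; ring
      · have hF : j⁻¹ * (f - g * i / j) ≠ 0 := mul_ne_zero (inv_ne_zero hj) hf
        refine ⟨.c1 (Units.mk0 _ hF), rel0_mk (k := 1) (s := -g / j) (τ := -y / j) (r := - (x - y * i / j) / (f - g * i / j)) (m := 0) (n := 0) (q := j⁻¹) (U := j⁻¹ * i) (l := 1)
          ⟨one_ne_zero, inv_ne_zero hj, one_ne_zero, ?_, ?_, ?_, ?_, ?_, ?_, ?_⟩⟩ <;> simp only [nf0, Units.val_mk0]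
        · field_simp
        · ring
        · ring
        · field_simp; ring
        · ring
        · field_simp; ring
        · have : -(x - y * i / j) / (f - g * i / j) * (1 * f + -g / j * i) = -(x - y * i / j) := by
            rw [show 1 * f + -g / j * i = f - g * i / j by ring, div_mul_cancel₀ _ hf]
          rw [this]; ring
    · refine ⟨.c2 (j⁻¹ * (f - g * i / j)), rel0_mk (k := 1) (s := -g / j) (τ := 0) (r := 0)
          (m := (j⁻¹ / w) * (x + ch 1 * (w * f))) (n := (j⁻¹ / w) * (y + ch 1 * (w * g))) (q := j⁻¹) (U := j⁻¹ / w * j⁻¹ * i) (l := j⁻¹ / w)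
          ⟨one_ne_zero, inv_ne_zero hj, div_ne_zero (inv_ne_zero hj) hw, ?_, ?_, ?_, ?_, ?_, ?_, ?_⟩⟩ <;> simp only [nf0]
      · field_simp
      · ring
      · field_simp
      · field_simp; ring
      · ring
      · ring
      · ring
  subst hj
  by_cases hw : w = 0
  · subst hw
    by_cases hi : i = 0
    · subst hi
      by_cases hg : g = 0
      · subst hg
        by_cases hf : f = 0
        · subst hf
          by_cases hy : y = 0
          · subst hy
            obtain ⟨b, z, hz, h⟩ := bz_surj x
            refine ⟨.e6 b, rel0_mk (k := 1) (s := 0) (τ := 0) (r := 0) (m := 0) (n := 0) (q := 1) (U := 0) (l := z)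
              ⟨one_ne_zero, one_ne_zero, hz, ?_, ?_, ?_, ?_, ?_, ?_, ?_⟩⟩ <;> simp only [nf0] <;> try ring
            linear_combination -h
          · refine ⟨.d6, rel0_mk (k := y⁻¹) (s := 0) (τ := 0) (r := 0) (m := 0) (n := 0) (q := 1) (U := y⁻¹ * x) (l := 1)
              ⟨inv_ne_zero hy, one_ne_zero, one_ne_zero, ?_, ?_, ?_, ?_, ?_, ?_, ?_⟩⟩ <;> simp only [nf0] <;> field_simp <;> ring
        · obtain ⟨b, z, hz, h⟩ := bz_surj y
          refine ⟨.c6 b, rel0_mk (k := z) (s := 0) (τ := 0) (r := - x / f) (m := 0) (n := 0) (q := f⁻¹) (U := 0) (l := 1)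
              ⟨hz, inv_ne_zero hf, one_ne_zero, ?_, ?_, ?_, ?_, ?_, ?_, ?_⟩⟩ <;> simp only [nf0]
          · ring
          · ring
          · ring
          · ring
          · field_simp; ring
          · linear_combination -h
          · field_simp; ring
      · obtain ⟨b, z, hz, h⟩ := bz_surj (x - y * f / g)
        refine ⟨.c5 b, rel0_mk (k := 1) (s := 0) (τ := 0) (r := - z * y / g) (m := 0) (n := 0) (q := z / g) (U := z / g * f) (l := z)
              ⟨one_ne_zero, div_ne_zero hz hg, hz, ?_, ?_, ?_, ?_, ?_, ?_, ?_⟩⟩ <;> simp only [nf0]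
        · ring
        · ring
        · ring
        · field_simp; ring
        · ring
        · field_simp; ring
        · rw [← h]; ring
    · by_cases hg : g = 0
      · subst hg
        obtain ⟨b, z, hz, h⟩ := bz_surj y
        refine ⟨.c4 b, rel0_mk (k := z) (s := - z * f / i) (τ := - z * x / i) (r := 0) (m := 0) (n := 0) (q := z / i) (U := 0) (l := 1)
              ⟨hz, div_ne_zero hz hi, one_ne_zero, ?_, ?_, ?_, ?_, ?_, ?_, ?_⟩⟩ <;> simp only [nf0]
        · ring
        · field_simp; ring
        · ring
        · ring
        · field_simp; ring
        · linear_combination -h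
        · field_simp; ring
      · obtain ⟨b, z, hz, h⟩ := bn_surj hν (mul_ne_zero hi hg)
        refine ⟨.c3 b, rel0_mk (k := z * i) (s := - (z * f)) (τ := - (z * x)) (r := - y / g) (m := 0) (n := 0) (q := z) (U := 0) (l := 1)
              ⟨mul_ne_zero hz hi, hz, one_ne_zero, ?_, ?_, ?_, ?_, ?_, ?_, ?_⟩⟩ <;> simp only [nf0]
        · ring
        · ring
        · ring
        · linear_combination -h
        · ring
        · field_simp; ring
        · ring
  · by_cases hi : i = 0
    · subst hi
      by_cases hg : g = 0
      · subst hg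
        obtain ⟨b, z, hz, h⟩ := bz_surj f
        refine ⟨.c10 b, rel0_mk (k := 1) (s := 0) (τ := 0) (r := 0) (m := z / w * (x + ch 1 * (w * f))) (n := z / w * y) (q := z) (U := 0) (l := z / w)
              ⟨one_ne_zero, hz, div_ne_zero hz hw, ?_, ?_, ?_, ?_, ?_, ?_, ?_⟩⟩ <;> simp only [nf0]
        · ring
        · ring
        · field_simp
        · ring
        · linear_combination -h
        · ring
        · ring
      · obtain ⟨b, z, hz, h⟩ := bn_surj hν (mul_ne_zero hw hg)
        have hb := bn_ne hν b
        refine ⟨.c9 b, rel0_mk (k := z) (s := 0) (τ := 0) (r := 0) (m := z * x + ch z * (w * f)) (n := z * y + ch z * (w * g)) (q := z * w) (U := z * w * (z * f) / bn ν b) (l := 1)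
              ⟨hz, mul_ne_zero hz hw, one_ne_zero, ?_, ?_, ?_, ?_, ?_, ?_, ?_⟩⟩ <;> simp only [nf0]
        · ring
        · ring
        · ring
        · linear_combination -h
        · field_simp; ring
        · ring
        · ring
    · obtain ⟨bi, l, hl, hli⟩ := bn_surj hν (mul_ne_zero hw hi)
      by_cases hg : g = 0
      · subst hg
        refine ⟨.c7 bi, rel0_mk (k := 1) (s := - f / i) (τ := 0) (r := 0) (m := l * (x + ch 1 * (w * f))) (n := l * y) (q := l * w) (U := 0) (l := l)
              ⟨one_ne_zero, mul_ne_zero hl hw, hl, ?_, ?_, ?_, ?_, ?_, ?_, ?_⟩⟩ <;> simp only [nf0]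
        · ring
        · linear_combination -hli
        · ring
        · ring
        · field_simp; ring
        · ring
        · ring
      · obtain ⟨b, z, hz, h⟩ := bn_surj hν (mul_ne_zero hw hg)
        refine ⟨.c8 bi b, rel0_mk (k := z) (s := - z * f / i) (τ := 0) (r := 0) (m := l * (z * x + ch z * (w * f))) (n := l * (z * y + ch z * (w * g))) (q := l * z * w) (U := 0) (l := l)
              ⟨hz, mul_ne_zero (mul_ne_zero hl hz) hw, hl, ?_, ?_, ?_, ?_, ?_, ?_, ?_⟩⟩ <;> simp only [nf0]
        · ring
        · linear_combination -z * hli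
        · ring
        · linear_combination -l * h
        · field_simp; ring
        · ring
        · ring

/-- index of normal form family -/
def id0 : T0 p → ℕ
  | .c1 _ => 1
  | .d1 _ => 2
  | .c2 _ => 3
  | .c3 _ => 4
  | .c4 _ => 5
  | .c5 _ => 6
  | .c6 _ => 7
  | .d6 => 8
  | .e6 _ => 9
  | .c7 _ => 10
  | .c8 _ _ => 11
  | .c9 _ => 12
  | .c10 _ => 13

open scoped Classical in
/-- class -/
noncomputable def cls0 (v : VV p) : ℕ :=
  if v.j = 0 then
    (if v.w = 0 then
      (if v.i = 0 then
        (if v.g = 0 then (if v.f = 0 then (if v.y = 0 then 9 else 8) else 7) else 6)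
      else (if v.g = 0 then 5 else 4))
    else (if v.i = 0 then (if v.g = 0 then 13 else 12) else (if v.g = 0 then 10 else 11)))
  else (if v.w = 0 then (if v.f * v.j - v.g * v.i = 0 then 2 else 1) else 3)

theorem cls0_nf {ν : ZMod p} (hν : ¬ IsSquare ν) (t : T0 p) : cls0 (nf0 ν t) = id0 t := by
  cases t <;> simp [cls0, nf0, id0, bn_ne hν]

theorem cls0_rel {v v' : VV p} {k c s τ r m n q U l : ZMod p} (h : R0 v v' k c s τ r m n q U l) : cls0 v = cls0 v' := by
  obtain ⟨hk, hq, hl, E1, E2, E3, E4, E5, E6, E7⟩ := h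
  obtain ⟨i, j, x, f, y, g, w⟩ := v
  obtain ⟨i', j', x', f', y', g', w'⟩ := v'
  simp only at *
  have hw : w = 0 ↔ w' = 0 := by
    have h1 : q * w' = 0 ↔ l * k * w = 0 := by rw [E3]
    simp only [mul_eq_zero, hk, hl, hq, false_or] at h1
    exact h1.symm
  have hj : j = 0 ↔ j' = 0 := by rw [E1]; simp [hq]
  by_cases hj0 : j = 0
  · have hj0' := hj.1 hj0
    subst hj0 hj0'
    have hi : i = 0 ↔ i' = 0 := by
      have h1 : k * i' + 0 * U = 0 ↔ l * q * i = 0 := by rw [E2]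
      simp only [zero_mul, add_zero, mul_eq_zero, hk, hl, hq, false_or] at h1
      exact h1.symm
    have hg : g = 0 ↔ g' = 0 := by
      have h1 : l * g' = 0 ↔ q * (k * g + s * 0) = 0 := by rw [E4]
      simp only [mul_zero, add_zero, mul_eq_zero, hk, hl, hq, false_or] at h1
      exact h1.symm
    by_cases h0 : w = 0 ∧ i = 0 ∧ g = 0
    · have hw' := hw.1 h0.1
      have hi' := hi.1 h0.2.1
      have hg' := hg.1 h0.2.2
      obtain ⟨rfl, rfl, rfl⟩ := h0
      subst hw' hi' hg'
      have hf : f = 0 ↔ f' = 0 := by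
        have h1 : k * f' + 0 * U = 0 ↔ q * (k * f + s * 0) = 0 := by rw [E5]
        simp only [zero_mul, mul_zero, add_zero, mul_eq_zero, hk, hl, hq, false_or] at h1
        exact h1.symm
      have hy : y = 0 ↔ y' = 0 := by
        have h1 : l * y' + 0 * n = 0 ↔ l * (k * y + c * (0 * 0) + τ * 0) + r * (k * 0 + s * 0) = 0 := by rw [E6]
        simp only [zero_mul, mul_zero, add_zero, mul_eq_zero, hk, hl, hq, false_or] at h1
        exact h1.symm
      simp [cls0, hf, hy]
    · have h0' : ¬ (w' = 0 ∧ i' = 0 ∧ g' = 0) := by rwa [← hw, ← hi, ← hg]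
      simp only [cls0, ← hw, ← hi, ← hg]
      clear E1 E2 E3 E4 E5 E6 E7 hw hi hg hj h0'
      by_cases a1 : w = 0 <;> by_cases a2 : i = 0 <;> by_cases a3 : g = 0 <;> simp [a1, a2, a3]
      exact absurd ⟨a1, a2, a3⟩ h0
  · have hj0' : j' ≠ 0 := fun h => hj0 (hj.2 h)
    have key : k * l * (f' * j' - g' * i') = q * q * k * l * (f * j - g * i) := by
      linear_combination l * j' * E5 - l * g' * E2 + q * (k * f + s * i) * l * E1 - q * i * l * E4
    have hf : f * j - g * i = 0 ↔ f' * j' - g' * i' = 0 := by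
      have h1 : k * l * (f' * j' - g' * i') = 0 ↔ q * q * k * l * (f * j - g * i) = 0 := by rw [key]
      simp only [mul_eq_zero, hk, hl, hq, false_or] at h1
      exact h1.symm
    simp only [cls0, hj, hf, hw]
    simp [hj0']

theorem inj0 {ν : ZMod p} (hν : ¬ IsSquare ν) {t t' : T0 p} (h : PRel (mk0 (nf0 ν t)) (mk0 (nf0 ν t'))) : t = t' := by
  obtain ⟨k, c, s, τ, r, m, n, q, U, l, h⟩ := rel0_eq h
  have hid := cls0_rel h
  rw [cls0_nf hν, cls0_nf hν] at hid
  obtain ⟨hk, hq, hl, E1, E2, E3, E4, E5, E6, E7⟩ := h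
  cases t <;> cases t' <;> first | (exfalso; revert hid; simp [id0]; done) | skip
  all_goals clear hid; simp only [nf0, one_mul, mul_one, mul_zero, zero_mul, add_zero, zero_add] at E1 E2 E3 E4 E5 E6 E7
  · -- c1
    subst E1
    congr 1; ext
    apply mul_left_cancel₀ hk
    linear_combination -E5
  · -- d1
    subst E1
    have hs : s = 0 := by linear_combination -E4
    subst hs
    have ht : τ = 0 := by
      apply mul_left_cancel₀ hl; linear_combination -E6
    subst ht
    congr 1; exact bz_inj hl (mul_left_cancel₀ hk (by linear_combination E7))
  · -- c2
    subst E1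
    congr 1
    apply mul_left_cancel₀ hk
    linear_combination -E5
  · -- c3
    congr 1; exact bn_inj hν hq (mul_left_cancel₀ hl (by rw [E4, E2]; ring))
  · congr 1; exact bz_inj hk (mul_left_cancel₀ hl (by linear_combination E6))
  · -- c5
    have hU : U = 0 := by simpa using E5
    have hr : r = 0 := by
      rcases mul_eq_zero.1 E6.symm with h | h
      · exact h
      · exact absurd h hk
    subst hU hr
    congr 1; exact bz_inj hl (mul_left_cancel₀ hk (by linear_combination E7))
  · congr 1; exact bz_inj hk (mul_left_cancel₀ hl (by linear_combination E6))
  · rfl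
  · congr 1; exact bz_inj hl (mul_left_cancel₀ hk (by linear_combination E7))
  · subst E3
    congr 1; exact bn_inj hν hl (mul_left_cancel₀ hk (by linear_combination E2))
  · subst E3
    congr 1
    · exact bn_inj hν hl (mul_left_cancel₀ hk (by linear_combination E2))
    · exact bn_inj hν hk (mul_left_cancel₀ hl (by linear_combination E4))
  · subst E3
    congr 1; exact bn_inj hν hk (mul_left_cancel₀ hl (by linear_combination E4))
  · congr 1; exact bz_inj hq (mul_left_cancel₀ hk (by linear_combination E5))

end

section
variable {p : ℕ} [hpF : Fact p.Prime]

theorem card_T1 : Nat.card (T1 p) = 3 * p + 8 := by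
  have e : T1 p ≃ Bool ⊕ Bool ⊕ Unit ⊕ Bool ⊕ (ZMod p)ˣ ⊕ (Bool × (ZMod p)ˣ) ⊕ Bool ⊕ Bool :=
    { toFun := fun t => match t with
        | .b1 g => .inl g
        | .b2 y => .inr (.inl y)
        | .b3 => .inr (.inr (.inl ()))
        | .b4 y => .inr (.inr (.inr (.inl y)))
        | .b5 i => .inr (.inr (.inr (.inr (.inl i))))
        | .b6 g i => .inr (.inr (.inr (.inr (.inr (.inl (g, i))))))
        | .b7 g => .inr (.inr (.inr (.inr (.inr (.inr (.inl g))))))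
        | .b8 g => .inr (.inr (.inr (.inr (.inr (.inr (.inr g))))))
      invFun := fun t => match t with
        | .inl g => .b1 g
        | .inr (.inl y) => .b2 y
        | .inr (.inr (.inl _)) => .b3
        | .inr (.inr (.inr (.inl y))) => .b4 y
        | .inr (.inr (.inr (.inr (.inl i)))) => .b5 i
        | .inr (.inr (.inr (.inr (.inr (.inl (g, i)))))) => .b6 g i
        | .inr (.inr (.inr (.inr (.inr (.inr (.inl g)))))) => .b7 g
        | .inr (.inr (.inr (.inr (.inr (.inr (.inr g)))))) => .b8 g
      left_inv := by rintro (_ | _ | _ | _ | _ | _ | _ | _) <;> rfl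
      right_inv := by rintro (_ | _ | _ | _ | _ | _ | _ | _) <;> rfl }
  haveI : NeZero p := ⟨hpF.out.ne_zero⟩
  rw [Nat.card_congr e]
  simp only [Nat.card_eq_fintype_card, Fintype.card_sum, Fintype.card_prod, Fintype.card_bool, Fintype.card_unit, ZMod.card_units_eq_totient, Nat.totient_prime hpF.out]
  have := hpF.out.two_le
  omega

theorem card_T0 : Nat.card (T0 p) = 2 * p + 22 := by
  have e : T0 p ≃ (ZMod p)ˣ ⊕ ZMod p ⊕ Bool ⊕ Bool ⊕ Bool ⊕ Bool ⊕ Bool ⊕ Unit ⊕ Bool ⊕ Bool ⊕ (Bool × Bool) ⊕ Bool ⊕ Bool :=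
    { toFun := fun t => match t with
        | .c1 g => .inl g
        | .c2 y => .inr (.inl y)
        | .d1 y => .inr (.inr (.inl y))
        | .c3 y => .inr (.inr (.inr (.inl y)))
        | .c4 i => .inr (.inr (.inr (.inr (.inl i))))
        | .c5 i => .inr (.inr (.inr (.inr (.inr (.inl i)))))
        | .c6 g => .inr (.inr (.inr (.inr (.inr (.inr (.inl g))))))
        | .d6 => .inr (.inr (.inr (.inr (.inr (.inr (.inr (.inl ())))))))
        | .e6 g => .inr (.inr (.inr (.inr (.inr (.inr (.inr (.inr (.inl g))))))))
        | .c7 g => .inr (.inr (.inr (.inr (.inr (.inr (.inr (.inr (.inr (.inl g)))))))))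
        | .c8 i g => .inr (.inr (.inr (.inr (.inr (.inr (.inr (.inr (.inr (.inr (.inl (i, g)))))))))))
        | .c9 g => .inr (.inr (.inr (.inr (.inr (.inr (.inr (.inr (.inr (.inr (.inr (.inl g)))))))))))
        | .c10 g => .inr (.inr (.inr (.inr (.inr (.inr (.inr (.inr (.inr (.inr (.inr (.inr g)))))))))))
      invFun := fun t => match t with
        | .inl g => .c1 g
        | .inr (.inl y) => .c2 y
        | .inr (.inr (.inl y)) => .d1 y
        | .inr (.inr (.inr (.inl y))) => .c3 y
        | .inr (.inr (.inr (.inr (.inl i)))) => .c4 i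
        | .inr (.inr (.inr (.inr (.inr (.inl i))))) => .c5 i
        | .inr (.inr (.inr (.inr (.inr (.inr (.inl g)))))) => .c6 g
        | .inr (.inr (.inr (.inr (.inr (.inr (.inr (.inl _))))))) => .d6
        | .inr (.inr (.inr (.inr (.inr (.inr (.inr (.inr (.inl g)))))))) => .e6 g
        | .inr (.inr (.inr (.inr (.inr (.inr (.inr (.inr (.inr (.inl g))))))))) => .c7 g
        | .inr (.inr (.inr (.inr (.inr (.inr (.inr (.inr (.inr (.inr (.inl (i, g))))))))))) => .c8 i g
        | .inr (.inr (.inr (.inr (.inr (.inr (.inr (.inr (.inr (.inr (.inr (.inl g))))))))))) => .c9 g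
        | .inr (.inr (.inr (.inr (.inr (.inr (.inr (.inr (.inr (.inr (.inr (.inr g))))))))))) => .c10 g
      left_inv := by rintro (_ | _ | _ | _ | _ | _ | _ | _ | _ | _ | _ | _ | _) <;> rfl
      right_inv := by rintro (_ | _ | _ | _ | _ | _ | _ | _ | _ | _ | _ | _ | _) <;> rfl }
  haveI : NeZero p := ⟨hpF.out.ne_zero⟩
  rw [Nat.card_congr e]
  simp only [Nat.card_eq_fintype_card, Fintype.card_sum, Fintype.card_prod, Fintype.card_bool, Fintype.card_unit, ZMod.card_units_eq_totient, Nat.totient_prime hpF.out, ZMod.card]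
  have := hpF.out.two_le
  omega

/-- transport -/
def Data.map {θ : Par p} {e : ℕ} {P P' : Type} [Group P] [Group P'] (d : Data θ e P) (φ : P ≃* P') : Data θ e P' where
  ι := φ.toMonoidHom.comp d.ι
  a := φ d.a
  inj := φ.injective.comp d.inj
  conj n := by
    change φ d.a * φ (d.ι n) * (φ d.a)⁻¹ = φ (d.ι _)
    rw [← d.conj, map_mul, map_mul, map_inv]
  apow := by
    change φ d.a ^ _ = φ (d.ι _)
    rw [← d.apow, map_pow]
  surj x := by
    obtain ⟨n, t, h⟩ := d.surj (φ.symm x)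
    refine ⟨n, t, ?_⟩
    change x = φ (d.ι n) * φ d.a ^ t
    rw [← map_pow, ← map_mul, ← h, φ.apply_symm_apply]

/-- all normal forms -/
def nfp (ν : ZMod p) : T0 p ⊕ T1 p → Par p
  | .inl t => mk0 (nf0 ν t)
  | .inr t => mk1 (nf1 ν t)

theorem nfp_inj {ν : ZMod p} (hν : ¬ IsSquare ν) {t t' : T0 p ⊕ T1 p} (h : PRel (nfp ν t) (nfp ν t')) : t = t' := by
  rcases t with t | t <;> rcases t' with t' | t'
  · rw [inj0 hν h]
  · exact absurd h not_rel01
  · exact absurd h not_rel10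
  · rw [inj1 hν h]

theorem nfp_surj (hp5 : 5 ≤ p) {ν : ZMod p} (hν : ¬ IsSquare ν) (θ : Par p) : ∃ t, PRel θ (nfp ν t) := by
  obtain ⟨v, h | h⟩ := par_cases θ
  · obtain ⟨t, h'⟩ := surj0 hν v
    exact ⟨.inl t, h.trans hp5 h'⟩
  · obtain ⟨t, h'⟩ := surj1 hν v
    exact ⟨.inr t, h.trans hp5 h'⟩

theorem count_thm (hp5 : 5 ≤ p) {e : ℕ} (he : 4 ≤ e) (X : Type) (hX : Nat.card X = p ^ (e + 3)) :
    Nat.card (Quot fun s t : {s : Group X // (letI := s; IsRegularPGroup p X ∧ HasTypeInvariants p X (e :: [2, 1]))} =>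
      Nonempty (@MulEquiv X X (mulOfGroup _ s.1) (mulOfGroup _ t.1))) = 5 * p + 30 := by
  haveI : Fact (5 ≤ p) := ⟨hp5⟩
  haveI : Fact (4 ≤ e) := ⟨he⟩
  haveI : NeZero p := ⟨hpF.out.ne_zero⟩
  haveI : Finite X := Nat.finite_of_card_ne_zero (by rw [hX]; exact pow_ne_zero _ hpF.out.ne_zero)
  obtain ⟨ν, hν⟩ : ∃ ν : ZMod p, ¬ IsSquare ν := FiniteField.exists_nonsquare (by
    rw [ZMod.ringChar_zmod_n]; omega)
  have hcard : Nat.card (T0 p ⊕ T1 p) = 5 * p + 30 := by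
    haveI : Finite (T0 p) := Nat.finite_of_card_ne_zero (by rw [card_T0]; omega)
    haveI : Finite (T1 p) := Nat.finite_of_card_ne_zero (by rw [card_T1]; omega)
    rw [Nat.card_sum, card_T0, card_T1]; omega
  have hex : ∀ t : T0 p ⊕ T1 p, ∃ s : {s : Group X // (letI := s; IsRegularPGroup p X ∧ HasTypeInvariants p X (e :: [2, 1]))},
      Nonempty (@Data p _ (nfp ν t) e X s.1) := by
    intro t
    have d : Data (nfp ν t) e (QQ (nfp ν t) e) := dataQQ _
    have hc : Nat.card X = Nat.card (QQ (nfp ν t) e) := by rw [hX, d.card (by omega)]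
    haveI := d.finite (by omega)
    obtain ⟨ε⟩ : Nonempty (X ≃ QQ (nfp ν t) e) := Finite.card_eq.1 hc
    letI s : Group X := ε.group
    have d' : Data (nfp ν t) e X := d.map (ε.mulEquiv).symm
    exact ⟨⟨s, d'.regular hp5, d'.type hp5 he⟩, ⟨d'⟩⟩
  choose S hS using hex
  rw [← hcard]
  symm
  apply Nat.card_eq_of_bijective (fun t => Quot.mk _ (S t))
  constructor
  · intro t t' h
    let F : (Quot fun s t : {s : Group X // (letI := s; IsRegularPGroup p X ∧ HasTypeInvariants p X (e :: [2, 1]))} =>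
      Nonempty (@MulEquiv X X (mulOfGroup _ s.1) (mulOfGroup _ t.1))) → Prop :=
      Quot.lift (fun s => Nonempty (@Data p _ (nfp ν t) e X s.1)) (by
        rintro s s' ⟨φ⟩
        apply propext
        exact ⟨fun ⟨d⟩ => ⟨@Data.map p _ _ e X X s.1 s'.1 d φ⟩,
          fun ⟨d⟩ => ⟨@Data.map p _ _ e X X s'.1 s.1 d (@MulEquiv.symm X X (mulOfGroup _ s.1) (mulOfGroup _ s'.1) φ)⟩⟩)
    have h1 : F (Quot.mk _ (S t)) := hS t
    have h2 : F (Quot.mk _ (S t')) := by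
      have h3 : Quot.mk _ (S t) = Quot.mk _ (S t') := h
      rw [← h3]; exact h1
    obtain ⟨d⟩ : Nonempty (@Data p _ (nfp ν t) e X (S t').1) := h2
    obtain ⟨d'⟩ := hS t'
    letI := (S t').1
    exact nfp_inj hν (RelD.of_data hp5 he d d')
  · intro Q
    induction Q using Quot.ind with
    | mk s =>
      letI := s.1
      have hreg : IsRegularPGroup p X := s.2.1
      have hty : HasTypeInvariants p X (e :: [2, 1]) := s.2.2
      have hG : IsPGroup p X := IsPGroup.of_card hX
      obtain ⟨h1, h2, a, ha1, ha2⟩ := cnt_of_type hG hreg e (by omega) hty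
      obtain ⟨θ, ⟨d⟩⟩ := structure_thm hp5 hG hreg he hX h1 h2 a ha1 ha2
      obtain ⟨t, ⟨R⟩⟩ := nfp_surj hp5 hν θ
      obtain ⟨d'⟩ := d.of_rel hp5 he R
      obtain ⟨d''⟩ := hS t
      refine ⟨t, Quot.sound ?_⟩
      exact @iso_of_data p _ _ e X (S t).1 (by omega) X s.1 d'' d'

end

/-- For every prime `p ≥ 5` and every `n ≥ 7`,
`Ψ_{n-3}^p(2,1) = 5p + 30`. -/
theorem psi_type_21 (p : ℕ) (hp : p.Prime) (hp5 : 5 ≤ p) (n : ℕ) (hn : 7 ≤ n) :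
    PsiType p (n - 3) [2, 1] = 5 * p + 30 := by
  haveI : Fact p.Prime := ⟨hp⟩
  exact count_thm hp5 (by omega) (Fin (p ^ (n - 3 + [2, 1].sum))) (by simp)
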